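/- arXiv:2305.13730 — 3 statements merged into one kernel-verified Lean document; each statement's English description precedes it below -/
import Mathlib

section
/- Let r ≥ 4 be an integer. For every ε > 0 there exists a constant c = c(ε) > 0 such that for every odd prime power q and every subset E ⊆ (M_2(𝔽_q))^r with #E > c·q^{3r+3+ε}, one has Δ(E) = M_2(𝔽_q), i.e. every matrix of M_2(𝔽_q) occurs as a distance between two points of E. -/
open scoped BigOperators

set_option linter.unusedSectionVars false

namespace FalconerAux

open Matrix

abbrev M2 (F : Type) := Matrix (Fin 2) (Fin 2) F

section
variable {F : Type} [Field F] [Fintype F]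

/-- A complex additive character nontrivial on `t * a` for `a ≠ 0`. -/
lemma exists_char (F : Type) [Field F] [Fintype F] :
    ∃ ψ : AddChar F ℂ, ∀ a : F, a ≠ 0 → ∃ t : F, ψ (a * t) ≠ 1 := by
  refine ⟨AddChar.FiniteField.primitiveChar_to_Complex F, fun a ha => ?_⟩
  have h := AddChar.FiniteField.primitiveChar_to_Complex_isPrimitive F ha
  rw [AddChar.ne_one_iff] at h
  obtain ⟨t, ht⟩ := h
  exact ⟨t, by simpa [AddChar.mulShift_apply] using ht⟩

lemma sum_char_zero {V : Type} [AddCommGroup V] [Fintype V] (ψ : AddChar F ℂ)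
    (f : V →+ F) (h : ∃ x, ψ (f x) ≠ 1) : ∑ x, ψ (f x) = 0 := by
  have := AddChar.sum_eq_zero_of_ne_one (R := V) (R' := ℂ) (ψ := ψ.compAddMonoidHom f)
    (by rw [AddChar.ne_one_iff]; simpa using h)
  simpa using this

lemma norm_char (ψ : AddChar F ℂ) (x : F) : ‖ψ x‖ = 1 := AddChar.norm_apply ψ x

lemma exists_trace (ψ : AddChar F ℂ) (hψ : ∀ a : F, a ≠ 0 → ∃ t : F, ψ (a * t) ≠ 1)
    (W : M2 F) (hW : W ≠ 0) : ∃ X : M2 F, ψ (trace (W * X)) ≠ 1 := by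
  obtain ⟨i, j, hij⟩ : ∃ i j, W i j ≠ 0 := by
    by_contra! h
    exact hW (by ext i j; simpa using h i j)
  obtain ⟨t, ht⟩ := hψ _ hij
  refine ⟨Matrix.single j i t, ?_⟩
  have : trace (W * Matrix.single j i t) = W i j * t := by
    rw [Matrix.trace_mul_single]; simp
  rwa [this]

lemma kernel_char {r : ℕ} (ψ : AddChar F ℂ) (hψ : ∀ a : F, a ≠ 0 → ∃ t : F, ψ (a * t) ≠ 1)
    (W : Fin r → M2 F) (hW : W ≠ 0) : ∑ X : Fin r → M2 F, ψ (∑ i, trace (W i * X i)) = 0 := by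
  classical
  let f : (Fin r → M2 F) →+ F :=
    { toFun := fun X => ∑ i, trace (W i * X i)
      map_zero' := by simp
      map_add' := by intro X Y; simp [mul_add, Finset.sum_add_distrib] }
  refine sum_char_zero ψ f ?_
  obtain ⟨i, hi⟩ := Function.ne_iff.mp hW
  obtain ⟨X, hX⟩ := exists_trace ψ hψ (W i) hi
  refine ⟨Pi.single i X, ?_⟩
  have : f (Pi.single i X) = trace (W i * X) := by
    change ∑ j, trace (W j * (Pi.single i X : Fin r → M2 F) j) = _
    rw [Finset.sum_eq_single i]
    · simp
    · intro j _ hj; simp [hj]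
    · simp
  rwa [this]

/-- Algebraic identity for differences of the quadratic form. -/
lemma quad_id (A X Y Z : M2 F) :
    trace (A * (X - Y) ^ 2) - trace (A * (X - Z) ^ 2)
      = trace (A * Y ^ 2) - trace (A * Z ^ 2) + trace (-(A * (Y - Z) + (Y - Z) * A) * X) := by
  simp [Matrix.trace, Matrix.mul_apply, Fin.sum_univ_two, pow_two]
  ring

open Classical in
/-- The kernel of `X ↦ AX + XA`. -/
noncomputable def Ker (A : M2 F) : Finset (M2 F) :=
  Finset.univ.filter (fun X => A * X + X * A = 0)

lemma char_conj (ψ : AddChar F ℂ) (x : F) : (starRingEnd ℂ) (ψ x) = ψ (-x) := by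
  rw [AddChar.map_neg_eq_conj]

lemma card_M2 : Fintype.card (M2 F) = Fintype.card F ^ 4 := by
  classical
  simp [Matrix, Fintype.card_pi, ← pow_mul]

open Classical in
lemma inner_sum {r : ℕ} (ψ : AddChar F ℂ) (hψ : ∀ a : F, a ≠ 0 → ∃ t : F, ψ (a * t) ≠ 1)
    (A : M2 F) (Y Z : Fin r → M2 F) :
    ‖∑ X : Fin r → M2 F, ψ (∑ i, trace (A * (X i - Y i) ^ 2))
      * (starRingEnd ℂ) (ψ (∑ i, trace (A * (X i - Z i) ^ 2)))‖
    ≤ if (∀ i, Y i - Z i ∈ Ker A) then (Fintype.card F : ℝ) ^ (4 * r) else 0 := by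
  classical
  have key : ∀ X : Fin r → M2 F, ψ (∑ i, trace (A * (X i - Y i) ^ 2))
      * (starRingEnd ℂ) (ψ (∑ i, trace (A * (X i - Z i) ^ 2)))
      = ψ (∑ i, (trace (A * Y i ^ 2) - trace (A * Z i ^ 2)))
        * ψ (∑ i, trace (-(A * (Y i - Z i) + (Y i - Z i) * A) * X i)) := by
    intro X
    rw [char_conj, ← AddChar.map_add_eq_mul, ← AddChar.map_add_eq_mul, ← sub_eq_add_neg,
      ← Finset.sum_sub_distrib, ← Finset.sum_add_distrib]
    simp_rw [quad_id]
  split_ifs with h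
  · refine (norm_sum_le _ _).trans ?_
    simp [norm_char, Fintype.card_pi, card_M2, ← pow_mul]
  · simp_rw [key]
    rw [← Finset.mul_sum, kernel_char ψ hψ (fun i => -(A * (Y i - Z i) + (Y i - Z i) * A))]
    · simp
    · intro h0
      apply h
      intro i
      have h1 := neg_eq_zero.1 (congrFun h0 i)
      simpa only [Ker, Finset.mem_filter, Finset.mem_univ, true_and] using h1

open Classical in
lemma count_ker {r : ℕ} (A : M2 F) (E : Finset (Fin r → M2 F)) (Y : Fin r → M2 F) :
    (E.filter (fun Z => ∀ i, Y i - Z i ∈ Ker A)).card ≤ (Ker A).card ^ r := by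
  classical
  have : (Fintype.piFinset (fun _ : Fin r => Ker A)).card = (Ker A).card ^ r := by simp
  rw [← this]
  have hf : ∀ Z ∈ E.filter (fun Z => ∀ i, Y i - Z i ∈ Ker A),
      (fun i => Y i - Z i) ∈ Fintype.piFinset (fun _ : Fin r => Ker A) := by
    intro Z hZ
    rw [Fintype.mem_piFinset]
    exact (Finset.mem_filter.1 hZ).2
  have hi : Function.Injective (fun (Z : Fin r → M2 F) (i : Fin r) => Y i - Z i) := by
    intro Z Z' h
    funext i
    simpa using congrFun h i
  exact Finset.card_le_card_of_injOn (fun (Z : Fin r → M2 F) (i : Fin r) => Y i - Z i) hf hi.injOn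

lemma main_bound {r : ℕ} (ψ : AddChar F ℂ) (hψ : ∀ a : F, a ≠ 0 → ∃ t : F, ψ (a * t) ≠ 1)
    (A : M2 F) (E : Finset (Fin r → M2 F)) :
    ‖∑ X ∈ E, ∑ Y ∈ E, ψ (∑ i, trace (A * (X i - Y i) ^ 2))‖ ^ 2
      ≤ (E.card : ℝ) ^ 2 * ((Fintype.card F : ℝ) ^ (4 * r) * ((Ker A).card : ℝ) ^ r) := by
  classical
  set K : (Fin r → M2 F) → (Fin r → M2 F) → ℂ :=
    fun X Y => ψ (∑ i, trace (A * (X i - Y i) ^ 2)) with hK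
  have h1 : ‖∑ X ∈ E, ∑ Y ∈ E, K X Y‖ ^ 2 ≤ (E.card : ℝ) * ∑ X ∈ E, ‖∑ Y ∈ E, K X Y‖ ^ 2 := by
    refine (pow_le_pow_left₀ (norm_nonneg _) (norm_sum_le _ _) 2).trans ?_
    exact sq_sum_le_card_mul_sum_sq
  have h2 : ∑ X ∈ E, ‖∑ Y ∈ E, K X Y‖ ^ 2 ≤ ∑ X, ‖∑ Y ∈ E, K X Y‖ ^ 2 :=
    Finset.sum_le_sum_of_subset_of_nonneg (Finset.subset_univ _) (fun _ _ _ => by positivity)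
  have h3 : ((∑ X, ‖∑ Y ∈ E, K X Y‖ ^ 2 : ℝ) : ℂ)
      = ∑ Y ∈ E, ∑ Z ∈ E, ∑ X, K X Y * (starRingEnd ℂ) (K X Z) := by
    push_cast
    simp_rw [← Complex.mul_conj', map_sum, Finset.sum_mul_sum]
    rw [Finset.sum_comm]
    refine Finset.sum_congr rfl fun Y _ => ?_
    rw [Finset.sum_comm]
  have h4 : ∑ X, ‖∑ Y ∈ E, K X Y‖ ^ 2
      ≤ (E.card : ℝ) * ((Fintype.card F : ℝ) ^ (4 * r) * ((Ker A).card : ℝ) ^ r) := by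
    have h5 : ∑ X, ‖∑ Y ∈ E, K X Y‖ ^ 2 = ‖((∑ X, ‖∑ Y ∈ E, K X Y‖ ^ 2 : ℝ) : ℂ)‖ := by
      rw [Complex.norm_real, Real.norm_of_nonneg]
      exact Finset.sum_nonneg fun _ _ => by positivity
    rw [h5, h3]
    refine (norm_sum_le _ _).trans ?_
    rw [← nsmul_eq_mul]
    refine Finset.sum_le_card_nsmul _ _ _ fun Y _ => ?_
    refine (norm_sum_le _ _).trans ?_
    refine (Finset.sum_le_sum fun Z _ => inner_sum ψ hψ A Y Z).trans ?_
    rw [← Finset.sum_filter, Finset.sum_const, nsmul_eq_mul, mul_comm]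
    have := count_ker A E Y
    have h6 : ((E.filter (fun Z => ∀ i, Y i - Z i ∈ Ker A)).card : ℝ) ≤ ((Ker A).card : ℝ) ^ r := by
      exact_mod_cast this
    gcongr
  calc _ ≤ _ := h1
    _ ≤ (E.card : ℝ) * ((E.card : ℝ) * ((Fintype.card F : ℝ) ^ (4 * r) * ((Ker A).card : ℝ) ^ r)) := by
        gcongr
        exact h2.trans h4
    _ = _ := by ring

lemma le_of_sq_le_sq' {a b : ℝ} (h : a ^ 2 ≤ b ^ 2) (hb : 0 ≤ b) : a ≤ b :=
  (le_abs_self a).trans (abs_le_of_sq_le_sq h hb)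

lemma mem_ker (A X : M2 F) (hX : X ∈ Ker A) :
    2 * A 0 0 * X 0 0 + A 0 1 * X 1 0 + A 1 0 * X 0 1 = 0 ∧
    (A 0 0 + A 1 1) * X 0 1 + A 0 1 * (X 0 0 + X 1 1) = 0 ∧
    (A 0 0 + A 1 1) * X 1 0 + A 1 0 * (X 0 0 + X 1 1) = 0 ∧
    2 * A 1 1 * X 1 1 + A 0 1 * X 1 0 + A 1 0 * X 0 1 = 0 := by
  have h : A * X + X * A = 0 := by simpa [Ker] using hX
  have e := fun i j => congrFun (congrFun h i) j
  simp only [Matrix.add_apply, Matrix.mul_apply, Fin.sum_univ_two, Matrix.zero_apply] at e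
  refine ⟨?_, ?_, ?_, ?_⟩
  · linear_combination e 0 0
  · linear_combination e 0 1
  · linear_combination e 1 0
  · linear_combination e 1 1

lemma ker_sub (A X Y : M2 F) (hX : X ∈ Ker A) (hY : Y ∈ Ker A) : X - Y ∈ Ker A := by
  simp only [Ker, Finset.mem_filter, Finset.mem_univ, true_and] at *
  rw [mul_sub, sub_mul]
  rw [show A * X - A * Y + (X * A - Y * A) = (A * X + X * A) - (A * Y + Y * A) by abel, hX, hY,
    sub_zero]

/-- If the kernel elements are determined by `f` then its cardinality is bounded. -/
lemma ker_card_le {V : Type} [AddCommGroup V] [Fintype V] (A : M2 F) (f : M2 F →+ V)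
    (h : ∀ X ∈ Ker A, f X = 0 → X 0 0 = 0 ∧ X 0 1 = 0 ∧ X 1 0 = 0 ∧ X 1 1 = 0) :
    (Ker A).card ≤ Fintype.card V := by
  classical
  refine Finset.card_le_card_of_injOn f (fun _ _ => Finset.mem_coe.2 (Finset.mem_univ _)) ?_
  intro X hX Y hY hXY
  have := h (X - Y) (ker_sub A X Y hX hY) (by rw [map_sub, hXY, sub_self])
  obtain ⟨h1, h2, h3, h4⟩ := this
  rw [← sub_eq_zero]
  ext i j
  fin_cases i <;> fin_cases j <;> assumption

/-- Entry as an additive homomorphism. -/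
def entry (i j : Fin 2) : M2 F →+ F :=
  { toFun := fun X => X i j, map_zero' := rfl, map_add' := fun _ _ => rfl }

lemma ker_card_trace (h2 : (2 : F) ≠ 0) (A : M2 F) (hA : A 0 0 + A 1 1 ≠ 0) :
    (Ker A).card ≤ Fintype.card F := by
  by_cases ha : A 0 0 = 0
  · have hd : A 1 1 ≠ 0 := by intro h; exact hA (by rw [ha, h, add_zero])
    refine ker_card_le A (entry 0 0) fun X hX hf => ?_
    have hf : X 0 0 = 0 := hf
    obtain ⟨e1, e2, e3, e4⟩ := mem_ker A X hX
    have h11 : X 1 1 = 0 := by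
      have : 2 * A 1 1 * X 1 1 = 0 := by linear_combination e4 - e1 + 2 * A 0 0 * hf
      simpa [h2, hd] using this
    simp only [hf, h11, add_zero, mul_zero, mul_eq_zero, hA, false_or] at e2 e3
    exact ⟨hf, e2, e3, h11⟩
  · refine ker_card_le A (entry 1 1) fun X hX hf => ?_
    have hf : X 1 1 = 0 := hf
    obtain ⟨e1, e2, e3, e4⟩ := mem_ker A X hX
    have h00 : X 0 0 = 0 := by
      have : 2 * A 0 0 * X 0 0 = 0 := by linear_combination e1 - e4 + 2 * A 1 1 * hf
      simpa [h2, ha] using this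
    simp only [hf, h00, add_zero, mul_zero, mul_eq_zero, hA, false_or] at e2 e3
    exact ⟨h00, e2, e3, hf⟩

lemma ker_card_zero (h2 : (2 : F) ≠ 0) (A : M2 F) (hA : A 0 0 + A 1 1 = 0) (h0 : A ≠ 0) :
    (Ker A).card ≤ Fintype.card F ^ 2 := by
  have hc : Fintype.card (F × F) = Fintype.card F ^ 2 := by rw [Fintype.card_prod, pow_two]
  rw [← hc]
  by_cases hb : A 0 1 = 0
  · by_cases hcc : A 1 0 = 0
    · have ha : A 0 0 ≠ 0 := by
        intro ha
        apply h0
        have hd : A 1 1 = 0 := by linear_combination hA - ha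
        ext i j
        fin_cases i <;> fin_cases j <;> assumption
      have hd : A 1 1 ≠ 0 := by
        intro hd; exact ha (by linear_combination hA - hd)
      refine ker_card_le A ((entry 0 1).prod (entry 1 0)) fun X hX hf => ?_
      have f1 : X 0 1 = 0 := congrArg Prod.fst hf
      have f2 : X 1 0 = 0 := congrArg Prod.snd hf
      obtain ⟨e1, e2, e3, e4⟩ := mem_ker A X hX
      simp [f1, f2, h2, ha, hd] at e1 e4
      exact ⟨e1, f1, f2, e4⟩
    · refine ker_card_le A ((entry 0 0).prod (entry 1 0)) fun X hX hf => ?_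
      have f1 : X 0 0 = 0 := congrArg Prod.fst hf
      have f2 : X 1 0 = 0 := congrArg Prod.snd hf
      obtain ⟨e1, e2, e3, e4⟩ := mem_ker A X hX
      simp [f1, f2, hcc] at e1 e3
      exact ⟨f1, e1, f2, e3⟩
  · refine ker_card_le A ((entry 0 0).prod (entry 0 1)) fun X hX hf => ?_
    have f1 : X 0 0 = 0 := congrArg Prod.fst hf
    have f2 : X 0 1 = 0 := congrArg Prod.snd hf
    obtain ⟨e1, e2, e3, e4⟩ := mem_ker A X hX
    simp [f1, f2, hb] at e1 e2
    exact ⟨f1, f2, e1, e2⟩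

lemma card_traceless [DecidablePred fun A : M2 F => A 0 0 + A 1 1 = 0] :
    (Finset.univ.filter (fun A : M2 F => A 0 0 + A 1 1 = 0)).card ≤ Fintype.card F ^ 3 := by
  classical
  have hc : Fintype.card (F × F × F) = Fintype.card F ^ 3 := by
    rw [Fintype.card_prod, Fintype.card_prod]; ring
  rw [← hc]
  refine Finset.card_le_card_of_injOn (fun A => (A 0 0, A 0 1, A 1 0))
    (fun _ _ => Finset.mem_coe.2 (Finset.mem_univ _)) ?_
  intro A hA B hB h
  simp only [Finset.coe_filter, Finset.mem_univ, true_and, Set.mem_ofPred_eq] at hA hB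
  simp only [Prod.mk.injEq] at h
  obtain ⟨h1, h2, h3⟩ := h
  have h4 : A 1 1 = B 1 1 := by linear_combination hA - hB - h1
  ext i j
  fin_cases i <;> fin_cases j <;> assumption

lemma bound_zero {r : ℕ} (h2 : (2 : F) ≠ 0) (ψ : AddChar F ℂ)
    (hψ : ∀ a : F, a ≠ 0 → ∃ t : F, ψ (a * t) ≠ 1)
    (A : M2 F) (hA : A 0 0 + A 1 1 = 0) (h0 : A ≠ 0) (E : Finset (Fin r → M2 F)) :
    ‖∑ X ∈ E, ∑ Y ∈ E, ψ (∑ i, trace (A * (X i - Y i) ^ 2))‖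
      ≤ (E.card : ℝ) * (Fintype.card F : ℝ) ^ (3 * r) := by
  refine le_of_sq_le_sq' ((main_bound ψ hψ A E).trans ?_) (by positivity)
  have : ((Ker A).card : ℝ) ≤ (Fintype.card F : ℝ) ^ 2 := by
    exact_mod_cast ker_card_zero h2 A hA h0
  calc _ ≤ (E.card : ℝ) ^ 2 * ((Fintype.card F : ℝ) ^ (4 * r) * ((Fintype.card F : ℝ) ^ 2) ^ r) := by
        gcongr
    _ = _ := by ring

lemma bound_trace {r : ℕ} (hr : 4 ≤ r) (h2 : (2 : F) ≠ 0) (ψ : AddChar F ℂ)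
    (hψ : ∀ a : F, a ≠ 0 → ∃ t : F, ψ (a * t) ≠ 1)
    (A : M2 F) (hA : A 0 0 + A 1 1 ≠ 0) (E : Finset (Fin r → M2 F)) :
    ‖∑ X ∈ E, ∑ Y ∈ E, ψ (∑ i, trace (A * (X i - Y i) ^ 2))‖
      ≤ (E.card : ℝ) * (Fintype.card F : ℝ) ^ (3 * r - 1) := by
  refine le_of_sq_le_sq' ((main_bound ψ hψ A E).trans ?_) (by positivity)
  have : ((Ker A).card : ℝ) ≤ (Fintype.card F : ℝ) := by
    exact_mod_cast ker_card_trace h2 A hA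
  have hq : (1 : ℝ) ≤ Fintype.card F := by exact_mod_cast Fintype.card_pos
  calc _ ≤ (E.card : ℝ) ^ 2 * ((Fintype.card F : ℝ) ^ (4 * r) * (Fintype.card F : ℝ) ^ r) := by
        gcongr
    _ = (E.card : ℝ) ^ 2 * (Fintype.card F : ℝ) ^ (5 * r) := by ring
    _ ≤ (E.card : ℝ) ^ 2 * (Fintype.card F : ℝ) ^ ((3 * r - 1) * 2) := by
        exact mul_le_mul_of_nonneg_left (pow_le_pow_right₀ hq (by omega)) (by positivity)
    _ = _ := by rw [pow_mul]; ring

lemma final {r : ℕ} (hr : 4 ≤ r) (h2 : (2 : F) ≠ 0) (E : Finset (Fin r → M2 F)) (T : M2 F)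
    (hT : ∀ X ∈ E, ∀ Y ∈ E, ∑ i, (X i - Y i) ^ 2 ≠ T) :
    (E.card : ℝ) ^ 2 ≤ (E.card : ℝ) * (2 * (Fintype.card F : ℝ) ^ (3 * r + 3)) := by
  classical
  obtain ⟨ψ, hψ⟩ := exists_char F
  set S : M2 F → ℂ := fun A => ∑ X ∈ E, ∑ Y ∈ E, ψ (∑ i, trace (A * (X i - Y i) ^ 2)) with hS
  have h1 : ∑ A : M2 F, ψ (-trace (A * T)) * S A = 0 := by
    simp_rw [hS, Finset.mul_sum]
    rw [Finset.sum_comm]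
    refine Finset.sum_eq_zero fun X hX => ?_
    rw [Finset.sum_comm]
    refine Finset.sum_eq_zero fun Y hY => ?_
    have hne : ∑ i, (X i - Y i) ^ 2 - T ≠ 0 := sub_ne_zero.2 (hT X hX Y hY)
    let f : M2 F →+ F :=
      { toFun := fun A => trace ((∑ i, (X i - Y i) ^ 2 - T) * A)
        map_zero' := by simp
        map_add' := by intro A B; simp [mul_add] }
    have := sum_char_zero ψ f (exists_trace ψ hψ _ hne)
    rw [← this]
    refine Finset.sum_congr rfl fun A _ => ?_
    rw [← AddChar.map_add_eq_mul]
    congr 1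
    change _ = trace ((∑ i, (X i - Y i) ^ 2 - T) * A)
    rw [Matrix.trace_mul_comm _ A, mul_sub, Matrix.trace_sub, Finset.mul_sum, Matrix.trace_sum]
    ring
  have hS0 : S 0 = (E.card : ℂ) ^ 2 := by
    simp [hS]; ring
  rw [← Finset.add_sum_erase _ _ (Finset.mem_univ (0 : M2 F)), hS0] at h1
  simp only [zero_mul, Matrix.trace_zero, neg_zero, AddChar.map_zero_eq_one, one_mul] at h1
  have h3 : (E.card : ℝ) ^ 2 = ‖∑ A ∈ Finset.univ.erase (0 : M2 F), ψ (-trace (A * T)) * S A‖ := by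
    have : ∑ A ∈ Finset.univ.erase (0 : M2 F), ψ (-trace (A * T)) * S A = -(E.card : ℂ) ^ 2 := by
      linear_combination h1
    rw [this]; simp
  set q : ℝ := (Fintype.card F : ℝ) with hq
  have h4 : ∀ A ∈ Finset.univ.erase (0 : M2 F), ‖ψ (-trace (A * T)) * S A‖ ≤
      (if A 0 0 + A 1 1 = 0 then (E.card : ℝ) * q ^ (3 * r) else 0)
        + (E.card : ℝ) * q ^ (3 * r - 1) := by
    intro A hA
    rw [norm_mul, norm_char, one_mul]
    split_ifs with h
    · have := bound_zero h2 ψ hψ A h (Finset.ne_of_mem_erase hA) E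
      have h' : 0 ≤ (E.card : ℝ) * q ^ (3 * r - 1) := by positivity
      linarith
    · rw [zero_add]
      exact bound_trace hr h2 ψ hψ A h E
  have hcard : ((Finset.univ.filter (fun A : M2 F => A 0 0 + A 1 1 = 0)).card : ℝ) ≤ q ^ 3 := by
    rw [hq]; exact_mod_cast card_traceless (F := F)
  calc (E.card : ℝ) ^ 2 ≤ ∑ A ∈ Finset.univ.erase (0 : M2 F), ‖ψ (-trace (A * T)) * S A‖ := by
        rw [h3]; exact norm_sum_le _ _
    _ ≤ ∑ A ∈ Finset.univ.erase (0 : M2 F),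
        ((if A 0 0 + A 1 1 = 0 then (E.card : ℝ) * q ^ (3 * r) else 0)
        + (E.card : ℝ) * q ^ (3 * r - 1)) := Finset.sum_le_sum h4
    _ ≤ ∑ A : M2 F,
        ((if A 0 0 + A 1 1 = 0 then (E.card : ℝ) * q ^ (3 * r) else 0)
        + (E.card : ℝ) * q ^ (3 * r - 1)) := by
        refine Finset.sum_le_sum_of_subset_of_nonneg (Finset.subset_univ _) fun _ _ _ => ?_
        split_ifs <;> positivity
    _ = ((Finset.univ.filter (fun A : M2 F => A 0 0 + A 1 1 = 0)).card : ℝ)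
          * ((E.card : ℝ) * q ^ (3 * r)) + q ^ 4 * ((E.card : ℝ) * q ^ (3 * r - 1)) := by
        rw [Finset.sum_add_distrib, ← Finset.sum_filter, Finset.sum_const, Finset.sum_const,
          nsmul_eq_mul, nsmul_eq_mul, Finset.card_univ, card_M2]
        push_cast
        rfl
    _ ≤ q ^ 3 * ((E.card : ℝ) * q ^ (3 * r)) + q ^ 4 * ((E.card : ℝ) * q ^ (3 * r - 1)) := by
        gcongr
    _ = _ := by
        obtain ⟨m, hm⟩ : ∃ m, 3 * r = m + 1 := ⟨3 * r - 1, by omega⟩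
        rw [hm, Nat.add_sub_cancel]
        ring

end

end FalconerAux

/-- Theorem 1.4 (rank 2 Falconer): if `E ⊆ M_2(F_q)^r`, `r ≥ 4`, and
`#E > c q^{3r+3+ε}`, then every matrix arises as a distance of `E`. -/
theorem falconer_rank_two (r : ℕ) (hr : 4 ≤ r) (ε : ℝ) (hε : 0 < ε) :
    ∃ c : ℝ, 0 < c ∧
      ∀ (F : Type) [Field F] [Fintype F],
        Odd (Fintype.card F) →
        ∀ E : Finset (Fin r → Matrix (Fin 2) (Fin 2) F),
          c * (Fintype.card F : ℝ) ^ ((3 * (r : ℝ) + 3) + ε) < (E.card : ℝ) →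
          {T : Matrix (Fin 2) (Fin 2) F |
              ∃ X ∈ E, ∃ Y ∈ E, ∑ i, (X i - Y i) ^ 2 = T} = Set.univ := by
  refine ⟨2, two_pos, ?_⟩
  intro F _ _ hodd E hE
  have h2 : (2 : F) ≠ 0 := by
    apply Ring.two_ne_zero
    intro h
    have := FiniteField.even_card_iff_char_two.1 h
    rw [Nat.odd_iff] at hodd
    omega
  have hq : (1 : ℝ) ≤ Fintype.card F := by exact_mod_cast Fintype.card_pos
  have hE' : 2 * (Fintype.card F : ℝ) ^ (3 * r + 3) < (E.card : ℝ) := by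
    refine lt_of_le_of_lt ?_ hE
    rw [← Real.rpow_natCast]
    gcongr
    push_cast; linarith
  rw [Set.eq_univ_iff_forall]
  intro T
  by_contra hT
  have hT' : ∀ X ∈ E, ∀ Y ∈ E, ∑ i, (X i - Y i) ^ 2 ≠ T := by
    intro X hX Y hY h
    exact hT ⟨X, hX, Y, hY, h⟩
  have := FalconerAux.final hr h2 E T hT'
  have hpos : (0 : ℝ) < E.card := lt_of_le_of_lt (by positivity) hE'
  nlinarith
end

section
/- Let n ≥ 3 and r ≥ 3 be integers. For every ε > 0 there exists a constant c = c(ε) > 0 such that for every odd prime power q and every subset E ⊆ (M_n(𝔽_q))^r with #E > c·q^{rn² − (r−2)(n−1) + ε}, one has Δ(E) = M_n(𝔽_q). -/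
open scoped BigOperators

namespace Falc

/-- The twisted commutator `X ↦ A X + s X A`. -/
noncomputable def twMap {F : Type} [Field F] {n : ℕ} (s : F) (A : Matrix (Fin n) (Fin n) F) :
    Matrix (Fin n) (Fin n) F →ₗ[F] Matrix (Fin n) (Fin n) F :=
  LinearMap.mulLeft F A + s • LinearMap.mulRight F A

/-- Kernel of the twisted commutator. -/
noncomputable def tw {F : Type} [Field F] {n : ℕ} (s : F) (A : Matrix (Fin n) (Fin n) F) :
    Submodule F (Matrix (Fin n) (Fin n) F) := LinearMap.ker (twMap s A)

/-- Dimension of the kernel of the twisted commutator. -/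
noncomputable def td {F : Type} [Field F] {n : ℕ} (s : F) (A : Matrix (Fin n) (Fin n) F) : ℕ :=
  Module.finrank F (tw s A)

theorem twMap_apply {F : Type} [Field F] {n : ℕ} (s : F) (A X : Matrix (Fin n) (Fin n) F) :
    twMap s A X = A * X + s • (X * A) := by
  simp [twMap]

theorem mem_tw {F : Type} [Field F] {n : ℕ} {s : F} {A X : Matrix (Fin n) (Fin n) F} :
    X ∈ tw s A ↔ A * X + s • (X * A) = 0 := by
  rw [tw, LinearMap.mem_ker, twMap_apply]

theorem mem_anti {F : Type} [Field F] {n : ℕ} {A X : Matrix (Fin n) (Fin n) F} :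
    X ∈ tw 1 A ↔ A * X + X * A = 0 := by
  rw [mem_tw, one_smul]

theorem mem_comm {F : Type} [Field F] {n : ℕ} {A X : Matrix (Fin n) (Fin n) F} :
    X ∈ tw (-1) A ↔ A * X = X * A := by
  rw [mem_tw, neg_smul, one_smul, ← sub_eq_add_neg, sub_eq_zero]

theorem card_tw {F : Type} [Field F] [Fintype F] {n : ℕ} (s : F) (A : Matrix (Fin n) (Fin n) F) :
    Nat.card (tw s A) = Fintype.card F ^ td s A := by
  rw [td, ← Nat.card_eq_fintype_card]
  exact Module.natCard_eq_pow_finrank (K := F)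

theorem card_mat {F : Type} [Field F] [Fintype F] (m n : ℕ) [Fintype (Matrix (Fin m) (Fin n) F)] :
    Fintype.card (Matrix (Fin m) (Fin n) F) = Fintype.card F ^ (m * n) := by
  rw [Module.card_eq_pow_finrank (K := F)]
  simp [Module.finrank_matrix]

/-- character orthogonality for the trace pairing -/
theorem orth {F : Type} [Field F] [Fintype F] (ψ : AddChar F ℂ) (hψ : ∃ a, ψ a ≠ 1) {n : ℕ}
    (M : Matrix (Fin n) (Fin n) F) [Decidable (M = 0)] :
    ∑ A : Matrix (Fin n) (Fin n) F, ψ (Matrix.trace (A * M)) =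
      if M = 0 then (Fintype.card F : ℂ) ^ (n ^ 2) else 0 := by
  classical
  split_ifs with h
  · subst h
    simp [card_mat, pow_two]
  · let χ : AddChar (Matrix (Fin n) (Fin n) F) ℂ :=
      { toFun := fun A => ψ (Matrix.trace (A * M))
        map_zero_eq_one' := by simp
        map_add_eq_mul' := by
          intro a b
          rw [add_mul, Matrix.trace_add, AddChar.map_add_eq_mul] }
    have : ∑ A, χ A = 0 := by
      apply AddChar.sum_eq_zero_iff_ne_zero.2
      intro h0
      apply h
      obtain ⟨a, ha⟩ := hψ
      by_contra hM
      obtain ⟨i, j, hij⟩ : ∃ i j, M i j ≠ 0 := by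
        by_contra hh
        push Not at hh
        exact hM (by ext i j; simpa using hh i j)
      apply ha
      have h1 : χ (Matrix.single j i (a / M i j)) = 1 := by rw [h0]; rfl
      have h2 : χ (Matrix.single j i (a / M i j)) = ψ a := by
        change ψ _ = _
        congr 1
        rw [Matrix.trace_single_mul]
        simp [hij]
      rw [← h2, h1]
    exact this

theorem orth_pi {F : Type} [Field F] [Fintype F] (ψ : AddChar F ℂ) (hψ : ∃ a, ψ a ≠ 1) {n r : ℕ}
    (M : Fin r → Matrix (Fin n) (Fin n) F) [Decidable (∀ i, M i = 0)] :
    ∑ X : Fin r → Matrix (Fin n) (Fin n) F, ∏ i, ψ (Matrix.trace (X i * M i)) =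
      if ∀ i, M i = 0 then (Fintype.card F : ℂ) ^ (r * n ^ 2) else 0 := by
  classical
  rw [← Fintype.prod_sum (fun i A => ψ (Matrix.trace (A * M i)))]
  simp_rw [orth ψ hψ]
  split_ifs with h
  · simp [h, ← pow_mul, mul_comm]
  · push Not at h
    obtain ⟨i, hi⟩ := h
    exact Finset.prod_eq_zero (Finset.mem_univ i) (by simp [hi])

end Falc

namespace Falc

theorem key_identity {F : Type} [Field F] {n r : ℕ} (A : Matrix (Fin n) (Fin n) F)
    (X Y Z : Fin r → Matrix (Fin n) (Fin n) F) :
    Matrix.trace (A * ∑ i, (X i - Y i) ^ 2) - Matrix.trace (A * ∑ i, (X i - Z i) ^ 2) =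
      Matrix.trace (A * ∑ i, (Y i ^ 2 - Z i ^ 2)) +
        ∑ i, Matrix.trace (X i * (A * (Z i - Y i) + (Z i - Y i) * A)) := by
  rw [← Matrix.trace_sub, ← mul_sub, ← Finset.sum_sub_distrib, Finset.mul_sum, Finset.mul_sum,
    Matrix.trace_sum, Matrix.trace_sum, ← Finset.sum_add_distrib]
  refine Finset.sum_congr rfl fun i _ => ?_
  have h1 : (X i - Y i) ^ 2 - (X i - Z i) ^ 2 =
      (Y i ^ 2 - Z i ^ 2) + (X i * (Z i - Y i) + (Z i - Y i) * X i) := by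
    noncomm_ring
  rw [h1, mul_add, Matrix.trace_add]
  congr 1
  rw [mul_add, mul_add, Matrix.trace_add, Matrix.trace_add, add_comm, ← mul_assoc, ← mul_assoc,
    Matrix.trace_mul_comm (A * (Z i - Y i)) (X i), ← mul_assoc]
  congr 1
  rw [Matrix.trace_mul_comm, ← mul_assoc, ← mul_assoc, Matrix.trace_mul_comm,
    ← mul_assoc]

theorem addChar_sum {F : Type} [Field F] (ψ : AddChar F ℂ) {r : ℕ} (f : Fin r → F) :
    ψ (∑ i, f i) = ∏ i, ψ (f i) := by
  have := map_prod ψ.toMonoidHom (fun i => Multiplicative.ofAdd (f i)) Finset.univ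
  rw [← ofAdd_sum] at this
  exact this

theorem bound_S {F : Type} [Field F] [Fintype F] (ψ : AddChar F ℂ) (hψ : ∃ a, ψ a ≠ 1) {n r : ℕ}
    (A : Matrix (Fin n) (Fin n) F) (E : Finset (Fin r → Matrix (Fin n) (Fin n) F)) :
    ‖∑ X ∈ E, ∑ Y ∈ E, ψ (Matrix.trace (A * ∑ i, (X i - Y i) ^ 2))‖ ≤
      (E.card : ℝ) * √(Fintype.card F : ℝ) ^ (r * (n ^ 2 + td 1 A)) := by
  classical
  set q : ℝ := (Fintype.card F : ℝ) with hq
  set K : (Fin r → Matrix (Fin n) (Fin n) F) → (Fin r → Matrix (Fin n) (Fin n) F) → ℂ :=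
    fun X Y => ψ (Matrix.trace (A * ∑ i, (X i - Y i) ^ 2)) with hK
  have hKK : ∀ X Y Z, K X Y * (starRingEnd ℂ) (K X Z) =
      ψ (Matrix.trace (A * ∑ i, (Y i ^ 2 - Z i ^ 2))) *
        ∏ i, ψ (Matrix.trace (X i * (A * (Z i - Y i) + (Z i - Y i) * A))) := by
    intro X Y Z
    simp only [hK]
    rw [← AddChar.map_neg_eq_conj, ← AddChar.map_add_eq_mul, ← sub_eq_add_neg, key_identity,
      AddChar.map_add_eq_mul, addChar_sum]
  have hsum : ((∑ X, ‖∑ Y ∈ E, K X Y‖ ^ 2 : ℝ) : ℂ) =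
      ∑ Y ∈ E, ∑ Z ∈ E, ψ (Matrix.trace (A * ∑ i, (Y i ^ 2 - Z i ^ 2))) *
        (if ∀ i, A * (Z i - Y i) + (Z i - Y i) * A = 0 then
          (Fintype.card F : ℂ) ^ (r * n ^ 2) else 0) := by
    push_cast
    have : ∀ X, ((‖∑ Y ∈ E, K X Y‖ : ℂ)) ^ 2 =
        ∑ Y ∈ E, ∑ Z ∈ E, K X Y * (starRingEnd ℂ) (K X Z) := by
      intro X
      rw [← Complex.mul_conj', map_sum, Finset.sum_mul_sum]
    simp_rw [this, hKK]
    rw [Finset.sum_comm]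
    refine Finset.sum_congr rfl fun Y _ => ?_
    rw [Finset.sum_comm]
    refine Finset.sum_congr rfl fun Z _ => ?_
    rw [← Finset.mul_sum, orth_pi ψ hψ]
  have hcount : ∀ Y : Fin r → Matrix (Fin n) (Fin n) F, ((E.filter fun Z => ∀ i, A * (Z i - Y i) + (Z i - Y i) * A = 0).card : ℝ) ≤
      q ^ (r * td 1 A) := by
    intro Y
    have h1 : (E.filter fun Z => ∀ i, A * (Z i - Y i) + (Z i - Y i) * A = 0).card ≤
        Fintype.card (Fin r → tw 1 A) := by
      rw [← Finset.card_univ]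
      refine Finset.card_le_card_of_injOn
        (fun Z => if h : ∀ i, A * (Z i - Y i) + (Z i - Y i) * A = 0 then
          fun i => ⟨Z i - Y i, mem_anti.2 (h i)⟩ else 0) (by simp) ?_
      intro Z hZ Z' hZ' h
      simp only [Finset.coe_filter, Set.mem_ofPred_eq] at hZ hZ'
      simp only [hZ.2, hZ'.2, implies_true, dite_true] at h
      funext i
      have := congrArg Subtype.val (congrFun h i)
      simpa using this
    have h2 : Fintype.card (Fin r → tw 1 A) = Fintype.card F ^ (r * td 1 A) := by
      rw [← Nat.card_eq_fintype_card, Nat.card_pi]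
      simp_rw [card_tw]
      rw [Finset.prod_const, Finset.card_univ, Fintype.card_fin, ← pow_mul, mul_comm]
    rw [h2] at h1
    rw [hq]
    exact_mod_cast h1
  have hnorm : (∑ X, ‖∑ Y ∈ E, K X Y‖ ^ 2 : ℝ) ≤ E.card * (q ^ (r * td 1 A) * q ^ (r * n ^ 2)) := by
    have h0 : (0 : ℝ) ≤ ∑ X, ‖∑ Y ∈ E, K X Y‖ ^ 2 := by positivity
    have h1 : (∑ X, ‖∑ Y ∈ E, K X Y‖ ^ 2 : ℝ) = ‖((∑ X, ‖∑ Y ∈ E, K X Y‖ ^ 2 : ℝ) : ℂ)‖ := by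
      rw [Complex.norm_real, Real.norm_of_nonneg h0]
    rw [h1, hsum, ← nsmul_eq_mul]
    refine (norm_sum_le _ _).trans (Finset.sum_le_card_nsmul _ _ _ fun Y _ => ?_)
    refine (norm_sum_le _ _).trans ?_
    have h2 : ∀ Z ∈ E, ‖ψ (Matrix.trace (A * ∑ i, (Y i ^ 2 - Z i ^ 2))) *
        (if ∀ i, A * (Z i - Y i) + (Z i - Y i) * A = 0 then
          (Fintype.card F : ℂ) ^ (r * n ^ 2) else 0)‖ ≤
        if ∀ i, A * (Z i - Y i) + (Z i - Y i) * A = 0 then q ^ (r * n ^ 2) else 0 := by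
      intro Z _
      rw [norm_mul, AddChar.norm_apply, one_mul]
      split_ifs
      · simp [hq]
      · simp
    refine (Finset.sum_le_sum h2).trans ?_
    rw [← Finset.sum_filter, Finset.sum_const, nsmul_eq_mul]
    exact mul_le_mul_of_nonneg_right (hcount Y) (by positivity)
  have hcs : ‖∑ X ∈ E, ∑ Y ∈ E, K X Y‖ ^ 2 ≤
      E.card * (E.card * (q ^ (r * td 1 A) * q ^ (r * n ^ 2))) := by
    have h1 : ‖∑ X ∈ E, ∑ Y ∈ E, K X Y‖ ^ 2 ≤ (∑ X ∈ E, ‖∑ Y ∈ E, K X Y‖) ^ 2 := by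
      gcongr
      exact norm_sum_le _ _
    have h2 : (∑ X ∈ E, ‖∑ Y ∈ E, K X Y‖) ^ 2 ≤ E.card * ∑ X ∈ E, ‖∑ Y ∈ E, K X Y‖ ^ 2 :=
      sq_sum_le_card_mul_sum_sq
    have h3 : ∑ X ∈ E, ‖∑ Y ∈ E, K X Y‖ ^ 2 ≤ ∑ X, ‖∑ Y ∈ E, K X Y‖ ^ 2 :=
      Finset.sum_le_sum_of_subset_of_nonneg (Finset.subset_univ _) (fun _ _ _ => by positivity)
    refine h1.trans (h2.trans ?_)
    gcongr
    exact h3.trans hnorm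
  refine le_of_sq_le_sq (hcs.trans (le_of_eq ?_)) (by positivity)
  have hs : √q ^ 2 = q := Real.sq_sqrt (by positivity)
  rw [mul_pow, ← pow_mul, mul_comm (r * (n ^ 2 + td 1 A)) 2, pow_mul (√q), hs]
  ring

theorem analytic {F : Type} [Field F] [Fintype F] {n r : ℕ}
    (E : Finset (Fin r → Matrix (Fin n) (Fin n) F)) (T : Matrix (Fin n) (Fin n) F)
    (hno : ∀ X ∈ E, ∀ Y ∈ E, ∑ i, (X i - Y i) ^ 2 ≠ T)
    [DecidablePred fun A : Matrix (Fin n) (Fin n) F => A ≠ 0] [Fintype (Matrix (Fin n) (Fin n) F)] :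
    (E.card : ℝ) ≤ ∑ A : Matrix (Fin n) (Fin n) F with A ≠ 0,
      √(Fintype.card F : ℝ) ^ (r * (n ^ 2 + td 1 A)) := by
  classical
  obtain ⟨ψ, hψ1⟩ := (AddChar.exists_apply_ne_zero (a := (1 : F))).2 one_ne_zero
  have hψ : ∃ a, ψ a ≠ 1 := ⟨1, hψ1⟩
  have h0 : ∑ A : Matrix (Fin n) (Fin n) F, ψ (-Matrix.trace (A * T)) *
      ∑ X ∈ E, ∑ Y ∈ E, ψ (Matrix.trace (A * ∑ i, (X i - Y i) ^ 2)) = 0 := by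
    simp_rw [Finset.mul_sum]
    rw [Finset.sum_comm]
    refine Finset.sum_eq_zero fun X hX => ?_
    rw [Finset.sum_comm]
    refine Finset.sum_eq_zero fun Y hY => ?_
    have := orth ψ hψ (∑ i, (X i - Y i) ^ 2 - T)
    rw [if_neg (sub_ne_zero.2 (hno X hX Y hY))] at this
    rw [← this]
    refine Finset.sum_congr (by ext; simp) fun A _ => ?_
    rw [← AddChar.map_add_eq_mul, mul_sub, Matrix.trace_sub, Finset.mul_sum]
    congr 1
    ring
  rw [← Finset.add_sum_erase _ _ (Finset.mem_univ (0 : Matrix (Fin n) (Fin n) F))] at h0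
  simp only [zero_mul, Matrix.trace_zero, neg_zero, AddChar.map_zero_eq_one, Finset.sum_const,
    nsmul_eq_mul, mul_one, one_mul] at h0
  have h1 : (E.card : ℂ) * E.card = - ∑ A ∈ Finset.univ.erase (0 : Matrix (Fin n) (Fin n) F),
      ψ (-Matrix.trace (A * T)) *
      ∑ X ∈ E, ∑ Y ∈ E, ψ (Matrix.trace (A * ∑ i, (X i - Y i) ^ 2)) :=
    eq_neg_of_add_eq_zero_left h0
  have h2 := congrArg norm h1
  rw [norm_neg, norm_mul, Complex.norm_natCast] at h2
  have h3 : (E.card : ℝ) * E.card ≤ E.card * ∑ A : Matrix (Fin n) (Fin n) F with A ≠ 0,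
      √(Fintype.card F : ℝ) ^ (r * (n ^ 2 + td 1 A)) := by
    rw [h2, Finset.mul_sum]
    refine (norm_sum_le _ _).trans ?_
    rw [show Finset.univ.erase (0 : Matrix (Fin n) (Fin n) F) =
      Finset.univ.filter (fun A => A ≠ 0) by ext; simp]
    refine Finset.sum_le_sum fun A _ => ?_
    rw [norm_mul, AddChar.norm_apply, one_mul]
    exact bound_S ψ hψ A E
  rcases Nat.eq_zero_or_pos E.card with h | h
  · rw [h]
    simp only [Nat.cast_zero]
    positivity
  · exact le_of_mul_le_mul_left h3 (by exact_mod_cast h)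

end Falc

namespace Falc

theorem exists_vec {F : Type} [Field F] {n : ℕ} (A : Matrix (Fin n) (Fin n) F)
    (hA : ¬ ∃ a : F, A = a • (1 : Matrix (Fin n) (Fin n) F)) :
    ∃ v φ : Fin n → F, φ ⬝ᵥ v = 0 ∧ φ ⬝ᵥ (A.mulVec v) = 1 := by
  classical
  by_cases h : ∃ i j, i ≠ j ∧ A i j ≠ 0
  · obtain ⟨i, j, hij, h⟩ := h
    refine ⟨Pi.single j 1, Pi.single i (A i j)⁻¹, ?_, ?_⟩
    · simp [hij.symm]
    · simp [h]
  · push Not at h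
    have h2 : ∃ i j, A i i ≠ A j j := by
      by_contra hh
      push Not at hh
      apply hA
      rcases isEmpty_or_nonempty (Fin n) with he | ⟨⟨i0⟩⟩
      · exact ⟨0, by ext i; exact he.elim i⟩
      · refine ⟨A i0 i0, ?_⟩
        ext i j
        by_cases hij : i = j
        · subst hij; simp [hh i i0]
        · simp [h i j hij, hij]
    obtain ⟨i, j, hij⟩ := h2
    have hne : i ≠ j := fun e => hij (by rw [e])
    have h3 : A i i - A j j ≠ 0 := sub_ne_zero.2 hij
    refine ⟨Pi.single i 1 + Pi.single j 1,
      (A i i - A j j)⁻¹ • (Pi.single i 1 - Pi.single j 1), ?_, ?_⟩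
    · simp [hne, hne.symm]
    · rw [smul_dotProduct, sub_dotProduct]
      simp [Matrix.mulVec_add, h i j hne, h j i hne.symm]
      field_simp

theorem td_le {F : Type} [Field F] {n : ℕ} (s : F) (hs : s ≠ 0) (A : Matrix (Fin n) (Fin n) F)
    (hA : ¬ ∃ a : F, A = a • (1 : Matrix (Fin n) (Fin n) F)) :
    td s A + 2 * n ≤ n ^ 2 + 2 := by
  obtain ⟨v, φ, h1, h2⟩ := exists_vec A hA
  let g : (Fin n → F) →ₗ[F] F × F :=
    { toFun := fun ψ => (ψ ⬝ᵥ v, ψ ⬝ᵥ A.mulVec v)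
      map_add' := by intro a b; simp [add_dotProduct]
      map_smul' := by intro a b; simp [smul_dotProduct] }
  let P := LinearMap.ker g
  have hP : n ≤ Module.finrank F P + 2 := by
    have e1 := LinearMap.finrank_range_add_finrank_ker g
    have e2 := Submodule.finrank_le (LinearMap.range g)
    simp at e1 e2
    change n ≤ Module.finrank F (LinearMap.ker g) + 2
    omega
  let L : ((Fin n → F) × P) →ₗ[F] Matrix (Fin n) (Fin n) F :=
    { toFun := fun z => Matrix.vecMulVec z.1 φ + Matrix.vecMulVec v z.2.1
      map_add' := by
        intro a b
        simp [Matrix.add_vecMulVec, Matrix.vecMulVec_add]; abel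
      map_smul' := by
        intro a b
        simp [Matrix.smul_vecMulVec, Matrix.vecMulVec_smul] }
  have hL : ∀ z, L z = Matrix.vecMulVec z.1 φ + Matrix.vecMulVec v z.2.1 := fun _ => rfl
  have hinj : Function.Injective ((twMap s A).comp L) := by
    rw [← LinearMap.ker_eq_bot, LinearMap.ker_eq_bot']
    rintro ⟨y, ⟨ψ, hψ⟩⟩ hz
    have hψ' : ψ ⬝ᵥ v = 0 ∧ ψ ⬝ᵥ A.mulVec v = 0 := by
      have : g ψ = 0 := hψ
      simpa [g] using this
    rw [LinearMap.comp_apply, twMap_apply, hL] at hz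
    simp only at hz
    have e1 := congrArg (fun M => Matrix.mulVec M v) hz
    have hy : y = 0 := by
      simp only [Matrix.add_mulVec, Matrix.smul_mulVec, ← Matrix.mulVec_mulVec,
        Matrix.vecMulVec_mulVec, h1, h2, hψ'.1, hψ'.2, Matrix.zero_mulVec] at e1
      simpa [hs] using e1
    subst hy
    have e2 := congrArg (fun M => Matrix.vecMul φ M) hz
    have hψ0 : ψ = 0 := by
      simp only [Matrix.zero_vecMulVec, zero_add, Matrix.vecMul_add, Matrix.vecMul_smul,
        Matrix.mul_vecMulVec, Matrix.vecMulVec_mul, Matrix.vecMul_vecMulVec, h1, h2,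
        Matrix.vecMul_zero] at e2
      simpa using e2
    subst hψ0
    rfl
  have e1 := LinearMap.finrank_range_add_finrank_ker (twMap s A)
  have e2 : Module.finrank F ((Fin n → F) × P) ≤ Module.finrank F (LinearMap.range (twMap s A)) := by
    refine le_trans (le_of_eq (LinearMap.finrank_range_of_inj hinj).symm) ?_
    exact Submodule.finrank_mono (LinearMap.range_comp_le_range _ _)
  rw [Module.finrank_prod] at e2
  simp [Module.finrank_matrix] at e1 e2
  change Module.finrank F (LinearMap.ker (twMap s A)) + 2 * n ≤ n ^ 2 + 2
  nlinarith

theorem two_ne_zero_of_odd {F : Type} [Field F] [Fintype F] (h : Odd (Fintype.card F)) :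
    (2 : F) ≠ 0 := by
  intro h2
  have : ringChar F = 2 := by
    have := CharP.ringChar_of_prime_eq_zero Nat.prime_two (R := F) (by exact_mod_cast h2)
    exact this
  rw [FiniteField.even_card_iff_char_two] at this
  rw [Nat.odd_iff] at h
  omega

/-- For invertible `A`, commutant plus anticommutant embed in the commutant of `A ^ 2`. -/
theorem td_add_le {F : Type} [Field F] (h2 : (2 : F) ≠ 0) {n : ℕ} (A : Matrix (Fin n) (Fin n) F)
    (hA : IsUnit A) : td 1 A + td (-1) A ≤ td (-1) (A * A) := by
  have hdis : tw 1 A ⊓ tw (-1) A = ⊥ := by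
    rw [eq_bot_iff]
    rintro X ⟨h, h'⟩
    have h := mem_anti.1 h
    have h' := mem_comm.1 h'
    rw [← h', ← two_smul F] at h
    have h3 : A * X = 0 := by simpa [h2] using h
    exact (hA.mul_right_eq_zero).1 h3
  have hle : tw 1 A ⊔ tw (-1) A ≤ tw (-1) (A * A) := by
    refine sup_le ?_ ?_
    · intro X hX
      have h := eq_neg_of_add_eq_zero_left (mem_anti.1 hX)
      rw [mem_comm, mul_assoc, h, mul_neg, ← mul_assoc, h, neg_mul, neg_neg, mul_assoc]
    · intro X hX
      have h := mem_comm.1 hX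
      rw [mem_comm, mul_assoc, h, ← mul_assoc, h, mul_assoc]
  have := Submodule.finrank_sup_add_finrank_inf_eq (tw 1 A) (tw (-1) A)
  rw [hdis, finrank_bot, add_zero] at this
  have h4 := Submodule.finrank_mono hle
  simp only [td]
  omega

/-- If `A ^ 2` is a nonzero scalar, commutant and anticommutant span everything. -/
theorem td_add_eq {F : Type} [Field F] (h2 : (2 : F) ≠ 0) {n : ℕ} (A : Matrix (Fin n) (Fin n) F)
    (σ : F) (hσ : σ ≠ 0) (hA : A * A = σ • 1) : td 1 A + td (-1) A = n ^ 2 := by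
  have hdis : tw 1 A ⊓ tw (-1) A = ⊥ := by
    rw [eq_bot_iff]
    rintro X ⟨h, h'⟩
    have h := mem_anti.1 h
    have h' := mem_comm.1 h'
    rw [← h', ← two_smul F] at h
    have h3 : A * X = 0 := by simpa [h2] using h
    have h4 : A * (A * X) = 0 := by rw [h3, mul_zero]
    rw [← mul_assoc, hA] at h4
    simpa [hσ] using h4
  have hle : tw 1 A ⊔ tw (-1) A = ⊤ := by
    rw [eq_top_iff]
    intro X _
    rw [Submodule.mem_sup]
    refine ⟨(2⁻¹ : F) • (X - σ⁻¹ • (A * X * A)), ?_, (2⁻¹ : F) • (X + σ⁻¹ • (A * X * A)), ?_, ?_⟩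
    · refine Submodule.smul_mem _ _ (mem_anti.2 ?_)
      have e1 : A * (A * X * A) = σ • (X * A) := by
        rw [← mul_assoc, ← mul_assoc, hA]; simp
      have e2 : (A * X * A) * A = σ • (A * X) := by
        rw [mul_assoc, hA]; simp
      rw [mul_sub, sub_mul, Matrix.mul_smul, Matrix.smul_mul, e1, e2, smul_smul, smul_smul,
        inv_mul_cancel₀ hσ]
      simp
    · refine Submodule.smul_mem _ _ (mem_comm.2 ?_)
      have e1 : A * (A * X * A) = σ • (X * A) := by
        rw [← mul_assoc, ← mul_assoc, hA]; simp
      have e2 : (A * X * A) * A = σ • (A * X) := by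
        rw [mul_assoc, hA]; simp
      rw [mul_add, add_mul, Matrix.mul_smul, Matrix.smul_mul, e1, e2, smul_smul, smul_smul,
        inv_mul_cancel₀ hσ]
      simp [add_comm]
    · rw [← smul_add, sub_add_add_cancel, ← two_smul F, smul_smul, inv_mul_cancel₀ h2, one_smul]
  have := Submodule.finrank_sup_add_finrank_inf_eq (tw 1 A) (tw (-1) A)
  rw [hdis, hle, finrank_bot, add_zero, finrank_top] at this
  simp only [td]
  rw [← this]
  simp [Module.finrank_matrix, pow_two]

end Falc

namespace Falc

theorem td_square {F : Type} [Field F] (h2 : (2 : F) ≠ 0) {n : ℕ} (A : Matrix (Fin n) (Fin n) F)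
    (s : F) (hs : s ≠ 0) (hA : A * A = (s * s) • 1) : 2 * td 1 A ≤ n ^ 2 := by
  let Vp : Submodule F (Fin n → F) := LinearMap.ker (Matrix.toLin' A - s • LinearMap.id)
  let Vm : Submodule F (Fin n → F) := LinearMap.ker (Matrix.toLin' A + s • LinearMap.id)
  have hp : ∀ v, v ∈ Vp ↔ A.mulVec v = s • v := by
    intro v
    simp only [Vp, LinearMap.mem_ker, LinearMap.sub_apply, Matrix.toLin'_apply,
      LinearMap.smul_apply, LinearMap.id_apply, sub_eq_zero]
  have hm : ∀ v, v ∈ Vm ↔ A.mulVec v = - (s • v) := by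
    intro v
    simp only [Vm, LinearMap.mem_ker, LinearMap.add_apply, Matrix.toLin'_apply,
      LinearMap.smul_apply, LinearMap.id_apply]
    exact add_eq_zero_iff_eq_neg
  have hXA : ∀ X ∈ tw 1 A, ∀ v, A.mulVec (X.mulVec v) = - X.mulVec (A.mulVec v) := by
    intro X hX v
    have h := eq_neg_of_add_eq_zero_left (mem_anti.1 hX)
    rw [Matrix.mulVec_mulVec, h, Matrix.neg_mulVec, Matrix.mulVec_mulVec]
  have hpm : ∀ X ∈ tw 1 A, ∀ v ∈ Vp, Matrix.toLin' X v ∈ Vm := by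
    intro X hX v hv
    rw [hm, Matrix.toLin'_apply, hXA X hX, (hp v).1 hv, Matrix.mulVec_smul]
  have hmp : ∀ X ∈ tw 1 A, ∀ v ∈ Vm, Matrix.toLin' X v ∈ Vp := by
    intro X hX v hv
    rw [hp, Matrix.toLin'_apply, hXA X hX, (hm v).1 hv, Matrix.mulVec_neg, Matrix.mulVec_smul,
      neg_neg]
  let Φ : tw 1 A →ₗ[F] (Vp →ₗ[F] Vm) × (Vm →ₗ[F] Vp) :=
    { toFun := fun X => ((Matrix.toLin' X.1).restrict (hpm X.1 X.2),
        (Matrix.toLin' X.1).restrict (hmp X.1 X.2))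
      map_add' := by
        intro X Y
        ext <;> simp [Matrix.add_mulVec]
      map_smul' := by
        intro X Y
        ext <;> simp [Matrix.smul_mulVec] }
  have hinj : Function.Injective Φ := by
    refine (injective_iff_map_eq_zero Φ).2 ?_
    rintro ⟨X, hX⟩ h
    have e1 : ∀ v ∈ Vp, X.mulVec v = 0 := by
      intro v hv
      have := congrArg (fun f => (f.1 ⟨v, hv⟩ : (Fin n → F))) h
      simpa [Φ] using this
    have e2 : ∀ v ∈ Vm, X.mulVec v = 0 := by
      intro v hv
      have := congrArg (fun f => (f.2 ⟨v, hv⟩ : (Fin n → F))) h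
      simpa [Φ] using this
    have e3 : X = 0 := by
      apply Matrix.toLin'.injective
      rw [map_zero]
      apply LinearMap.ext
      intro v
      have hAA : A.mulVec (A.mulVec v) = (s * s) • v := by
        rw [Matrix.mulVec_mulVec, hA]; simp [Matrix.smul_mulVec]
      have f1 : A.mulVec v + s • v ∈ Vp := by
        rw [hp, Matrix.mulVec_add, hAA, Matrix.mulVec_smul, smul_add, smul_smul, add_comm]
      have f2 : A.mulVec v - s • v ∈ Vm := by
        rw [hm, Matrix.mulVec_sub, hAA, Matrix.mulVec_smul, smul_sub, smul_smul, neg_sub]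
      have g1 := e1 _ f1
      have g2 := e2 _ f2
      rw [Matrix.mulVec_add, Matrix.mulVec_smul] at g1
      rw [Matrix.mulVec_sub, Matrix.mulVec_smul] at g2
      have g3 : (2 * s) • X.mulVec v = 0 := by
        rw [mul_smul, two_smul]
        have := congrArg₂ (· - ·) g1 g2
        simpa using this
      simpa [h2, hs] using g3
    exact Subtype.ext e3
  have hdis : Vp ⊓ Vm = ⊥ := by
    rw [eq_bot_iff]
    rintro v ⟨h, h'⟩
    have h := (hp v).1 h
    have h' := (hm v).1 h'
    rw [h] at h'
    have : (2 * s) • v = 0 := by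
      rw [mul_smul, two_smul]; nth_rewrite 1 [h']; simp
    simpa [h2, hs] using this
  have d1 := Submodule.finrank_sup_add_finrank_inf_eq Vp Vm
  rw [hdis, finrank_bot, add_zero] at d1
  have d2 := Submodule.finrank_le (Vp ⊔ Vm)
  have d3 := LinearMap.finrank_le_finrank_of_injective hinj
  rw [Module.finrank_prod, Module.finrank_linearMap, Module.finrank_linearMap] at d3
  have d4 : Module.finrank F (Fin n → F) = n := by simp
  rw [d1, d4] at d2
  change 2 * Module.finrank F (tw 1 A) ≤ n ^ 2
  set a := Module.finrank F Vp
  set b := Module.finrank F Vm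
  have : (a + b) ^ 2 ≤ n ^ 2 := Nat.pow_le_pow_left d2 2
  have h5 : 4 * (a * b) ≤ (a + b) ^ 2 := by
    zify; nlinarith [sq_nonneg ((a : ℤ) - b)]
  nlinarith

open Polynomial in
theorem td_nonsquare {F : Type} [Field F] {n : ℕ} (A : Matrix (Fin n) (Fin n) F)
    (σ : F) (hσ : ¬ ∃ s, σ = s * s) (hA : A * A = σ • 1) : 2 * td 1 A ≤ n ^ 2 := by
  let p : F[X] := X ^ 2 - C σ
  have hdeg : p.natDegree = 2 := natDegree_X_pow_sub_C
  have hp : Irreducible p := by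
    refine (Polynomial.irreducible_iff_roots_eq_zero_of_degree_le_three (by omega) (by omega)).2 ?_
    rw [Multiset.eq_zero_iff_forall_notMem]
    intro s hs
    apply hσ
    have := (mem_roots'.1 hs).2
    refine ⟨s, ?_⟩
    simp [p, IsRoot, sub_eq_zero] at this
    rw [← this, pow_two]
  haveI : Fact (Irreducible p) := ⟨hp⟩
  let T : Module.End F (Fin n → F) := Matrix.toLin' A
  have hT : aeval T p = 0 := by
    have : T * T = σ • 1 := by
      change (Matrix.toLin' A).comp (Matrix.toLin' A) = _
      rw [← Matrix.toLin'_mul, hA, map_smul, Matrix.toLin'_one]; rfl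
    simp only [p, map_sub, map_pow, aeval_X, aeval_C]
    rw [pow_two, this, Algebra.algebraMap_eq_smul_one, sub_self]
  let φ : AdjoinRoot p →ₐ[F] Module.End F (Fin n → F) := Ideal.Quotient.liftₐ (Ideal.span {p}) (aeval T) (by
    intro a ha
    obtain ⟨b, rfl⟩ := Ideal.mem_span_singleton.1 ha
    rw [map_mul, hT, zero_mul])
  letI : Module (AdjoinRoot p) (Fin n → F) := Module.compHom (Fin n → F) φ.toRingHom
  have hsmul : ∀ (l : AdjoinRoot p) (v : (Fin n → F)), l • v = φ l v := fun _ _ => rfl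
  haveI : IsScalarTower F (AdjoinRoot p) (Fin n → F) := by
    refine IsScalarTower.of_algebraMap_smul ?_
    intro r v
    rw [hsmul, AlgHom.commutes]; rfl
  haveI : Module.Finite F (AdjoinRoot p) := (AdjoinRoot.powerBasis hp.ne_zero).finite
  haveI : Module.Finite (AdjoinRoot p) (Fin n → F) := Module.Finite.of_restrictScalars_finite F _ _
  have hL : Module.finrank F (AdjoinRoot p) = 2 := by
    rw [(AdjoinRoot.powerBasis hp.ne_zero).finrank, AdjoinRoot.powerBasis_dim, hdeg]
  have hn : 2 * Module.finrank (AdjoinRoot p) (Fin n → F) = n := by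
    rw [← hL, Module.finrank_mul_finrank]; simp
  let b := Module.finBasis (AdjoinRoot p) (Fin n → F)
  let Φ : tw 1 A →ₗ[F] (Fin (Module.finrank (AdjoinRoot p) (Fin n → F)) → (Fin n → F)) :=
    { toFun := fun X i => X.1.mulVec (b i)
      map_add' := by intro X Y; ext; simp [Matrix.add_mulVec]
      map_smul' := by intro X Y; ext; simp [Matrix.smul_mulVec] }
  have hinj : Function.Injective Φ := by
    rw [← LinearMap.ker_eq_bot, LinearMap.ker_eq_bot']
    rintro ⟨X, hX⟩ h
    have hX' := eq_neg_of_add_eq_zero_left (mem_anti.1 hX)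
    let W : Submodule (AdjoinRoot p) (Fin n → F) :=
      { carrier := {v | X.mulVec v = 0}
        add_mem' := by
          intro a c ha hc
          change X.mulVec (a + c) = 0
          rw [Matrix.mulVec_add, show X.mulVec a = 0 from ha, show X.mulVec c = 0 from hc, add_zero]
        zero_mem' := by simp
        smul_mem' := by
          intro l v hv
          change X.mulVec v = 0 at hv
          change X.mulVec (φ l v) = 0
          induction l using AdjoinRoot.induction_on with
          | ih f =>
          rw [show φ (AdjoinRoot.mk p f) = aeval T f from rfl]
          induction f using Polynomial.induction_on' with
          | add f g hf hg =>
            rw [map_add, LinearMap.add_apply, Matrix.mulVec_add, hf, hg, add_zero]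
          | monomial k a =>
            rw [aeval_monomial, ← Algebra.smul_def, LinearMap.smul_apply, Matrix.mulVec_smul]
            have : X.mulVec ((T ^ k) v) = 0 := by
              induction k with
              | zero => simpa using hv
              | succ k ih =>
                rw [pow_succ', Module.End.mul_apply]
                change X.mulVec (A.mulVec _) = 0
                have h3 : X * A = - (A * X) := by rw [hX', neg_neg]
                rw [Matrix.mulVec_mulVec, h3, Matrix.neg_mulVec, ← Matrix.mulVec_mulVec, ih]
                simp
            rw [this, smul_zero] }
    have hW : W = ⊤ := by
      rw [eq_top_iff, ← b.span_eq, Submodule.span_le]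
      rintro _ ⟨i, rfl⟩
      exact congrFun h i
    have : X = 0 := by
      apply Matrix.toLin'.injective
      rw [map_zero]
      apply LinearMap.ext
      intro v
      have : v ∈ W := hW ▸ Submodule.mem_top
      exact this
    exact Subtype.ext this
  have d3 := LinearMap.finrank_le_finrank_of_injective hinj
  rw [Module.finrank_pi_fintype] at d3
  simp only [Module.finrank_fin_fun, Finset.sum_const, Finset.card_univ, Fintype.card_fin,
    smul_eq_mul] at d3
  change 2 * Module.finrank F (tw 1 A) ≤ n ^ 2
  rw [pow_two]
  have d4 := Nat.mul_le_mul_left 2 d3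
  rw [← mul_assoc, hn] at d4
  exact d4

theorem td_scalar {F : Type} [Field F] (h2 : (2 : F) ≠ 0) {n : ℕ} (A : Matrix (Fin n) (Fin n) F)
    (σ : F) (hσ : σ ≠ 0) (hA : A * A = σ • 1) : 2 * td 1 A ≤ n ^ 2 := by
  by_cases h : ∃ s, σ = s * s
  · obtain ⟨s, rfl⟩ := h
    exact td_square h2 A s (by rintro rfl; simp at hσ) hA
  · exact td_nonsquare A σ h hA

end Falc

namespace Falc

theorem card_GL_ge {F : Type} [Field F] [Fintype F] (s : ℕ) :
    Fintype.card F ^ (s * s) ≤ 2 ^ s * Nat.card (GL (Fin s) F) := by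
  rw [Matrix.card_GL_field, pow_mul]
  have h : ∀ i : Fin s, Fintype.card F ^ s ≤
      2 * (Fintype.card F ^ s - Fintype.card F ^ (i : ℕ)) := by
    intro i
    have hq : 2 ≤ Fintype.card F := Fintype.one_lt_card
    have h1 : Fintype.card F ^ ((i : ℕ) + 1) ≤ Fintype.card F ^ s :=
      Nat.pow_le_pow_right (by omega) i.2
    rw [pow_succ] at h1
    have h2 : Fintype.card F ^ (i : ℕ) * 2 ≤ Fintype.card F ^ (i : ℕ) * Fintype.card F :=
      Nat.mul_le_mul_left _ hq
    omega
  calc (Fintype.card F ^ s) ^ s = ∏ i : Fin s, Fintype.card F ^ s := by simp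
    _ ≤ ∏ i : Fin s, 2 * (Fintype.card F ^ s - Fintype.card F ^ (i : ℕ)) :=
        Finset.prod_le_prod' fun i _ => h i
    _ = _ := by rw [Finset.prod_mul_distrib]; simp

theorem rank_fact {F : Type} [Field F] {n : ℕ} (A : Matrix (Fin n) (Fin n) F) (s : ℕ)
    (hA : A.rank = s) : ∃ (P : Matrix (Fin n) (Fin s) F) (Q : Matrix (Fin s) (Fin n) F)
      (P' : Matrix (Fin s) (Fin n) F) (Q' : Matrix (Fin n) (Fin s) F),
      P * Q = A ∧ P' * P = 1 ∧ Q * Q' = 1 := by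
  let f := Matrix.toLin' A
  have hf : Module.finrank F (LinearMap.range f) = s := hA
  let e : LinearMap.range f ≃ₗ[F] (Fin s → F) := LinearEquiv.ofFinrankEq _ _ (by simp [hf])
  let p : (Fin s → F) →ₗ[F] (Fin n → F) := (LinearMap.range f).subtype ∘ₗ e.symm.toLinearMap
  let q : (Fin n → F) →ₗ[F] (Fin s → F) := e.toLinearMap ∘ₗ f.rangeRestrict
  have hpq : p ∘ₗ q = f := by
    ext v
    simp [p, q]
  obtain ⟨p', hp'⟩ := p.exists_leftInverse_of_injective (by
    apply LinearMap.ker_eq_bot.2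
    exact (Submodule.subtype_injective _).comp e.symm.injective)
  obtain ⟨q', hq'⟩ := q.exists_rightInverse_of_surjective (by
    apply LinearMap.range_eq_top.2
    exact e.surjective.comp f.surjective_rangeRestrict)
  refine ⟨LinearMap.toMatrix' p, LinearMap.toMatrix' q, LinearMap.toMatrix' p',
    LinearMap.toMatrix' q', ?_, ?_, ?_⟩
  · rw [← LinearMap.toMatrix'_comp, hpq]; simp [f]
  · rw [← LinearMap.toMatrix'_comp, hp', LinearMap.toMatrix'_id]
  · rw [← LinearMap.toMatrix'_comp, hq', LinearMap.toMatrix'_id]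

theorem td_rank {F : Type} [Field F] {n s : ℕ}
    (P : Matrix (Fin n) (Fin s) F) (Q : Matrix (Fin s) (Fin n) F)
      (P' : Matrix (Fin s) (Fin n) F) (Q' : Matrix (Fin n) (Fin s) F)
      (hP : P' * P = 1) (hQ : Q * Q' = 1) :
    td 1 (P * Q) ≤ (n - s) ^ 2 + td 1 (Q * P) := by
  have key : ∀ X ∈ tw 1 (P * Q), P * (P' * X * P) = X * P := by
    intro X hX
    have h := eq_neg_of_add_eq_zero_right (mem_anti.1 hX)
    have h1 : X * P = P * (-(Q * X * Q')) := by
      calc X * P = X * (P * Q) * Q' := by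
            rw [Matrix.mul_assoc, Matrix.mul_assoc, hQ, Matrix.mul_one]
        _ = _ := by rw [h]; simp [Matrix.mul_assoc]
    rw [Matrix.mul_assoc, h1, ← Matrix.mul_assoc P', hP, Matrix.one_mul]
  have key2 : ∀ X ∈ tw 1 (P * Q), Q * X = - (P' * X * P * Q) := by
    intro X hX
    have h := eq_neg_of_add_eq_zero_left (mem_anti.1 hX)
    calc Q * X = P' * (P * Q * X) := by
          rw [Matrix.mul_assoc P, ← Matrix.mul_assoc P', hP, Matrix.one_mul]
      _ = _ := by rw [h]; simp [Matrix.mul_assoc]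
  let f : tw 1 (P * Q) →ₗ[F] tw 1 (Q * P) :=
    { toFun := fun X => ⟨P' * X.1 * P, by
        rw [mem_anti, Matrix.mul_assoc Q, key _ X.2, ← Matrix.mul_assoc, key2 _ X.2]
        simp [Matrix.mul_assoc]⟩
      map_add' := by
        intro X Y; apply Subtype.ext; simp [Matrix.mul_add, Matrix.add_mul]
      map_smul' := by
        intro a Y; apply Subtype.ext; simp }
  have hk : ∀ X : LinearMap.ker f, X.1.1 * P = 0 ∧ Q * X.1.1 = 0 := by
    intro X
    have h0 : P' * X.1.1 * P = 0 := congrArg Subtype.val (LinearMap.mem_ker.1 X.2)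
    refine ⟨?_, ?_⟩
    · rw [← key _ X.1.2, h0, Matrix.mul_zero]
    · rw [key2 _ X.1.2, h0, Matrix.zero_mul, neg_zero]
  let R := LinearMap.range (Matrix.toLin' P)
  let K := LinearMap.ker (Matrix.toLin' Q)
  let Φ : LinearMap.ker f →ₗ[F] (((Fin n → F) ⧸ R) →ₗ[F] K) :=
    { toFun := fun X => R.liftQ ((Matrix.toLin' X.1.1).codRestrict K (by
          intro v
          rw [LinearMap.mem_ker, Matrix.toLin'_apply, Matrix.toLin'_apply, Matrix.mulVec_mulVec,
            (hk X).2, Matrix.zero_mulVec])) (by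
          rintro _ ⟨v, rfl⟩
          rw [LinearMap.mem_ker]
          apply Subtype.ext
          simp [(hk X).1])
      map_add' := by
        intro X Y
        ext
        simp
      map_smul' := by
        intro a Y
        ext
        simp }
  have hinj : Function.Injective Φ := by
    intro X Y h
    apply Subtype.ext
    apply Subtype.ext
    apply Matrix.toLin'.injective
    apply LinearMap.ext
    intro v
    have := congrArg (fun g => (g (R.mkQ v) : Fin n → F)) h
    simpa [Φ] using this
  have d1 := LinearMap.finrank_le_finrank_of_injective hinj
  rw [Module.finrank_linearMap] at d1
  have d2 := LinearMap.finrank_range_add_finrank_ker f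
  have d3 := Submodule.finrank_le (LinearMap.range f)
  have e1 := Submodule.finrank_quotient_add_finrank R
  have hPinj : Function.Injective (Matrix.toLin' P) := by
    apply Function.LeftInverse.injective (g := Matrix.toLin' P')
    intro v
    simp [hP]
  have hQs : Function.Surjective (Matrix.toLin' Q) := by
    apply Function.RightInverse.surjective (g := Matrix.toLin' Q')
    intro v
    simp [hQ]
  have e2 : Module.finrank F R = s := by
    rw [LinearMap.finrank_range_of_inj hPinj]; simp
  have e3 := LinearMap.finrank_range_add_finrank_ker (Matrix.toLin' Q)
  rw [LinearMap.range_eq_top.2 hQs, finrank_top] at e3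
  change _ + Module.finrank F K = _ at e3
  simp only [Module.finrank_fin_fun] at e1 e3
  have e4 : Module.finrank F K = n - s := by omega
  have e5 : Module.finrank F ((Fin n → F) ⧸ R) = n - s := by omega
  rw [e4, e5] at d1
  change Module.finrank F (tw 1 (P * Q)) ≤ _ + Module.finrank F (tw 1 (Q * P))
  rw [pow_two]
  omega

/-- The moment sum. -/
noncomputable def W (F : Type) [Field F] [Fintype F] [DecidableEq F] (n : ℕ) : ℝ :=
  ∑ B : Matrix (Fin n) (Fin n) F, √(Fintype.card F : ℝ) ^ (3 * td 1 B)

theorem fiber_sum {F : Type} [Field F] [Fintype F] [DecidableEq F] {n s : ℕ}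
    (P : Matrix (Fin n) (Fin s) F) (P' : Matrix (Fin s) (Fin n) F) (hP : P' * P = 1)
    (h : Matrix (Fin s) (Fin s) F → ℝ) :
    (Fintype.card F : ℝ) ^ (s * s) * ∑ Q : Matrix (Fin s) (Fin n) F, h (Q * P) =
      (Fintype.card F : ℝ) ^ (s * n) * ∑ B, h B := by
  have c1 : ((Fintype.card F : ℝ) ^ (s * s)) = (Fintype.card (Matrix (Fin s) (Fin s) F) : ℝ) := by
    rw [card_mat]; push_cast; rfl
  have c2 : ((Fintype.card F : ℝ) ^ (s * n)) = (Fintype.card (Matrix (Fin s) (Fin n) F) : ℝ) := by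
    rw [card_mat]; push_cast; rfl
  rw [c1, c2]
  calc _ = ∑ B : Matrix (Fin s) (Fin s) F, ∑ Q : Matrix (Fin s) (Fin n) F, h (Q * P) := by
        simp
    _ = ∑ B : Matrix (Fin s) (Fin s) F, ∑ Q : Matrix (Fin s) (Fin n) F, h (Q * P + B) := by
        apply Finset.sum_congr rfl
        intro B _
        rw [← Equiv.sum_comp (Equiv.addRight (B * P'))]
        apply Finset.sum_congr rfl
        intro Q _
        rw [Equiv.coe_addRight, Matrix.add_mul, Matrix.mul_assoc, hP, Matrix.mul_one]
    _ = ∑ Q : Matrix (Fin s) (Fin n) F, ∑ B : Matrix (Fin s) (Fin s) F, h (Q * P + B) :=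
        Finset.sum_comm
    _ = ∑ Q : Matrix (Fin s) (Fin n) F, ∑ B : Matrix (Fin s) (Fin s) F, h B := by
        apply Finset.sum_congr rfl
        intro Q _
        exact Equiv.sum_comp (Equiv.addLeft (Q * P)) h
    _ = _ := by simp

theorem rank_step {F : Type} [Field F] [Fintype F] [DecidableEq F] (n s : ℕ) :
    (Fintype.card F : ℝ) ^ (s * s) * ((Nat.card (GL (Fin s) F) : ℝ) *
      ∑ A : Matrix (Fin n) (Fin n) F with A.rank = s, √(Fintype.card F : ℝ) ^ (3 * td 1 A)) ≤
    (Fintype.card F : ℝ) ^ (n * s) * (√(Fintype.card F : ℝ) ^ (3 * (n - s) ^ 2) *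
      ((Fintype.card F : ℝ) ^ (s * n) * W F s)) := by
  classical
  set t := √(Fintype.card F : ℝ) with ht
  have ht1 : 1 ≤ t := by
    rw [ht, Real.one_le_sqrt]
    exact_mod_cast Fintype.card_pos
  choose! P Q P' Q' hA hP hQ using fun A : Matrix (Fin n) (Fin n) F => rank_fact A s
  let G : Finset (Matrix (Fin n) (Fin s) F) := Finset.univ.filter fun P =>
    ∃ P' : Matrix (Fin s) (Fin n) F, P' * P = 1
  let G2 : Finset (Matrix (Fin s) (Fin n) F) := Finset.univ.filter fun Q =>
    ∃ Q' : Matrix (Fin n) (Fin s) F, Q * Q' = 1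
  have step1 : (Nat.card (GL (Fin s) F) : ℝ) *
      ∑ A : Matrix (Fin n) (Fin n) F with A.rank = s, t ^ (3 * td 1 A) ≤
      ∑ x ∈ G ×ˢ G2, t ^ (3 * td 1 (x.1 * x.2)) := by
    have h1 : (Nat.card (GL (Fin s) F) : ℝ) *
      ∑ A : Matrix (Fin n) (Fin n) F with A.rank = s, t ^ (3 * td 1 A) =
      ∑ y ∈ (Finset.univ.filter fun A : Matrix (Fin n) (Fin n) F => A.rank = s) ×ˢ
        (Finset.univ : Finset (GL (Fin s) F)), t ^ (3 * td 1 y.1) := by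
      rw [Finset.sum_product, Finset.mul_sum]
      simp
    rw [h1]
    let ι : Matrix (Fin n) (Fin n) F × GL (Fin s) F →
        Matrix (Fin n) (Fin s) F × Matrix (Fin s) (Fin n) F :=
      fun y => (P y.1 * y.2.1, y.2⁻¹.1 * Q y.1)
    have hι : ∀ y : Matrix (Fin n) (Fin n) F × GL (Fin s) F, y.1.rank = s →
        (ι y).1 * (ι y).2 = y.1 := by
      intro y hy
      change P y.1 * y.2.1 * (y.2⁻¹.1 * Q y.1) = y.1
      rw [Matrix.mul_assoc, ← Matrix.mul_assoc y.2.1, ← Units.val_mul, mul_inv_cancel,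
        Units.val_one, Matrix.one_mul, hA _ hy]
    have hinj : Set.InjOn ι ((Finset.univ.filter fun A : Matrix (Fin n) (Fin n) F => A.rank = s) ×ˢ
        (Finset.univ : Finset (GL (Fin s) F)) : Finset _) := by
      rintro ⟨A, g⟩ hx ⟨B, h⟩ hy hxy
      simp at hx hy
      have e1 := hι ⟨A, g⟩ hx
      have e2 := hι ⟨B, h⟩ hy
      rw [hxy, e2] at e1
      simp only at e1
      subst e1
      have e3 : P B * g.1 = P B * h.1 := congrArg Prod.fst hxy
      have e4 := congrArg (fun M => P' B * M) e3
      simp only [← Matrix.mul_assoc, hP _ hy, Matrix.one_mul] at e4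
      rw [Units.ext e4]
    calc _ = ∑ y ∈ (Finset.univ.filter fun A : Matrix (Fin n) (Fin n) F => A.rank = s) ×ˢ
        (Finset.univ : Finset (GL (Fin s) F)), t ^ (3 * td 1 ((ι y).1 * (ι y).2)) := by
          apply Finset.sum_congr rfl
          intro y hy
          simp at hy
          rw [hι y hy]
      _ = ∑ x ∈ ((Finset.univ.filter fun A : Matrix (Fin n) (Fin n) F => A.rank = s) ×ˢ
        (Finset.univ : Finset (GL (Fin s) F))).image ι, t ^ (3 * td 1 (x.1 * x.2)) := by
          rw [Finset.sum_image hinj]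
      _ ≤ _ := by
          apply Finset.sum_le_sum_of_subset_of_nonneg
          · intro x hx
            obtain ⟨⟨A, g⟩, hy, rfl⟩ := Finset.mem_image.1 hx
            simp at hy
            simp only [G, G2, Finset.mem_product, Finset.mem_filter, Finset.mem_univ, true_and, ι]
            refine ⟨⟨g⁻¹.1 * P' A, ?_⟩, ⟨Q' A * g.1, ?_⟩⟩
            · rw [Matrix.mul_assoc, ← Matrix.mul_assoc (P' A), hP _ hy, Matrix.one_mul,
                ← Units.val_mul, inv_mul_cancel, Units.val_one]
            · rw [Matrix.mul_assoc, ← Matrix.mul_assoc (Q A), hQ _ hy, Matrix.one_mul,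
                ← Units.val_mul, inv_mul_cancel, Units.val_one]
          · intros; positivity
  calc _ ≤ (Fintype.card F : ℝ) ^ (s * s) * ∑ x ∈ G ×ˢ G2, t ^ (3 * td 1 (x.1 * x.2)) := by
        gcongr
    _ = ∑ P ∈ G, (Fintype.card F : ℝ) ^ (s * s) * ∑ Q ∈ G2, t ^ (3 * td 1 (P * Q)) := by
        rw [Finset.sum_product, Finset.mul_sum]
    _ ≤ ∑ P ∈ G, t ^ (3 * (n - s) ^ 2) * ((Fintype.card F : ℝ) ^ (s * n) * W F s) := by
        apply Finset.sum_le_sum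
        intro P hP
        obtain ⟨P', hP'⟩ := (Finset.mem_filter.1 hP).2
        rw [W, ← fiber_sum P P' hP', mul_left_comm]
        gcongr
        rw [Finset.mul_sum]
        calc _ ≤ ∑ Q ∈ G2, t ^ (3 * (n - s) ^ 2) * t ^ (3 * td 1 (Q * P)) := by
              apply Finset.sum_le_sum
              intro Q hQ
              obtain ⟨Q', hQ'⟩ := (Finset.mem_filter.1 hQ).2
              rw [← pow_add]
              apply pow_le_pow_right₀ ht1
              have := td_rank P Q P' Q' hP' hQ'
              omega
          _ ≤ _ := by
              apply Finset.sum_le_sum_of_subset_of_nonneg (Finset.subset_univ _)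
              intros; positivity
    _ ≤ _ := by
        rw [Finset.sum_const, nsmul_eq_mul]
        have hc : (G.card : ℝ) ≤ (Fintype.card F : ℝ) ^ (n * s) := by
          have := Finset.card_le_univ G
          rw [card_mat] at this
          exact_mod_cast this
        have : 0 ≤ W F s := Finset.sum_nonneg fun _ _ => by positivity
        gcongr

end Falc

namespace Falc
open Polynomial

/-- restriction along an injection is an isomorphism when the other quotients vanish -/
theorem restrict_equiv {R : Type} [CommRing R] {S κ : Type} (e : S → κ) (he : Function.Injective e)
    (b : κ → Ideal R) (hb : ∀ j, (¬ ∃ i, e i = j) → b j = ⊤) :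
    Nonempty ((∀ j, R ⧸ b j) ≃ₗ[R] (∀ i, R ⧸ b (e i))) := by
  classical
  let f : (∀ j, R ⧸ b j) →ₗ[R] (∀ i, R ⧸ b (e i)) :=
    LinearMap.pi fun i => LinearMap.proj (e i)
  refine ⟨LinearEquiv.ofBijective f ⟨?_, ?_⟩⟩
  · intro x y h
    funext j
    by_cases hj : ∃ i, e i = j
    · obtain ⟨i, rfl⟩ := hj
      exact congrFun h i
    · have : Subsingleton (R ⧸ b j) := Ideal.Quotient.subsingleton_iff.2 (hb j hj)
      exact Subsingleton.elim _ _
  · intro y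
    choose r hr using fun i => Ideal.Quotient.mk_surjective (y i)
    refine ⟨fun j => Ideal.Quotient.mk (b j) (Function.extend e r 0 j), ?_⟩
    funext i
    change Ideal.Quotient.mk (b (e i)) (Function.extend e r 0 (e i)) = y i
    rw [he.extend_apply, hr]

theorem pad {R : Type} [CommRing R] {ι : Type} [Fintype ι] (a : ι → Ideal R) (n : ℕ)
    (hn : Nat.card {i // a i ≠ ⊤} ≤ n) :
    ∃ b : Fin n → Ideal R, Nonempty ((∀ i, R ⧸ a i) ≃ₗ[R] (∀ j, R ⧸ b j)) := by
  classical
  obtain ⟨emb⟩ : Nonempty ({i // a i ≠ ⊤} ↪ Fin n) := by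
    apply Function.Embedding.nonempty_of_card_le
    simpa [Nat.card_eq_fintype_card] using hn
  let b : Fin n → Ideal R := Function.extend emb (fun i => a i.1) (fun _ => ⊤)
  obtain ⟨e1⟩ := restrict_equiv (fun i : {i // a i ≠ ⊤} => i.1) Subtype.val_injective a (by
    intro j hj
    by_contra h
    exact hj ⟨⟨j, h⟩, rfl⟩)
  obtain ⟨e2⟩ := restrict_equiv emb emb.injective b (by
    intro j hj
    exact Function.extend_apply' _ _ _ hj)
  have : (fun i => b (emb i)) = fun i => a i.1 := by
    funext i
    exact emb.injective.extend_apply _ _ i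
  refine ⟨b, ?_⟩
  have e3 : ∀ c : {i // a i ≠ ⊤} → Ideal R, (fun i => b (emb i)) = c →
      Nonempty ((∀ j, R ⧸ b j) ≃ₗ[R] (∀ i, R ⧸ c i)) := by
    rintro _ rfl
    exact ⟨e2⟩
  obtain ⟨e4⟩ := e3 _ this
  exact ⟨e1.trans e4.symm⟩

theorem structure_thm {F : Type} [Field F] {n : ℕ} (A : Matrix (Fin n) (Fin n) F) :
    ∃ a : Fin n → Ideal F[X], ∃ e : (Fin n → F) ≃ₗ[F] (∀ j, F[X] ⧸ a j),
      (∀ v, e (A.mulVec v) = (X : F[X]) • e v) ∧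
      ∀ f : F[X], aeval A f = 0 → ∀ j, f ∈ a j := by
  classical
  let T := Matrix.toLin' A
  have tors := Module.AEval.isTorsion_of_finiteDimensional F (Fin n → F) T
  obtain ⟨ι, _, p, hp, k, ⟨e⟩⟩ := Module.equiv_directSum_of_isTorsion tors
  let a0 : ι → Ideal F[X] := fun i => Ideal.span {p i ^ k i}
  let e0 : Module.AEval F (Fin n → F) T ≃ₗ[F[X]] (∀ i, F[X] ⧸ a0 i) :=
    e.trans (DirectSum.linearEquivFunOnFintype F[X] ι (fun i => F[X] ⧸ a0 i))
  have hfin : ∀ i, Module.Finite F (F[X] ⧸ a0 i) := by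
    intro i
    refine Module.Finite.of_surjective
      (((LinearMap.proj i).comp e0.toLinearMap).restrictScalars F) ?_
    intro y
    refine ⟨e0.symm (Pi.single i y), ?_⟩
    change e0 (e0.symm (Pi.single i y)) i = y
    rw [e0.apply_symm_apply, Pi.single_eq_same]
  have hdim : n = ∑ i, Module.finrank F (F[X] ⧸ a0 i) := by
    rw [← Module.finrank_pi_fintype, ← (e0.restrictScalars F).finrank_eq,
      ← (Module.AEval.of F (Fin n → F) T).finrank_eq]
    simp
  have hcard : Nat.card {i // a0 i ≠ ⊤} ≤ n := by
    rw [Nat.card_eq_fintype_card, Fintype.card_subtype, Finset.card_eq_sum_ones]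
    conv_rhs => rw [hdim]
    rw [Finset.sum_filter]
    apply Finset.sum_le_sum
    intro i _
    split_ifs with h
    · have : Nontrivial (F[X] ⧸ a0 i) := Ideal.Quotient.nontrivial_iff.2 h
      exact Module.finrank_pos
    · exact Nat.zero_le _
  obtain ⟨b, ⟨e1⟩⟩ := pad a0 n hcard
  let e2 := e0.trans e1
  refine ⟨b, (Module.AEval.of F (Fin n → F) T).trans (e2.restrictScalars F), ?_, ?_⟩
  · intro v
    change e2 (Module.AEval.of F (Fin n → F) T (T v)) = X • e2 (Module.AEval.of F (Fin n → F) T v)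
    rw [← map_smul]
    congr 1
    exact (Module.AEval.X_smul_of (a := T) v).symm
  · intro f hf j
    have hT : aeval T f = 0 := by
      have : aeval (Matrix.toLinAlgEquiv' A) f = Matrix.toLinAlgEquiv' (aeval A f) :=
        aeval_algHom_apply Matrix.toLinAlgEquiv' A f
      rw [hf, map_zero] at this
      exact this
    have hz : ∀ m : Module.AEval F (Fin n → F) T, f • m = 0 := by
      intro m
      obtain ⟨v, rfl⟩ := (Module.AEval.of F (Fin n → F) T).surjective m
      rw [← Module.AEval.of_aeval_smul, hT, zero_smul, map_zero]
    have h1 := hz (e2.symm (fun _ => 1))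
    rw [← map_smul] at h1
    have h2 := e2.symm.map_eq_zero_iff.1 h1
    have h3 := congrFun h2 j
    rw [← Ideal.Quotient.eq_zero_iff_mem]
    rw [← mul_one f, map_mul, map_one]
    exact h3

/-- A choice of elementary divisor data. -/
noncomputable def tau {F : Type} [Field F] {n : ℕ} (A : Matrix (Fin n) (Fin n) F) :
    Fin n → Ideal F[X] := (structure_thm A).choose

theorem tau_spec {F : Type} [Field F] {n : ℕ} (A : Matrix (Fin n) (Fin n) F) :
    ∃ e : (Fin n → F) ≃ₗ[F] (∀ j, F[X] ⧸ tau A j),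
      (∀ v, e (A.mulVec v) = (X : F[X]) • e v) ∧
      ∀ f : F[X], aeval A f = 0 → ∀ j, f ∈ tau A j := (structure_thm A).choose_spec

theorem tau_conj {F : Type} [Field F] {n : ℕ} (A B : Matrix (Fin n) (Fin n) F)
    (h : tau A = tau B) : ∃ g : GL (Fin n) F, g.1 * A = B * g.1 := by
  have key : ∀ a b : Fin n → Ideal F[X], a = b → ∀ (e1 : (Fin n → F) ≃ₗ[F] (∀ j, F[X] ⧸ a j))
      (e2 : (Fin n → F) ≃ₗ[F] (∀ j, F[X] ⧸ b j)),
      (∀ v, e1 (A.mulVec v) = (X : F[X]) • e1 v) → (∀ v, e2 (B.mulVec v) = (X : F[X]) • e2 v) →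
      ∃ g : GL (Fin n) F, g.1 * A = B * g.1 := by
    rintro a _ rfl e1 e2 h1 h2
    let E := e1.trans e2.symm
    refine ⟨⟨LinearMap.toMatrix' E.toLinearMap, LinearMap.toMatrix' E.symm.toLinearMap, ?_, ?_⟩, ?_⟩
    · rw [← LinearMap.toMatrix'_comp]
      simp
    · rw [← LinearMap.toMatrix'_comp]
      simp
    · apply Matrix.toLin'.injective
      apply LinearMap.ext
      intro v
      simp only [Matrix.toLin'_mul, Matrix.toLin'_toMatrix']
      change e2.symm (e1 (A.mulVec v)) = B.mulVec (e2.symm (e1 v))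
      apply e2.injective
      rw [h1, h2, e2.apply_symm_apply, e2.apply_symm_apply]
  obtain ⟨e1, h1, -⟩ := tau_spec A
  obtain ⟨e2, h2, -⟩ := tau_spec B
  exact key _ _ h e1 e2 h1 h2

theorem n_le_td {F : Type} [Field F] {n : ℕ} (A : Matrix (Fin n) (Fin n) F) :
    n ≤ td (-1) A := by
  obtain ⟨e, h, -⟩ := tau_spec A
  let L : (Fin n → F) → ((Fin n → F) →ₗ[F] (Fin n → F)) := fun x =>
    e.symm.toLinearMap ∘ₗ (LinearMap.mulLeft F (e x)) ∘ₗ e.toLinearMap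
  have hLapp : ∀ x v, L x v = e.symm (e x * e v) := fun _ _ => rfl
  have hL : ∀ x, LinearMap.toMatrix' (L x) ∈ tw (-1) A := by
    intro x
    rw [mem_comm]
    apply Matrix.toLin'.injective
    apply LinearMap.ext
    intro v
    rw [Matrix.toLin'_mul, Matrix.toLin'_mul, Matrix.toLin'_toMatrix']
    change A.mulVec (L x v) = L x (A.mulVec v)
    rw [hLapp, hLapp]
    apply e.injective
    rw [h, h, e.apply_symm_apply, e.apply_symm_apply, mul_smul_comm]
  let Φ : (Fin n → F) →ₗ[F] tw (-1) A :=
    { toFun := fun x => ⟨LinearMap.toMatrix' (L x), hL x⟩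
      map_add' := by
        intro x y
        apply Subtype.ext
        change LinearMap.toMatrix' _ = LinearMap.toMatrix' _ + LinearMap.toMatrix' _
        rw [← map_add]
        congr 1
        apply LinearMap.ext
        intro v
        rw [LinearMap.add_apply, hLapp, hLapp, hLapp, map_add, add_mul, map_add]
      map_smul' := by
        intro c x
        apply Subtype.ext
        change LinearMap.toMatrix' _ = c • LinearMap.toMatrix' _
        rw [← map_smul]
        congr 1
        apply LinearMap.ext
        intro v
        rw [LinearMap.smul_apply, hLapp, hLapp, map_smul, smul_mul_assoc, map_smul] }
  have hinj : Function.Injective Φ := by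
    intro x y hxy
    have h1 : LinearMap.toMatrix' (L x) = LinearMap.toMatrix' (L y) := congrArg Subtype.val hxy
    have h2 := LinearMap.toMatrix'.injective h1
    have h3 := LinearMap.congr_fun h2 (e.symm 1)
    rw [hLapp, hLapp, e.apply_symm_apply, mul_one, mul_one] at h3
    simpa using h3
  have := LinearMap.finrank_le_finrank_of_injective hinj
  rw [Module.finrank_fin_fun] at this
  exact this

end Falc

namespace Falc
open Polynomial

theorem exists_D {F : Type} [Field F] (f : F[X]) (hf : f ≠ 0) :
    ∃ D : Finset (Ideal F[X]), D.card ≤ 2 ^ f.natDegree ∧ ∀ I : Ideal F[X], f ∈ I → I ∈ D := by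
  classical
  let N := UniqueFactorizationMonoid.normalizedFactors f
  refine ⟨N.powerset.toFinset.image fun m => Ideal.span {m.prod}, ?_, ?_⟩
  · refine Finset.card_image_le.trans ((Multiset.toFinset_card_le _).trans ?_)
    rw [Multiset.card_powerset]
    apply Nat.pow_le_pow_right (by norm_num)
    have h1 : N.prod.natDegree = f.natDegree :=
      natDegree_eq_of_degree_eq (degree_eq_degree_of_associated
        (UniqueFactorizationMonoid.prod_normalizedFactors hf))
    have h0 : (0 : F[X]) ∉ N := UniqueFactorizationMonoid.zero_notMem_normalizedFactors f
    rw [← h1, natDegree_multiset_prod _ h0]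
    have : Multiset.card N = (N.map fun _ => 1).sum := by simp
    rw [this]
    apply Multiset.sum_map_le_sum_map
    intro p hp
    exact (UniqueFactorizationMonoid.irreducible_of_normalized_factor p hp).natDegree_pos
  · intro I hI
    obtain ⟨g, rfl⟩ := (IsPrincipalIdealRing.principal I).principal
    have hg : g ∣ f := Ideal.mem_span_singleton.1 hI
    have hg0 : g ≠ 0 := ne_zero_of_dvd_ne_zero hf hg
    refine Finset.mem_image.2 ⟨UniqueFactorizationMonoid.normalizedFactors g, ?_, ?_⟩
    · rw [Multiset.mem_toFinset, Multiset.mem_powerset]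
      exact (UniqueFactorizationMonoid.dvd_iff_normalizedFactors_le_normalizedFactors hg0 hf).1 hg
    · exact Ideal.span_singleton_eq_span_singleton.2
        (UniqueFactorizationMonoid.prod_normalizedFactors hg0)

/-- number of invertible matrices commuting with `A` -/
noncomputable def cu {F : Type} [Field F] {n : ℕ} (A : Matrix (Fin n) (Fin n) F) : ℕ :=
  Nat.card {g : GL (Fin n) F // g.1 * A = A * g.1}

theorem lemmaO {F : Type} [Field F] [Fintype F] {n : ℕ}
    (Ω : Finset (Matrix (Fin n) (Fin n) F)) (S : Finset (Fin n → Ideal F[X]))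
    (h : ∀ A ∈ Ω, tau A ∈ S) : ∑ A ∈ Ω, cu A ≤ S.card * Nat.card (GL (Fin n) F) := by
  classical
  rw [← Finset.sum_fiberwise_of_maps_to h]
  refine (Finset.sum_le_card_nsmul _ _ (Nat.card (GL (Fin n) F)) ?_).trans (by simp)
  intro s _
  by_cases hne : (Ω.filter fun A => tau A = s).Nonempty
  · obtain ⟨A0, hA0⟩ := hne
    have hg : ∀ A : {A // A ∈ Ω.filter fun A => tau A = s}, ∃ g : GL (Fin n) F,
        g.1 * A0 = A.1 * g.1 := by
      intro A
      apply tau_conj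
      rw [(Finset.mem_filter.1 hA0).2, (Finset.mem_filter.1 A.2).2]
    choose g hg using hg
    rw [← Finset.sum_coe_sort]
    have : ∑ A : {A // A ∈ Ω.filter fun A => tau A = s}, cu A.1 =
        Nat.card (Σ A : {A // A ∈ Ω.filter fun A => tau A = s},
          {g : GL (Fin n) F // g.1 * A.1 = A.1 * g.1}) := by
      rw [Nat.card_sigma]; rfl
    rw [this]
    apply Nat.card_le_card_of_injective (fun x => x.2.1 * g x.1)
    have key : ∀ x : (Σ A : {A // A ∈ Ω.filter fun A => tau A = s},
          {g : GL (Fin n) F // g.1 * A.1 = A.1 * g.1}),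
        (x.2.1 * g x.1).1 * A0 = x.1.1 * (x.2.1 * g x.1).1 := by
      intro x
      rw [Units.val_mul, Matrix.mul_assoc, hg, ← Matrix.mul_assoc, x.2.2, Matrix.mul_assoc]
    intro x y hxy
    have h1 := key x
    have h2 := key y
    simp only at hxy
    rw [hxy, h2] at h1
    have h3 : y.1.1 = x.1.1 := (Units.mul_left_inj (y.2.1 * g y.1)).1 h1
    obtain ⟨A, c⟩ := x
    obtain ⟨B, d⟩ := y
    have h4 : B = A := Subtype.ext h3
    subst h4
    have h5 : c.1 = d.1 := mul_right_cancel hxy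
    have h6 : c = d := Subtype.ext h5
    rw [h6]
  · rw [Finset.not_nonempty_iff_eq_empty.1 hne]; simp

theorem charpoly_neg' {F : Type} [Field F] {n : ℕ} (A : Matrix (Fin n) (Fin n) F) :
    A.charpoly.comp (-X) = (-1) ^ n * (-A).charpoly := by
  have h : A.charpoly.comp (-X) = compRingHom (-X) A.charpoly := rfl
  rw [h, Matrix.charpoly, RingHom.map_det, Matrix.charpoly]
  have : (compRingHom (-X : F[X])).mapMatrix A.charmatrix = - (-A).charmatrix := by
    ext1 i j
    by_cases hij : i = j
    · subst hij
      simp [Matrix.charmatrix_apply_eq]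
      ring
    · simp [Matrix.charmatrix_apply_ne _ _ _ hij]
  rw [this, Matrix.det_neg, Fintype.card_fin]

theorem coeff_neg_sim {F : Type} [Field F] (h2 : (2 : F) ≠ 0) {n : ℕ}
    (A : Matrix (Fin n) (Fin n) F) (g : GL (Fin n) F) (hg : g.1 * A = - (A * g.1)) (i : ℕ)
    (hi : i ≤ n) (hodd : Odd (n - i)) : A.charpoly.coeff i = 0 := by
  have h1 : A.charpoly = (-A).charpoly := by
    have : -A = g.1 * A * (g⁻¹).1 := by
      rw [hg, Matrix.neg_mul, Matrix.mul_assoc, ← Units.val_mul, mul_inv_cancel, Units.val_one,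
        Matrix.mul_one]
    rw [this]
    have h5 := (Matrix.charpoly_units_conj g A).symm
    rwa [← Matrix.coe_units_inv] at h5
  have h3 : (-A).charpoly.coeff i = (-1) ^ (n - i) * A.charpoly.coeff i := by
    have h4 := congrArg (fun p => coeff p i) (charpoly_neg' A)
    have h9 : (-X : F[X]) = C (-1) * X := by simp
    simp only [h9, comp_C_mul_X_coeff] at h4
    have h5 : ((-1 : F[X]) ^ n) = C ((-1) ^ n) := by simp
    rw [h5, coeff_C_mul] at h4
    have h6 : n = (n - i) + i := by omega
    have h7 : ((-1 : F) ^ n) * (-1) ^ i = (-1) ^ (n - i) := by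
      nth_rewrite 1 [h6]
      rw [pow_add, mul_assoc, ← mul_pow]; simp
    have h8 : ((-1 : F) ^ n) * (-1) ^ n = 1 := by rw [← mul_pow]; simp
    rw [← h7, mul_assoc, mul_comm ((-1) ^ i), h4, ← mul_assoc, h8, one_mul]
  rw [← h1, hodd.neg_one_pow] at h3
  have : (2 : F) * A.charpoly.coeff i = 0 := by linear_combination h3
  exact (mul_eq_zero.1 this).resolve_left h2



theorem exists_CP (F : Type) [Field F] [Fintype F] (h2 : (2 : F) ≠ 0) (n : ℕ) :
    ∃ CP : Finset F[X], CP.card ≤ Fintype.card F ^ (n / 2) ∧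
      (∀ A : Matrix (Fin n) (Fin n) F, (∃ g : GL (Fin n) F, g.1 * A = - (A * g.1)) →
        A.charpoly ∈ CP) := by
  classical
  refine ⟨Finset.univ.image fun c : Fin (n / 2) → F =>
    X ^ n + ∑ k, C (c k) * X ^ (n - 2 * ((k : ℕ) + 1)), ?_, ?_⟩
  · refine Finset.card_image_le.trans ?_
    simp
  · rintro A ⟨g, hg⟩
    refine Finset.mem_image.2 ⟨fun k => A.charpoly.coeff (n - 2 * ((k : ℕ) + 1)),
      Finset.mem_univ _, ?_⟩
    have hdeg : A.charpoly.natDegree = n := by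
      rw [Matrix.charpoly_natDegree_eq_dim, Fintype.card_fin]
    ext i
    simp only [coeff_add, coeff_X_pow, finsetSum_coeff, coeff_C_mul]
    rcases lt_trichotomy i n with h | h | h
    · rw [if_neg (by omega), zero_add]
      rcases Nat.even_or_odd (n - i) with he | ho
      · obtain ⟨m, hm⟩ := he
        rw [Finset.sum_eq_single (⟨m - 1, by omega⟩ : Fin (n / 2))]
        · have : n - 2 * (m - 1 + 1) = i := by omega
          simp [this]
        · intro k _ hk
          rw [if_neg, mul_zero]
          intro h3
          apply hk
          apply Fin.ext
          have := k.2
          simp only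
          omega
        · intro h3; exact absurd (Finset.mem_univ _) h3
      · rw [coeff_neg_sim h2 A g hg i h.le ho]
        apply Finset.sum_eq_zero
        intro k _
        rw [if_neg, mul_zero]
        have := k.2
        obtain ⟨m, hm⟩ := ho
        omega
    · subst h
      have h5 := A.charpoly_monic
      rw [Monic, leadingCoeff, hdeg] at h5
      rw [h5, if_pos rfl, Finset.sum_eq_zero, add_zero]
      intro k _
      rw [if_neg, mul_zero]
      have := k.2
      omega
    · rw [coeff_eq_zero_of_natDegree_lt (by omega), if_neg (by omega), Finset.sum_eq_zero, add_zero]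
      intro k _
      rw [if_neg, mul_zero]
      have := k.2
      omega

theorem exists_S {F : Type} [Field F] {n : ℕ} (CP : Finset F[X])
    (h0 : ∀ f ∈ CP, f ≠ 0 ∧ f.natDegree ≤ n) :
    ∃ S : Finset (Fin n → Ideal F[X]), S.card ≤ CP.card * (2 ^ n) ^ n ∧
      ∀ A : Matrix (Fin n) (Fin n) F, (∃ f ∈ CP, aeval A f = 0) → tau A ∈ S := by
  classical
  choose! D hD1 hD2 using fun f : F[X] => exists_D f
  refine ⟨CP.biUnion fun f => Fintype.piFinset fun _ : Fin n => D f, ?_, ?_⟩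
  · refine Finset.card_biUnion_le_card_mul _ _ _ ?_
    intro f hf
    rw [Fintype.card_piFinset_const]
    apply Nat.pow_le_pow_left
    exact (hD1 f (h0 f hf).1).trans (Nat.pow_le_pow_right (by norm_num) (h0 f hf).2)
  · rintro A ⟨f, hf, hA⟩
    obtain ⟨e, -, h⟩ := tau_spec A
    exact Finset.mem_biUnion.2 ⟨f, hf, Fintype.mem_piFinset.2 fun j =>
      hD2 f (h0 f hf).1 _ (h f hA j)⟩

theorem card_GL_le {F : Type} [Field F] [Fintype F] (n : ℕ) :
    Nat.card (GL (Fin n) F) ≤ Fintype.card F ^ (n * n) := by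
  classical
  rw [← card_mat (F := F) n n, ← Nat.card_eq_fintype_card]
  exact Nat.card_le_card_of_injective (fun g : GL (Fin n) F => g.1) Units.val_injective

/-- First moment over invertible matrices. -/
theorem first_moment {F : Type} [Field F] [Fintype F] [DecidableEq F] (h2 : (2 : F) ≠ 0) (n : ℕ) :
    ∑ g : GL (Fin n) F, Fintype.card F ^ td 1 g.1 ≤
      Fintype.card F ^ (n / 2) * (2 ^ n) ^ n * Fintype.card F ^ (n * n) := by
  classical
  obtain ⟨CP, hCP, hCP2⟩ := exists_CP F h2 n
  let CP' := CP.filter fun f => f ≠ 0 ∧ f.natDegree ≤ n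
  obtain ⟨S, hS, hS2⟩ := exists_S (n := n) CP' (fun f hf => (Finset.mem_filter.1 hf).2)
  let Ω : Finset (Matrix (Fin n) (Fin n) F) :=
    Finset.univ.filter fun A => ∃ g : GL (Fin n) F, g.1 * A = - (A * g.1)
  have hO := lemmaO Ω S (by
    intro A hA
    apply hS2
    refine ⟨A.charpoly, Finset.mem_filter.2 ⟨hCP2 A (Finset.mem_filter.1 hA).2,
      A.charpoly_monic.ne_zero, ?_⟩, Matrix.aeval_self_charpoly A⟩
    rw [Matrix.charpoly_natDegree_eq_dim, Fintype.card_fin])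
  have hS' : S.card ≤ Fintype.card F ^ (n / 2) * (2 ^ n) ^ n :=
    hS.trans (Nat.mul_le_mul_right _ ((Finset.card_filter_le _ _).trans hCP))
  refine le_trans ?_ (hO.trans (Nat.mul_le_mul hS' (card_GL_le n)))
  have e1 : ∀ g : GL (Fin n) F, Fintype.card F ^ td 1 g.1 =
      ∑ A : Matrix (Fin n) (Fin n) F, if g.1 * A = - (A * g.1) then 1 else 0 := by
    intro g
    rw [← card_tw, Finset.sum_boole, Nat.card_eq_fintype_card, Nat.cast_id,
      ← Fintype.card_subtype]
    apply Fintype.card_congr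
    apply Equiv.subtypeEquivRight
    intro A
    rw [mem_anti, add_eq_zero_iff_eq_neg]
  simp_rw [e1]
  rw [Finset.sum_comm]
  have e2 : ∀ A : Matrix (Fin n) (Fin n) F,
      (∑ g : GL (Fin n) F, if g.1 * A = - (A * g.1) then 1 else 0) ≤ if A ∈ Ω then cu A else 0 := by
    intro A
    rw [Finset.sum_boole, Nat.cast_id, ← Fintype.card_subtype, ← Nat.card_eq_fintype_card]
    split_ifs with h
    · obtain ⟨g0, hg0⟩ := (Finset.mem_filter.1 h).2
      rw [cu]
      refine Nat.card_le_card_of_injective (fun g => ⟨g0⁻¹ * g.1, ?_⟩) ?_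
      · have h5 : A * (g0⁻¹).1 = - ((g0⁻¹).1 * A) := by
          have : g0.1 * (A * (g0⁻¹).1) = g0.1 * (- ((g0⁻¹).1 * A)) := by
            rw [← Matrix.mul_assoc, hg0, Matrix.neg_mul, Matrix.mul_assoc, Matrix.mul_neg,
              ← Matrix.mul_assoc g0.1, ← Units.val_mul, mul_inv_cancel]
            simp
          exact (Units.mul_right_inj g0).1 this
        rw [Units.val_mul, Matrix.mul_assoc, g.2, Matrix.mul_neg, ← Matrix.mul_assoc,
          ← Matrix.mul_assoc, h5, Matrix.neg_mul]
      · intro g g' hgg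
        apply Subtype.ext
        exact mul_left_cancel (congrArg Subtype.val hgg)
    · rw [Nat.le_zero, Nat.card_eq_zero]
      left
      constructor
      rintro ⟨g, hg⟩
      exact h (Finset.mem_filter.2 ⟨Finset.mem_univ _, g, hg⟩)
  refine (Finset.sum_le_sum fun A _ => e2 A).trans ?_
  rw [Finset.sum_ite_mem, Finset.univ_inter]

end Falc

namespace Falc
open Polynomial

theorem cu_ge {F : Type} [Field F] [Fintype F] {n : ℕ} (hn : 0 < n)
    (hq : 2 * n ≤ Fintype.card F) (A : Matrix (Fin n) (Fin n) F) :
    Fintype.card F ^ td (-1) A ≤ 2 * cu A := by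
  classical
  have hmem : ∀ (Y : Matrix (Fin n) (Fin n) F) (t : F), Y ∈ tw (-1) A →
      Y + t • 1 ∈ tw (-1) A := by
    intro Y t hY
    apply Submodule.add_mem _ hY
    apply Submodule.smul_mem
    rw [mem_comm]; simp
  let sing : ℕ := ∑ Y : tw (-1) A, if Y.1.det = 0 then 1 else 0
  have h1 : Fintype.card F * sing ≤ n * Fintype.card F ^ td (-1) A := by
    calc Fintype.card F * sing = ∑ t : F, ∑ Y : tw (-1) A, if Y.1.det = 0 then 1 else 0 := by
          rw [Finset.sum_const, smul_eq_mul, Finset.card_univ]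
      _ = ∑ t : F, ∑ Y : tw (-1) A,
            if (Y.1 + t • (1 : Matrix (Fin n) (Fin n) F)).det = 0 then 1 else 0 := by
          apply Finset.sum_congr rfl
          intro t _
          have ht : t • (1 : Matrix (Fin n) (Fin n) F) ∈ tw (-1) A := by
            simpa using hmem 0 t (Submodule.zero_mem _)
          rw [← Equiv.sum_comp (Equiv.addRight (⟨_, ht⟩ : tw (-1) A))]
          rfl
      _ = ∑ Y : tw (-1) A, ∑ t : F,
            if (Y.1 + t • (1 : Matrix (Fin n) (Fin n) F)).det = 0 then 1 else 0 := Finset.sum_comm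
      _ ≤ ∑ Y : tw (-1) A, n := by
          apply Finset.sum_le_sum
          intro Y _
          rw [Finset.sum_boole, Nat.cast_id]
          have hne : (-Y.1).charpoly ≠ 0 := (Matrix.charpoly_monic _).ne_zero
          calc _ ≤ (-Y.1).charpoly.roots.toFinset.card := by
                apply Finset.card_le_card
                intro t ht
                rw [Multiset.mem_toFinset, mem_roots hne, IsRoot, Matrix.eval_charpoly]
                rw [← (Finset.mem_filter.1 ht).2]
                congr 1
                rw [sub_neg_eq_add, add_comm, Matrix.smul_one_eq_diagonal]
                rfl
            _ ≤ Multiset.card (-Y.1).charpoly.roots := Multiset.toFinset_card_le _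
            _ ≤ (-Y.1).charpoly.natDegree := card_roots' _
            _ = n := by rw [Matrix.charpoly_natDegree_eq_dim, Fintype.card_fin]
      _ = _ := by
          rw [Finset.sum_const, Finset.card_univ, ← Nat.card_eq_fintype_card, card_tw, smul_eq_mul,
            mul_comm]
  have h2 : Fintype.card F ^ td (-1) A ≤ cu A + sing := by
    rw [← card_tw]
    have e : Nat.card (tw (-1) A) = Nat.card {Y : tw (-1) A // Y.1.det ≠ 0} + sing := by
      have e1 : sing = Fintype.card {Y : tw (-1) A // Y.1.det = 0} := by
        rw [Fintype.card_subtype]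
        exact Finset.sum_boole ..
      rw [e1, Nat.card_eq_fintype_card, Nat.card_eq_fintype_card, add_comm]
      have e2 := Fintype.card_subtype_compl (fun Y : tw (-1) A => Y.1.det = 0)
      have e3 := Fintype.card_subtype_le (fun Y : tw (-1) A => Y.1.det = 0)
      simp only [ne_eq]
      omega
    rw [e]
    gcongr
    rw [cu]
    refine Nat.card_le_card_of_injective
      (fun Y => ⟨Matrix.GeneralLinearGroup.mkOfDetNeZero Y.1.1 Y.2, ?_⟩) ?_
    · exact (mem_comm.1 Y.1.2).symm
    · intro Y Z h
      apply Subtype.ext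
      apply Subtype.ext
      exact congrArg (fun g => g.1.1) h
  have h3 : 2 * sing ≤ Fintype.card F ^ td (-1) A := by
    have h4 : 2 * n * sing ≤ n * Fintype.card F ^ td (-1) A :=
      (Nat.mul_le_mul_right _ hq).trans h1
    have h5 : n * (2 * sing) ≤ n * Fintype.card F ^ td (-1) A := by
      calc n * (2 * sing) = 2 * n * sing := by ring
        _ ≤ _ := h4
    exact Nat.le_of_mul_le_mul_left h5 hn
  omega

theorem sqrt_ge {F : Type} [Field F] [Fintype F] : 1 ≤ √(Fintype.card F : ℝ) := by
  rw [Real.one_le_sqrt]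
  exact_mod_cast Fintype.card_pos

theorem card_pow {F : Type} [Field F] [Fintype F] (k : ℕ) :
    (Fintype.card F : ℝ) ^ k = √(Fintype.card F : ℝ) ^ (2 * k) := by
  rw [pow_mul, Real.sq_sqrt (by positivity)]

theorem scalar_sum {F : Type} [Field F] [Fintype F] [DecidableEq F] (h2 : (2 : F) ≠ 0) {n : ℕ}
    (hn : 3 ≤ n) (hq : 2 * n ≤ Fintype.card F) (Ω : Finset (Matrix (Fin n) (Fin n) F))
    (hΩ : ∀ A ∈ Ω, ∃ σ : F, σ ≠ 0 ∧ A * A = σ • (1 : Matrix (Fin n) (Fin n) F)) :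
    ∑ A ∈ Ω, √(Fintype.card F : ℝ) ^ (3 * td 1 A) ≤
      2 * (2 ^ n) ^ n * √(Fintype.card F : ℝ) ^ (3 * n ^ 2 - 2 * (n - 1)) := by
  have ht := sqrt_ge (F := F)
  let CP : Finset F[X] := Finset.univ.image fun σ : F => X ^ 2 - C σ
  have hCP : CP.card ≤ Fintype.card F := Finset.card_image_le.trans (by simp)
  obtain ⟨S, hS, hS2⟩ := exists_S (n := n) CP (by
    intro f hf
    obtain ⟨σ, -, rfl⟩ := Finset.mem_image.1 hf
    have hd : (X ^ 2 - C σ : F[X]).natDegree = 2 := natDegree_X_pow_sub_C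
    refine ⟨?_, by omega⟩
    intro h; rw [h] at hd; simp at hd)
  have hO := lemmaO Ω S (by
    intro A hA
    obtain ⟨σ, -, hσ⟩ := hΩ A hA
    apply hS2
    refine ⟨X ^ 2 - C σ, Finset.mem_image_of_mem _ (Finset.mem_univ _), ?_⟩
    simp only [map_sub, map_pow, aeval_X, aeval_C]
    rw [pow_two, hσ, Algebra.algebraMap_eq_smul_one, sub_self])
  have hsum : ∑ A ∈ Ω, Fintype.card F ^ td (-1) A ≤
      2 * (Fintype.card F * (2 ^ n) ^ n * Fintype.card F ^ (n * n)) := by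
    calc _ ≤ ∑ A ∈ Ω, 2 * cu A := Finset.sum_le_sum fun A _ => cu_ge (by omega) hq A
      _ = 2 * ∑ A ∈ Ω, cu A := by rw [Finset.mul_sum]
      _ ≤ _ := by
        apply Nat.mul_le_mul_left
        refine hO.trans (Nat.mul_le_mul (hS.trans (Nat.mul_le_mul_right _ hCP)) (card_GL_le n))
  have hsum' : ∑ A ∈ Ω, (Fintype.card F : ℝ) ^ td (-1) A ≤
      2 * (Fintype.card F * (2 ^ n) ^ n * Fintype.card F ^ (n * n)) := by exact_mod_cast hsum
  have h2n : 2 * n ≤ n ^ 2 := by nlinarith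
  calc _ ≤ ∑ A ∈ Ω, √(Fintype.card F : ℝ) ^ (n ^ 2 - 2 * n) * (Fintype.card F : ℝ) ^ td (-1) A := by
        apply Finset.sum_le_sum
        intro A hA
        obtain ⟨σ, hσ0, hσ⟩ := hΩ A hA
        have d1 := td_add_eq h2 A σ hσ0 hσ
        have d2 := td_scalar h2 A σ hσ0 hσ
        rw [card_pow, ← pow_add]
        apply pow_le_pow_right₀ ht
        rcases Nat.lt_or_ge n 4 with h | h
        · have : n = 3 := by omega
          subst this
          omega
        · have : 4 * n ≤ n ^ 2 := by nlinarith
          omega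
    _ = √(Fintype.card F : ℝ) ^ (n ^ 2 - 2 * n) * ∑ A ∈ Ω, (Fintype.card F : ℝ) ^ td (-1) A := by
        rw [Finset.mul_sum]
    _ ≤ √(Fintype.card F : ℝ) ^ (n ^ 2 - 2 * n) *
          (2 * (Fintype.card F * (2 ^ n) ^ n * Fintype.card F ^ (n * n))) := by gcongr
    _ = 2 * (2 ^ n) ^ n * (√(Fintype.card F : ℝ) ^ (n ^ 2 - 2 * n) *
          ((Fintype.card F : ℝ) ^ 1 * (Fintype.card F : ℝ) ^ (n * n))) := by ring
    _ = _ := by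
        rw [card_pow, card_pow, ← pow_add, ← pow_add]
        congr 2
        rw [← pow_two]
        omega

theorem first_moment' {F : Type} [Field F] [Fintype F] [DecidableEq F] (h2 : (2 : F) ≠ 0) (n : ℕ)
    (G : Finset (GL (Fin n) F)) (m : ℕ) (hm : ∀ g ∈ G, td 1 g.1 ≤ m) :
    ∑ g ∈ G, √(Fintype.card F : ℝ) ^ (3 * td 1 g.1) ≤
      (2 ^ n) ^ n * √(Fintype.card F : ℝ) ^ (m + n + 2 * n ^ 2) := by
  have ht := sqrt_ge (F := F)
  have h : ∑ g : GL (Fin n) F, (Fintype.card F : ℝ) ^ td 1 g.1 ≤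
      Fintype.card F ^ (n / 2) * (2 ^ n) ^ n * Fintype.card F ^ (n * n) := by
    exact_mod_cast first_moment h2 n
  calc _ ≤ ∑ g ∈ G, √(Fintype.card F : ℝ) ^ m * (Fintype.card F : ℝ) ^ td 1 g.1 := by
        apply Finset.sum_le_sum
        intro g hg
        rw [card_pow, ← pow_add]
        apply pow_le_pow_right₀ ht
        have := hm g hg
        omega
    _ ≤ ∑ g : GL (Fin n) F, √(Fintype.card F : ℝ) ^ m * (Fintype.card F : ℝ) ^ td 1 g.1 := by
        apply Finset.sum_le_sum_of_subset_of_nonneg (Finset.subset_univ _)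
        intros; positivity
    _ = √(Fintype.card F : ℝ) ^ m * ∑ g : GL (Fin n) F, (Fintype.card F : ℝ) ^ td 1 g.1 := by
        rw [Finset.mul_sum]
    _ ≤ √(Fintype.card F : ℝ) ^ m *
        (Fintype.card F ^ (n / 2) * (2 ^ n) ^ n * Fintype.card F ^ (n * n)) := by gcongr
    _ = (2 ^ n) ^ n * (√(Fintype.card F : ℝ) ^ m *
        ((Fintype.card F : ℝ) ^ (n / 2) * (Fintype.card F : ℝ) ^ (n * n))) := by ring
    _ ≤ _ := by
        rw [card_pow, card_pow, ← pow_add, ← pow_add, ← pow_two]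
        exact mul_le_mul_of_nonneg_left (pow_le_pow_right₀ ht (by omega)) (by positivity)

theorem GL_weak {F : Type} [Field F] [Fintype F] [DecidableEq F] (h2 : (2 : F) ≠ 0) (n : ℕ) :
    ∑ g : GL (Fin n) F, √(Fintype.card F : ℝ) ^ (3 * td 1 g.1) ≤
      (2 ^ n) ^ n * √(Fintype.card F : ℝ) ^ (3 * n ^ 2) := by
  have h1 : n ≤ n ^ 2 := by nlinarith [Nat.zero_le n, sq_nonneg ((n : ℤ) - 1), Nat.le_self_pow (two_ne_zero) n]
  refine (first_moment' h2 n Finset.univ (n ^ 2 - n) ?_).trans_eq ?_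
  · intro g _
    have d1 := td_add_le h2 g.1 g.isUnit
    have d2 := n_le_td g.1
    have d3 : td (-1) (g.1 * g.1) ≤ n ^ 2 := by
      refine (Submodule.finrank_le (tw (-1) (g.1 * g.1))).trans ?_
      simp [Module.finrank_matrix, pow_two]
    omega
  · congr 2
    omega

theorem GL_strong {F : Type} [Field F] [Fintype F] [DecidableEq F] (h2 : (2 : F) ≠ 0) {n : ℕ}
    (hn : 3 ≤ n) (hq : 2 * n ≤ Fintype.card F) :
    ∑ g : GL (Fin n) F, √(Fintype.card F : ℝ) ^ (3 * td 1 g.1) ≤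
      (3 * (2 ^ n) ^ n) * √(Fintype.card F : ℝ) ^ (3 * n ^ 2 - 2 * (n - 1)) := by
  classical
  have h3 : 3 * n ≤ n ^ 2 := by nlinarith
  let p : GL (Fin n) F → Prop := fun g =>
    ∃ σ : F, g.1 * g.1 = σ • (1 : Matrix (Fin n) (Fin n) F)
  rw [← Finset.sum_filter_add_sum_filter_not Finset.univ p]
  have b1 : ∑ g : GL (Fin n) F with p g, √(Fintype.card F : ℝ) ^ (3 * td 1 g.1) ≤
      2 * (2 ^ n) ^ n * √(Fintype.card F : ℝ) ^ (3 * n ^ 2 - 2 * (n - 1)) := by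
    have := scalar_sum h2 hn hq ((Finset.univ.filter p).image fun g => g.1) (by
      intro A hA
      obtain ⟨g, hg, rfl⟩ := Finset.mem_image.1 hA
      obtain ⟨σ, hσ⟩ := (Finset.mem_filter.1 hg).2
      refine ⟨σ, ?_, hσ⟩
      rintro rfl
      rw [zero_smul] at hσ
      haveI : Nonempty (Fin n) := ⟨⟨0, by omega⟩⟩
      exact (g * g).ne_zero (by rw [Units.val_mul, hσ]))
    rwa [Finset.sum_image (fun _ _ _ _ h => Units.ext h)] at this
  have b2 : ∑ g : GL (Fin n) F with ¬ p g, √(Fintype.card F : ℝ) ^ (3 * td 1 g.1) ≤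
      (2 ^ n) ^ n * √(Fintype.card F : ℝ) ^ (3 * n ^ 2 - 2 * (n - 1)) := by
    refine (first_moment' h2 n _ (n ^ 2 + 2 - 3 * n) ?_).trans_eq ?_
    · intro g hg
      have d1 := td_add_le h2 g.1 g.isUnit
      have d2 := n_le_td g.1
      have d3 := td_le (-1) (by simp) (g.1 * g.1) (Finset.mem_filter.1 hg).2
      omega
    · congr 2
      omega
  linarith

end Falc

namespace Falc

theorem rank_sum {F : Type} [Field F] [Fintype F] [DecidableEq F] {n s : ℕ} (hs : s ≤ n) (C : ℝ)
    (hW : W F s ≤ C * √(Fintype.card F : ℝ) ^ (3 * s ^ 2)) :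
    ∑ A : Matrix (Fin n) (Fin n) F with A.rank = s, √(Fintype.card F : ℝ) ^ (3 * td 1 A) ≤
      2 ^ s * C * √(Fintype.card F : ℝ) ^ (3 * n ^ 2 - 2 * (s * (n - s))) := by
  have ht := sqrt_ge (F := F)
  have h := rank_step (F := F) n s
  set Ss := ∑ A : Matrix (Fin n) (Fin n) F with A.rank = s, √(Fintype.card F : ℝ) ^ (3 * td 1 A)
  have h0 : 0 ≤ Ss := Finset.sum_nonneg fun _ _ => by positivity
  have hGL : (Fintype.card F : ℝ) ^ (s * s) ≤ 2 ^ s * (Nat.card (GL (Fin s) F) : ℝ) := by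
    exact_mod_cast card_GL_ge (F := F) s
  rw [card_pow] at hGL
  simp only [card_pow] at h
  set t := √(Fintype.card F : ℝ) with htt
  obtain ⟨m, rfl⟩ := Nat.exists_eq_add_of_le hs
  rw [Nat.add_sub_cancel_left] at h ⊢
  have hexp : 3 * (s + m) ^ 2 - 2 * (s * m) = 3 * s ^ 2 + 3 * m ^ 2 + 4 * (s * m) := by
    have : 3 * (s + m) ^ 2 = 3 * s ^ 2 + 3 * m ^ 2 + 4 * (s * m) + 2 * (s * m) := by ring
    omega
  rw [hexp]
  have hpos : 0 < t ^ (4 * s ^ 2) := by positivity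
  refine le_of_mul_le_mul_left ?_ hpos
  calc t ^ (4 * s ^ 2) * Ss = t ^ (2 * (s * s)) * (t ^ (2 * (s * s)) * Ss) := by ring
    _ ≤ t ^ (2 * (s * s)) * ((2 ^ s * (Nat.card (GL (Fin s) F) : ℝ)) * Ss) := by gcongr
    _ = 2 ^ s * (t ^ (2 * (s * s)) * ((Nat.card (GL (Fin s) F) : ℝ) * Ss)) := by ring
    _ ≤ 2 ^ s * (t ^ (2 * ((s + m) * s)) * (t ^ (3 * m ^ 2) * (t ^ (2 * (s * (s + m))) *
          W F s))) := by gcongr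
    _ ≤ 2 ^ s * (t ^ (2 * ((s + m) * s)) * (t ^ (3 * m ^ 2) * (t ^ (2 * (s * (s + m))) *
          (C * t ^ (3 * s ^ 2))))) := by gcongr
    _ = _ := by ring

theorem unit_of_rank {F : Type} [Field F] {n : ℕ} (A : Matrix (Fin n) (Fin n) F)
    (h : A.rank = n) : IsUnit A := by
  obtain ⟨P, Q, P', Q', rfl, hP, hQ⟩ := rank_fact A n h
  exact (IsUnit.of_mul_eq_one_right P' hP).mul (IsUnit.of_mul_eq_one Q' hQ)

theorem sum_split {F : Type} [Field F] [Fintype F] [DecidableEq F] {n : ℕ}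
    (h : Matrix (Fin n) (Fin n) F → ℝ) (h0 : ∀ A, 0 ≤ h A) :
    ∑ A, h A ≤ ∑ s ∈ Finset.range n, ∑ A : Matrix (Fin n) (Fin n) F with A.rank = s, h A +
      ∑ g : GL (Fin n) F, h g.1 := by
  classical
  have hr : ∀ A ∈ (Finset.univ : Finset (Matrix (Fin n) (Fin n) F)),
      A.rank ∈ Finset.range (n + 1) := by
    intro A _
    have := A.rank_le_width
    rw [Finset.mem_range]; omega
  rw [← Finset.sum_fiberwise_of_maps_to hr, Finset.sum_range_succ]
  gcongr
  have : ∑ g : GL (Fin n) F, h g.1 = ∑ A ∈ (Finset.univ : Finset (GL (Fin n) F)).image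
      (fun g => g.1), h A := by
    rw [Finset.sum_image (fun _ _ _ _ h => Units.ext h)]
  rw [this]
  apply Finset.sum_le_sum_of_subset_of_nonneg
  · intro A hA
    obtain ⟨g, hg⟩ := unit_of_rank A (Finset.mem_filter.1 hA).2
    exact Finset.mem_image.2 ⟨g, Finset.mem_univ _, hg⟩
  · intros; exact h0 _

theorem W_bound (n : ℕ) : ∃ C : ℝ, 0 ≤ C ∧ ∀ (F : Type) [Field F] [Fintype F] [DecidableEq F],
    (2 : F) ≠ 0 → W F n ≤ C * √(Fintype.card F : ℝ) ^ (3 * n ^ 2) := by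
  induction n using Nat.strong_induction_on with
  | _ n ih =>
  choose! C hC0 hC using ih
  refine ⟨∑ s ∈ Finset.range n, 2 ^ s * C s + (2 ^ n) ^ n, ?_, ?_⟩
  · apply add_nonneg
    · apply Finset.sum_nonneg
      intro s hs
      have := hC0 s (Finset.mem_range.1 hs)
      positivity
    · positivity
  · intro F _ _ _ h2
    have ht := sqrt_ge (F := F)
    rw [W, add_mul, Finset.sum_mul]
    refine (sum_split _ (fun A => by positivity)).trans ?_
    apply add_le_add
    · apply Finset.sum_le_sum
      intro s hs
      have hs := Finset.mem_range.1 hs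
      refine (rank_sum hs.le (C s) (hC s hs F h2)).trans ?_
      have := hC0 s hs
      exact mul_le_mul_of_nonneg_left (pow_le_pow_right₀ ht (by omega)) (by positivity)
    · exact GL_weak h2 n

theorem main_bound {n : ℕ} (hn : 3 ≤ n) : ∃ C : ℝ, 0 ≤ C ∧
    ∀ (F : Type) [Field F] [Fintype F] [DecidableEq F],
    (2 : F) ≠ 0 → 2 * n ≤ Fintype.card F →
    ∑ A : Matrix (Fin n) (Fin n) F with A ≠ 0, √(Fintype.card F : ℝ) ^ (3 * td 1 A) ≤
      C * √(Fintype.card F : ℝ) ^ (3 * n ^ 2 - 2 * (n - 1)) := by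
  choose C hC0 hC using W_bound
  refine ⟨∑ s ∈ Finset.range n, 2 ^ s * C s + 3 * (2 ^ n) ^ n, ?_, ?_⟩
  · apply add_nonneg
    · apply Finset.sum_nonneg
      intro s _
      have := hC0 s
      positivity
    · positivity
  · intro F _ _ _ h2 hq
    have ht := sqrt_ge (F := F)
    rw [add_mul, Finset.sum_mul, Finset.sum_filter]
    refine (sum_split _ (fun A => by split_ifs <;> positivity)).trans ?_
    apply add_le_add
    · apply Finset.sum_le_sum
      intro s hs
      have hs := Finset.mem_range.1 hs
      have := hC0 s
      rcases Nat.eq_zero_or_pos s with rfl | hs0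
      · rw [Finset.sum_eq_zero]
        · positivity
        · intro A hA
          obtain ⟨P, Q, -, -, rfl, -, -⟩ := rank_fact A 0 (Finset.mem_filter.1 hA).2
          have : P * Q = 0 := by ext i j; simp [Matrix.mul_apply]
          simp [this]
      · refine le_trans (Finset.sum_le_sum (g := fun A => √(Fintype.card F : ℝ) ^ (3 * td 1 A)) ?_)
          ((rank_sum hs.le (C s) (hC s F h2)).trans ?_)
        · intro A _
          split_ifs
          · exact le_rfl
          · positivity
        · refine mul_le_mul_of_nonneg_left (pow_le_pow_right₀ ht ?_) (by positivity)
          obtain ⟨m, rfl⟩ := Nat.exists_eq_add_of_lt hs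
          obtain ⟨k, rfl⟩ := Nat.exists_eq_add_of_lt hs0
          have e1 : 0 + k + 1 + m + 1 - (0 + k + 1) = m + 1 := by omega
          rw [e1]
          have : 0 + k + 1 + m + 1 - 1 ≤ (0 + k + 1) * (m + 1) := by
            have : (0 + k + 1) * (m + 1) = k * m + k + m + 1 := by ring
            omega
          omega
    · refine le_trans (Finset.sum_le_sum (g := fun g : GL (Fin n) F =>
        √(Fintype.card F : ℝ) ^ (3 * td 1 g.1)) ?_) (GL_strong h2 hn hq)
      intro A _
      split_ifs
      · exact le_rfl
      · positivity

theorem td_ne_zero {F : Type} [Field F] (h2 : (2 : F) ≠ 0) {n : ℕ} (hn : 3 ≤ n)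
    (A : Matrix (Fin n) (Fin n) F) (hA : A ≠ 0) : td 1 A + 2 * n ≤ n ^ 2 + 2 := by
  by_cases h : ∃ a : F, A = a • (1 : Matrix (Fin n) (Fin n) F)
  · obtain ⟨a, rfl⟩ := h
    have ha : a ≠ 0 := by rintro rfl; simp at hA
    have : tw 1 (a • (1 : Matrix (Fin n) (Fin n) F)) = ⊥ := by
      rw [eq_bot_iff]
      intro X hX
      have h := mem_anti.1 hX
      have h' : (2 * a) • X = 0 := by
        rw [mul_smul, two_smul]; simpa using h
      simpa [h2, ha] using h'
    rw [td, this, finrank_bot]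
    nlinarith
  · exact td_le 1 one_ne_zero A h

end Falc

namespace Falc

theorem power_bound {F : Type} [Field F] [Fintype F] [DecidableEq F] (h2 : (2 : F) ≠ 0) {n : ℕ}
    (hn : 3 ≤ n) (k : ℕ) :
    ∑ A : Matrix (Fin n) (Fin n) F with A ≠ 0, √(Fintype.card F : ℝ) ^ ((3 + k) * (n ^ 2 + td 1 A)) ≤
      √(Fintype.card F : ℝ) ^ (k * (2 * n ^ 2 + 2 - 2 * n) + 3 * n ^ 2) *
      ∑ A : Matrix (Fin n) (Fin n) F with A ≠ 0, √(Fintype.card F : ℝ) ^ (3 * td 1 A) := by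
  rw [Finset.mul_sum]
  apply Finset.sum_le_sum
  intro A hA
  rw [← pow_add]
  apply pow_le_pow_right₀ sqrt_ge
  have h := td_ne_zero h2 hn A (Finset.mem_filter.1 hA).2
  have h1 : n ^ 2 + td 1 A ≤ 2 * n ^ 2 + 2 - 2 * n := by omega
  have h3 := Nat.mul_le_mul_left k h1
  calc (3 + k) * (n ^ 2 + td 1 A) = k * (n ^ 2 + td 1 A) + 3 * n ^ 2 + 3 * td 1 A := by ring
    _ ≤ _ := by omega

end Falc

theorem falconer_general_rank (n r : ℕ) (hn : 3 ≤ n) (hr : 3 ≤ r) (ε : ℝ) (hε : 0 < ε) :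
    ∃ c : ℝ, 0 < c ∧
      ∀ (F : Type) [Field F] [Fintype F],
        Odd (Fintype.card F) →
        ∀ E : Finset (Fin r → Matrix (Fin n) (Fin n) F),
          c * (Fintype.card F : ℝ) ^
              ((r : ℝ) * (n : ℝ) ^ 2 - ((r : ℝ) - 2) * ((n : ℝ) - 1) + ε) < (E.card : ℝ) →
          {T : Matrix (Fin n) (Fin n) F |
              ∃ X ∈ E, ∃ Y ∈ E, ∑ i, (X i - Y i) ^ 2 = T} = Set.univ := by
  obtain ⟨C, hC0, hC⟩ := Falc.main_bound hn
  refine ⟨C + 1 + ((2 * n : ℕ) : ℝ) ^ (r * n ^ 2), by positivity, ?_⟩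
  intro F _ _ hodd E hE
  classical
  have h2 := Falc.two_ne_zero_of_odd hodd
  have hq1 : (1 : ℝ) ≤ (Fintype.card F : ℝ) := by exact_mod_cast Fintype.card_pos
  obtain ⟨k, rfl⟩ := Nat.exists_eq_add_of_le hr
  obtain ⟨m, rfl⟩ := Nat.exists_eq_add_of_le' (show 1 ≤ n by omega)
  let M : ℕ := 2 * (m + 1) ^ 2 + (k + 1) * (m ^ 2 + m + 1)
  have hM : (((3 + k : ℕ) : ℝ) * ((m + 1 : ℕ) : ℝ) ^ 2 -
      (((3 + k : ℕ) : ℝ) - 2) * (((m + 1 : ℕ) : ℝ) - 1)) = (M : ℝ) := by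
    simp only [M]; push_cast; ring
  rw [hM] at hE
  have hpow : (Fintype.card F : ℝ) ^ M ≤ (Fintype.card F : ℝ) ^ ((M : ℝ) + ε) := by
    rw [← Real.rpow_natCast]
    exact Real.rpow_le_rpow_of_exponent_le hq1 (by linarith)
  have hE' : (C + 1 + ((2 * (m + 1) : ℕ) : ℝ) ^ ((3 + k) * (m + 1) ^ 2)) *
      (Fintype.card F : ℝ) ^ M < (E.card : ℝ) :=
    lt_of_le_of_lt (mul_le_mul_of_nonneg_left hpow (by positivity)) hE
  have hqM : (1 : ℝ) ≤ (Fintype.card F : ℝ) ^ M := one_le_pow₀ hq1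
  rw [Set.eq_univ_iff_forall]
  intro T
  by_contra hT
  have hno : ∀ X ∈ E, ∀ Y ∈ E, ∑ i, (X i - Y i) ^ 2 ≠ T := by
    intro X hX Y hY h
    exact hT ⟨X, hX, Y, hY, h⟩
  rcases Nat.lt_or_ge (Fintype.card F) (2 * (m + 1)) with hq | hq
  · have h1 : (E.card : ℝ) ≤ ((2 * (m + 1) : ℕ) : ℝ) ^ ((3 + k) * (m + 1) ^ 2) := by
      have h3 : E.card ≤ Fintype.card F ^ ((3 + k) * (m + 1) ^ 2) := by
        refine (Finset.card_le_univ E).trans ?_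
        rw [Fintype.card_pi]
        simp only [Falc.card_mat, Finset.prod_const, Finset.card_univ, Fintype.card_fin]
        rw [← pow_mul, mul_comm, pow_two]
      have h4 := h3.trans (Nat.pow_le_pow_left hq.le _)
      exact_mod_cast h4
    have h5 : ((2 * (m + 1) : ℕ) : ℝ) ^ ((3 + k) * (m + 1) ^ 2) ≤
        (C + 1 + ((2 * (m + 1) : ℕ) : ℝ) ^ ((3 + k) * (m + 1) ^ 2)) *
      (Fintype.card F : ℝ) ^ M := by
      refine le_trans ?_ (le_mul_of_one_le_right (by positivity) hqM)
      linarith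
    linarith
  · have h1 := Falc.analytic E T hno
    have h3 := h1.trans (Falc.power_bound h2 hn k)
    have h4 := hC F h2 hq
    have h5 : (E.card : ℝ) ≤ C * (Fintype.card F : ℝ) ^ M := by
      refine (h3.trans (mul_le_mul_of_nonneg_left h4 (by positivity))).trans_eq ?_
      rw [Falc.card_pow, mul_left_comm, ← pow_add]
      congr 2
      have e1 : 2 * (m + 1) ^ 2 + 2 - 2 * (m + 1) = 2 * (m ^ 2 + m + 1) := by
        have : 2 * (m + 1) ^ 2 + 2 = 2 * (m ^ 2 + m + 1) + 2 * (m + 1) := by ring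
        omega
      have e2 : 3 * (m + 1) ^ 2 - 2 * (m + 1 - 1) = 3 * m ^ 2 + 4 * m + 3 := by
        have : 3 * (m + 1) ^ 2 = 3 * m ^ 2 + 4 * m + 3 + 2 * m := by ring
        omega
      rw [e1, e2]
      simp only [M]
      ring
    have h6 : C * (Fintype.card F : ℝ) ^ M ≤
        (C + 1 + ((2 * (m + 1) : ℕ) : ℝ) ^ ((3 + k) * (m + 1) ^ 2)) *
      (Fintype.card F : ℝ) ^ M := by
      gcongr
      have : (0 : ℝ) ≤ ((2 * (m + 1) : ℕ) : ℝ) ^ ((3 + k) * (m + 1) ^ 2) := by positivity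
      linarith
    linarith
end

section
/- Let r ≥ 3 be an integer. There exists a constant c > 0 such that for every odd prime power q and every T ∈ M_3(𝔽_q), the matrix sphere σ_T ⊆ (M_3(𝔽_q))^r satisfies |#σ_T − q^{9(r−1)}| ≤ c·q^{7r−5}; in particular #σ_T ∼ q^{9r−9} as q → ∞. -/
open scoped BigOperators

/-- The additive character `ψ(X) = exp((2πi/p)·Tr_{F/F_p}(Tr X))` on `n × n` matrices
over a finite field `F` of characteristic `p`. -/
noncomputable def psi (F : Type) [Field F] [Fintype F] {n : ℕ}
    (X : Matrix (Fin n) (Fin n) F) : ℂ :=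
  letI : Algebra (ZMod (ringChar F)) F := ZMod.algebra _ _
  Complex.exp (2 * Real.pi * Complex.I *
    (((Algebra.trace (ZMod (ringChar F)) F X.trace).val : ℂ) / (ringChar F : ℂ)))

/-- The radical `{X : Tr(A(XY+YX)) = 0 for all Y}` of the quadratic form
`X ↦ Tr(AX²)` on `M_n(F)`. -/
def radical (F : Type) [Field F] [Fintype F] {n : ℕ}
    (A : Matrix (Fin n) (Fin n) F) : Submodule F (Matrix (Fin n) (Fin n) F) where
  carrier := {X : Matrix (Fin n) (Fin n) F |
    ∀ Y : Matrix (Fin n) (Fin n) F, (A * (X * Y + Y * X)).trace = 0}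
  zero_mem' := by intro Y; simp
  add_mem' := by
    intro X₁ X₂ h₁ h₂ Y
    have e : A * ((X₁ + X₂) * Y + Y * (X₁ + X₂))
        = A * (X₁ * Y + Y * X₁) + A * (X₂ * Y + Y * X₂) := by noncomm_ring
    show (A * ((X₁ + X₂) * Y + Y * (X₁ + X₂))).trace = 0
    rw [e, Matrix.trace_add, h₁ Y, h₂ Y, add_zero]
  smul_mem' := by
    intro c X h Y
    have e : A * ((c • X) * Y + Y * (c • X)) = c • (A * (X * Y + Y * X)) := by
      rw [smul_mul_assoc, Matrix.mul_smul, ← smul_add, Matrix.mul_smul]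
    show (A * ((c • X) * Y + Y * (c • X))).trace = 0
    rw [e, Matrix.trace_smul, h Y, smul_zero]

/-- The radical invariant `ρ_A`: the `F`-dimension of the radical of `X ↦ Tr(AX²)`. -/
noncomputable def rho (F : Type) [Field F] [Fintype F] {n : ℕ}
    (A : Matrix (Fin n) (Fin n) F) : ℕ :=
  Module.finrank F (radical F A)

/-- The quadratic matrix Gauss sum `G(A,B) = Σ_X ψ(AX² + BX)`. -/
noncomputable def matGaussSum (F : Type) [Field F] [Fintype F] {n : ℕ}
    (A B : Matrix (Fin n) (Fin n) F) : ℂ :=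
  ∑ X : Matrix (Fin n) (Fin n) F, psi F (A * X ^ 2 + B * X)

/-- The matrix sphere `σ_T = {X ∈ M_n(F)^r : X₁² + ⋯ + X_r² = T}`. -/
def matSphere (F : Type) [Field F] [Fintype F] [DecidableEq F] {n : ℕ} (r : ℕ)
    (T : Matrix (Fin n) (Fin n) F) : Finset (Fin r → Matrix (Fin n) (Fin n) F) :=
  Finset.univ.filter (fun X => ∑ i, (X i) ^ 2 = T)

/-- The Fourier transform `f̂(M) = q^{-rn²} Σ_A f(A) conj(ψ(M·A))` on `M_n(F)^r`. -/
noncomputable def matFourier (F : Type) [Field F] [Fintype F] {n r : ℕ}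
    (f : (Fin r → Matrix (Fin n) (Fin n) F) → ℂ)
    (M : Fin r → Matrix (Fin n) (Fin n) F) : ℂ :=
  ((Fintype.card F : ℂ) ^ (r * n ^ 2))⁻¹ *
    ∑ A : Fin r → Matrix (Fin n) (Fin n) F, f A * (starRingEnd ℂ) (psi F (∑ i, M i * A i))

set_option linter.unusedSectionVars false
namespace MS
variable {F : Type} [Field F] [Fintype F] [DecidableEq F]

abbrev M3 (F : Type) := Matrix (Fin 3) (Fin 3) F

/-- number of X anticommuting with A -/
def R (A : M3 F) : ℕ := (Finset.univ.filter fun X : M3 F => A * X + X * A = 0).card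

lemma card_M3 : Fintype.card (M3 F) = Fintype.card F ^ 9 := by
  simp [Matrix, Fintype.card_fun, ← pow_mul]

lemma exists_prim : ∃ ψ : AddChar F ℂ, ψ ≠ 1 := by
  obtain ⟨x, hx⟩ := AddChar.exists_apply_ne_zero (α := F).2 one_ne_zero
  exact ⟨x, fun h => hx (by simp [h])⟩

lemma sum_char (ψ : AddChar F ℂ) (hψ : ψ ≠ 1) (B : M3 F) :
    ∑ A : M3 F, ψ (A * B).trace = if B = 0 then (Fintype.card F : ℂ) ^ 9 else 0 := by
  split_ifs with h
  · subst h
    have := card_M3 (F := F)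
    simp [this]
  · let f : M3 F →+ F :=
      { toFun := fun A => (A * B).trace
        map_zero' := by simp
        map_add' := by intro x y; simp [Matrix.add_mul] }
    have hne : ψ.compAddMonoidHom f ≠ 0 := by
      obtain ⟨x, hx⟩ := AddChar.ne_one_iff.1 hψ
      have : ∃ i j, B i j ≠ 0 := by
        by_contra hc
        push Not at hc
        exact h (by ext i j; simp [hc])
      obtain ⟨i, j, hij⟩ := this
      refine AddChar.ne_one_iff.2 ⟨Matrix.single j i (x / B i j), ?_⟩
      have : f (Matrix.single j i (x / B i j)) = x := by
        simp [f, Matrix.trace_single_mul, hij]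
      simpa [this] using hx
    have := AddChar.sum_eq_zero_iff_ne_zero.2 hne
    simpa [f] using this

noncomputable def G (ψ : AddChar F ℂ) (A : M3 F) : ℂ := ∑ X : M3 F, ψ (A * X ^ 2).trace

lemma G_sq (ψ : AddChar F ℂ) (hψ : ψ ≠ 1) (A : M3 F) :
    ‖G ψ A‖ ^ 2 ≤ (Fintype.card F : ℝ) ^ 9 * R A := by
  have h1 : G ψ A * (starRingEnd ℂ) (G ψ A) = ∑ Z : M3 F, ψ (A * Z ^ 2).trace *
      (if A * Z + Z * A = 0 then (Fintype.card F : ℂ) ^ 9 else 0) := by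
    unfold G
    rw [map_sum, Finset.sum_mul_sum, Finset.sum_comm]
    have : ∀ Y : M3 F, ∑ X : M3 F, ψ (A * X ^ 2).trace * (starRingEnd ℂ) (ψ (A * Y ^ 2).trace)
        = ∑ Z : M3 F, ψ (A * Z ^ 2).trace * ψ (Y * (A * Z + Z * A)).trace := by
      intro Y
      rw [← Equiv.sum_comp (Equiv.addRight Y)]
      refine Finset.sum_congr rfl fun Z _ => ?_
      rw [← AddChar.map_neg_eq_conj, ← AddChar.map_add_eq_mul, ← AddChar.map_add_eq_mul]
      congr 1
      have e : A * (Z + Y) ^ 2 = A * Z ^ 2 + A * Y ^ 2 + A * Z * Y + A * (Y * Z) := by noncomm_ring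
      simp only [Equiv.coe_addRight]
      rw [e]
      simp only [Matrix.trace_add, Matrix.mul_add]
      rw [Matrix.trace_mul_comm Y (A * Z), Matrix.trace_mul_comm A (Y * Z), Matrix.mul_assoc Y Z A]
      ring
    simp_rw [this]
    rw [Finset.sum_comm]
    refine Finset.sum_congr rfl fun Z _ => ?_
    rw [← Finset.mul_sum, sum_char ψ hψ]
  have h2 : ‖G ψ A‖ ^ 2 = ‖G ψ A * (starRingEnd ℂ) (G ψ A)‖ := by
    rw [norm_mul, RCLike.norm_conj, sq]
  rw [h2, h1]
  refine (norm_sum_le _ _).trans ?_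
  have : ∀ Z : M3 F, ‖ψ (A * Z ^ 2).trace *
      (if A * Z + Z * A = 0 then (Fintype.card F : ℂ) ^ 9 else 0)‖ =
      (if A * Z + Z * A = 0 then (Fintype.card F : ℝ) ^ 9 else 0) := by
    intro Z
    split_ifs <;> simp
  simp_rw [this]
  rw [← Finset.sum_filter, Finset.sum_const, nsmul_eq_mul, mul_comm]
  rfl

lemma char_sum {ι : Type} (ψ : AddChar F ℂ) (s : Finset ι) (f : ι → F) :
    ψ (∑ i ∈ s, f i) = ∏ i ∈ s, ψ (f i) := by
  classical
  induction s using Finset.induction_on with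
  | empty => simp
  | insert a s ha ih => rw [Finset.sum_insert ha, Finset.prod_insert ha, AddChar.map_add_eq_mul, ih]

lemma count (ψ : AddChar F ℂ) (hψ : ψ ≠ 1) (r : ℕ) (T : M3 F) :
    (Fintype.card F : ℂ) ^ 9 * ((Finset.univ.filter
      (fun X : Fin r → M3 F => ∑ i, (X i) ^ 2 = T)).card : ℂ) =
    ∑ A : M3 F, ψ (-(A * T).trace) * G ψ A ^ r := by
  have h1 : ∀ A : M3 F, ψ (-(A * T).trace) * G ψ A ^ r =
      ∑ X : Fin r → M3 F, ψ (A * (∑ i, X i ^ 2 - T)).trace := by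
    intro A
    have : G ψ A ^ r = ∑ X : Fin r → M3 F, ∏ i, ψ (A * X i ^ 2).trace := by
      have := Finset.prod_univ_sum (fun _ : Fin r => (Finset.univ : Finset (M3 F)))
        (fun _ X => ψ (A * X ^ 2).trace)
      simp only [Fintype.piFinset_univ, Finset.prod_const, Finset.card_univ, Fintype.card_fin] at this
      exact this
    rw [this, Finset.mul_sum]
    refine Finset.sum_congr rfl fun X _ => ?_
    rw [Matrix.mul_sub, Matrix.trace_sub, Matrix.mul_sum, Matrix.trace_sum, sub_eq_add_neg,
      AddChar.map_add_eq_mul, char_sum, mul_comm]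
  simp_rw [h1]
  rw [Finset.sum_comm]
  simp_rw [sum_char ψ hψ, sub_eq_zero]
  rw [← Finset.sum_filter, Finset.sum_const, nsmul_eq_mul, mul_comm]

lemma error (ψ : AddChar F ℂ) (hψ : ψ ≠ 1) (r : ℕ) (hr : 1 ≤ r) (T : M3 F) :
    (Fintype.card F : ℝ) ^ 9 * |((Finset.univ.filter
      (fun X : Fin r → M3 F => ∑ i, (X i) ^ 2 = T)).card : ℝ) - (Fintype.card F : ℝ) ^ (9 * (r-1))| ≤
    ∑ A ∈ Finset.univ.erase (0 : M3 F), ‖G ψ A‖ ^ r := by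
  have h := count ψ hψ r T
  rw [← Finset.add_sum_erase _ _ (Finset.mem_univ (0 : M3 F))] at h
  have h0 : ψ (-((0 : M3 F) * T).trace) * G ψ 0 ^ r =
      (Fintype.card F : ℂ) ^ 9 * (Fintype.card F : ℂ) ^ (9 * (r-1)) := by
    have := card_M3 (F := F)
    simp [G, this, ← pow_mul, ← pow_add]
    congr 1; omega
  rw [h0] at h
  have h3 : ‖(Fintype.card F : ℂ) ^ 9 * (((Finset.univ.filter
      (fun X : Fin r → M3 F => ∑ i, (X i) ^ 2 = T)).card : ℂ) - (Fintype.card F : ℂ) ^ (9 * (r-1)))‖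
      ≤ ∑ A ∈ Finset.univ.erase (0 : M3 F), ‖G ψ A‖ ^ r := by
    rw [mul_sub, h, add_sub_cancel_left]
    refine (norm_sum_le _ _).trans (Finset.sum_le_sum fun A _ => ?_)
    simp
  refine le_trans (le_of_eq ?_) h3
  rw [norm_mul, norm_pow, Complex.norm_natCast]
  congr 1
  rw [← Real.norm_eq_abs, ← Complex.norm_real]
  push_cast
  rfl
/-- Krylov matrix: columns v, Av, A²v. -/
def kry (A : M3 F) (v : Fin 3 → F) : M3 F :=
  Matrix.of fun i j => ![v i, A.mulVec v i, A.mulVec (A.mulVec v) i] j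

lemma kry_conj (A P M : M3 F) (h : A * P = P * M) (v : Fin 3 → F) :
    kry A (P.mulVec v) = P * kry M v := by
  have h1 : A.mulVec (P.mulVec v) = P.mulVec (M.mulVec v) := by
    simp [Matrix.mulVec_mulVec, h]
  have h2 : A.mulVec (A.mulVec (P.mulVec v)) = P.mulVec (M.mulVec (M.mulVec v)) := by
    rw [h1]; simp only [Matrix.mulVec_mulVec, ← Matrix.mul_assoc, h]
  ext i j
  have e : kry A (P.mulVec v) i j = ![P.mulVec v i, P.mulVec (M.mulVec v) i,
      P.mulVec (M.mulVec (M.mulVec v)) i] j := by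
    unfold kry
    rw [h2, h1]
    rfl
  rw [e]
  fin_cases j <;> rfl

lemma noncyclic_block (h2 : (2 : F) ≠ 0) (t s z α β γ : F)
    (h : ∀ v, (kry (!![0, t, α; 1, s, β; 0, z, γ] : M3 F) v).det = 0) :
    z = 0 ∧ t = γ ^ 2 - s * γ ∧ α = - γ * β := by
  have key : ∀ x y w, (kry (!![0, t, α; 1, s, β; 0, z, γ] : M3 F) ![x, y, w]).det = 0 :=
    fun x y w => h _
  simp only [kry, Matrix.det_fin_three, Matrix.of_apply, Matrix.mulVec, dotProduct,
    Fin.sum_univ_three] at key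
  simp at key
  have hz : z = 0 := by
    have := key 1 0 0
    simp at this
    exact this
  subst hz
  have k0 := key 0 0 1
  have k1 := key 1 0 1
  have k2 := key (-1) 0 1
  have ht : t = γ ^ 2 - s * γ := by
    have : 2 * (t - (γ ^ 2 - s * γ)) = 0 := by linear_combination -k1 - k2 + 2 * k0
    have := (mul_eq_zero.1 this).resolve_left h2
    linear_combination this
  subst ht
  refine ⟨rfl, rfl, ?_⟩
  have e1 : (α + γ * β) * (α + (s - γ) * β) = 0 := by linear_combination k0
  have e2 : (s - 2 * γ) * (α + γ * β) = 0 := by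
    have : 2 * ((s - 2 * γ) * (α + γ * β)) = 0 := by linear_combination k1 - k2
    exact (mul_eq_zero.1 this).resolve_left h2
  by_contra hne
  have hne' : α + γ * β ≠ 0 := fun h' => hne (by linear_combination h')
  have a1 := (mul_eq_zero.1 e1).resolve_left hne'
  have a2 := (mul_eq_zero.1 e2).resolve_right hne'
  exact hne' (by linear_combination a1 - β * a2)

lemma dichotomy (h2 : (2 : F) ≠ 0) (A : M3 F) (h : ∀ v, (kry A v).det = 0) :
    ∃ (g : F) (u v : Fin 3 → F), A = g • (1 : M3 F) + Matrix.vecMulVec u v := by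
  by_cases hs : ∃ w z : Fin 3 → F, (Matrix.of fun i j => ![w i, A.mulVec w i, z i] j : M3 F).det ≠ 0
  · obtain ⟨w, z, hP⟩ := hs
    set P : M3 F := Matrix.of fun i j => ![w i, A.mulVec w i, z i] j with hPd
    have hu : IsUnit P.det := isUnit_iff_ne_zero.2 hP
    set M := P⁻¹ * A * P with hM
    have hAP : A * P = P * M := by
      rw [hM, ← Matrix.mul_assoc, ← Matrix.mul_assoc, Matrix.mul_nonsing_inv _ hu, Matrix.one_mul]
    have hc : M.col 0 = Pi.single 1 1 := by
      have e : (A * P).col 0 = P.mulVec (Pi.single 1 1) := by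
        ext i
        rw [Matrix.mulVec_single_one]
        rfl
      have e2 : P.mulVec (M.col 0) = P.mulVec (Pi.single 1 1) := by
        rw [← e, hAP]; ext i; simp [Matrix.mul_apply, Matrix.mulVec, dotProduct]
      have := congrArg (P⁻¹).mulVec e2
      simpa only [Matrix.mulVec_mulVec, Matrix.nonsing_inv_mul _ hu, Matrix.one_mulVec] using this
    have hM' : M = !![0, M 0 1, M 0 2; 1, M 1 1, M 1 2; 0, M 2 1, M 2 2] := by
      have c0 := congrFun hc 0
      have c1 := congrFun hc 1
      have c2 := congrFun hc 2
      simp at c0 c1 c2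
      ext i j
      fin_cases i <;> fin_cases j <;> simp [c0, c1, c2]
    have hk : ∀ v, (kry M v).det = 0 := by
      intro v
      have := h (P.mulVec v)
      rw [kry_conj A P M hAP, Matrix.det_mul] at this
      exact (mul_eq_zero.1 this).resolve_left hP
    rw [hM'] at hk
    obtain ⟨a, b, c⟩ := noncyclic_block h2 _ _ _ _ _ _ hk
    set g := M 2 2
    have hMM : M = g • (1 : M3 F) + Matrix.vecMulVec ![-g, 1, 0] ![1, M 1 1 - g, M 1 2] := by
      rw [hM', a, b, c]
      ext i j
      fin_cases i <;> fin_cases j <;> simp [Matrix.vecMulVec, g] <;> ring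
    refine ⟨g, P.mulVec ![-g, 1, 0], Matrix.vecMul ![1, M 1 1 - g, M 1 2] P⁻¹, ?_⟩
    have : A = P * M * P⁻¹ := by
      rw [← hAP, Matrix.mul_assoc, Matrix.mul_nonsing_inv _ hu, Matrix.mul_one]
    rw [← Matrix.vecMulVec_mul, ← Matrix.mul_vecMulVec, this]
    conv_lhs => rw [hMM]
    rw [Matrix.mul_add, Matrix.add_mul]
    simp [Matrix.mul_nonsing_inv _ hu]
  · push Not at hs
    have key : ∀ x y w a b c, (Matrix.of fun i j => ![![x,y,w] i, A.mulVec ![x,y,w] i, ![a,b,c] i] j : M3 F).det = 0 :=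
      fun x y w a b c => hs _ _
    simp only [Matrix.det_fin_three, Matrix.of_apply, Matrix.mulVec, dotProduct,
      Fin.sum_univ_three] at key
    simp at key
    have a1 := key 1 0 0 0 1 0
    have a2 := key 1 0 0 0 0 1
    have a3 := key 0 1 0 1 0 0
    have a4 := key 0 1 0 0 0 1
    have a5 := key 0 0 1 1 0 0
    have a6 := key 0 0 1 0 1 0
    have a7 := key 1 1 0 0 0 1
    have a8 := key 1 0 1 0 1 0
    simp at a1 a2 a3 a4 a5 a6 a7 a8
    refine ⟨A 0 0, 0, 0, ?_⟩
    ext i j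
    simp only [a1, a2, a3, a4, a5, a6] at a7 a8
    simp at a7 a8
    fin_cases i <;> fin_cases j <;> simp [a1, a2, a3, a4, a5, a6]
    · linear_combination a7
    · linear_combination -a8
lemma R_le {B : Type} [AddCommGroup B] (A : M3 F) (f : M3 F →+ B) (t : Finset B)
    (ht : ∀ X, A * X + X * A = 0 → f X ∈ t)
    (h : ∀ X, A * X + X * A = 0 → f X = 0 → X = 0) : R A ≤ t.card := by
  refine Finset.card_le_card_of_injOn f (fun X hX => ht X (by simpa using hX)) ?_
  intro X hX Y hY e
  simp only [Finset.coe_filter, Finset.mem_univ, true_and, Set.mem_ofPred_eq] at hX hY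
  refine sub_eq_zero.1 (h (X - Y) ?_ (by rw [map_sub, e, sub_self]))
  have : A * (X - Y) + (X - Y) * A = (A * X + X * A) - (A * Y + Y * A) := by noncomm_ring
  rw [this, hX, hY, sub_zero]

lemma sum3 (f : Fin 3 → F) (k : Fin 3) : ∑ i, f i = f k + f (k + 1) + f (k + 2) := by
  rw [Fin.sum_univ_three]
  fin_cases k
  · simp
  · show f 0 + f 1 + f 2 = f 1 + f 2 + f 0
    ring
  · show f 0 + f 1 + f 2 = f 2 + f 0 + f 1
    ring

lemma all3 {p : Fin 3 → Prop} (k : Fin 3) (h0 : p k) (h1 : p (k + 1)) (h2 : p (k + 2)) :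
    ∀ i, p i := by
  intro i
  fin_cases k <;> fin_cases i <;> assumption

lemma det_coord (n w : Fin 3 → F) (k : Fin 3) (hn : n k ≠ 0) (h : n ⬝ᵥ w = 0)
    (h1 : w (k + 1) = 0) (h2 : w (k + 2) = 0) : w = 0 := by
  rw [dotProduct, sum3 _ k, h1, h2] at h
  have h0 : w k = 0 := by simpa [hn] using h
  exact funext (all3 k h0 h1 h2)

lemma card_perp (n : Fin 3 → F) (hn : n ≠ 0) :
    (Finset.univ.filter fun w : Fin 3 → F => n ⬝ᵥ w = 0).card ≤ Fintype.card F ^ 2 := by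
  obtain ⟨k, hk⟩ := Function.ne_iff.1 hn
  have : Fintype.card F ^ 2 = (Finset.univ : Finset (F × F)).card := by
    simp [sq]
  rw [this]
  refine Finset.card_le_card_of_injOn (fun w => (w (k+1), w (k+2))) (by simp) ?_
  intro X hX Y hY e
  simp only [Finset.coe_filter, Finset.mem_univ, true_and, Set.mem_ofPred_eq] at hX hY
  simp only [Prod.mk.injEq] at e
  refine sub_eq_zero.1 (det_coord n (X - Y) k hk (by simp [dotProduct_sub, hX, hY]) ?_ ?_)
  · simp [e.1]
  · simp [e.2]

def bb (A : M3 F) : F := A 0 0 * A 1 1 - A 0 1 * A 1 0 + (A 0 0 * A 2 2 - A 0 2 * A 2 0)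
  + (A 1 1 * A 2 2 - A 1 2 * A 2 1)

def NN (A : M3 F) : M3 F := A.trace • (A * A) + A.det • (1 : M3 F)

lemma cayley (A : M3 F) : A * A * A + bb A • A = NN A := by
  ext i j
  fin_cases i <;> fin_cases j <;>
    simp [NN, bb, Matrix.mul_apply, Fin.sum_univ_three, Matrix.det_fin_three, Matrix.trace] <;> ring

lemma det_NN (A : M3 F) : (NN A).det = A.det * (A.trace * bb A - A.det) ^ 2 := by
  have e : NN A = A * (A * A + bb A • 1) := by
    rw [← cayley, Matrix.mul_add]; simp [Matrix.mul_assoc]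
  rw [e, Matrix.det_mul]
  congr 1
  simp [bb, Matrix.mul_apply, Fin.sum_univ_three, Matrix.det_fin_three, Matrix.trace]
  ring

lemma NN_mul (h2 : (2 : F) ≠ 0) (A X : M3 F) (h : A * X + X * A = 0) : NN A * X = 0 := by
  have h1 : A * X = - (X * A) := eq_neg_of_add_eq_zero_left h
  have hA2 : A * A * X = X * (A * A) := by
    rw [Matrix.mul_assoc, h1, Matrix.mul_neg, ← Matrix.mul_assoc, h1, Matrix.neg_mul, neg_neg,
      Matrix.mul_assoc]
  have hA3 : A * A * A * X = - (X * (A * A * A)) := by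
    rw [Matrix.mul_assoc, h1, Matrix.mul_neg, ← Matrix.mul_assoc, hA2, Matrix.mul_assoc]
  have e1 : NN A * X = - (X * NN A) := by
    rw [← cayley, Matrix.add_mul, hA3, Matrix.smul_mul, h1, Matrix.mul_add, Matrix.mul_smul]
    simp [add_comm]
  have e2 : NN A * X = X * NN A := by
    unfold NN
    rw [Matrix.add_mul, Matrix.mul_add, Matrix.smul_mul, Matrix.mul_smul, hA2]
    simp
  have e3 : (2 : F) • (NN A * X) = 0 := by
    rw [two_smul]; nth_rw 1 [e1]; rw [e2]; simp
  exact (smul_eq_zero.1 e3).resolve_left h2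

def mvHom (v : Fin 3 → F) : M3 F →+ (Fin 3 → F) where
  toFun X := X.mulVec v
  map_zero' := by simp
  map_add' := by intro X Y; simp [Matrix.add_mulVec]

lemma cyc_inj (A X : M3 F) (v : Fin 3 → F) (hv : (kry A v).det ≠ 0) (h : A * X + X * A = 0)
    (h0 : X.mulVec v = 0) : X = 0 := by
  have h1 : X * A = - (A * X) := eq_neg_of_add_eq_zero_right h
  have a1 : X.mulVec (A.mulVec v) = 0 := by
    rw [Matrix.mulVec_mulVec, h1, Matrix.neg_mulVec, ← Matrix.mulVec_mulVec, h0]; simp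
  have a2 : X.mulVec (A.mulVec (A.mulVec v)) = 0 := by
    rw [Matrix.mulVec_mulVec, h1, Matrix.neg_mulVec, ← Matrix.mulVec_mulVec, a1]; simp
  have e : X * kry A v = 0 := by
    ext i j
    fin_cases j
    · exact congrFun h0 i
    · exact congrFun a1 i
    · exact congrFun a2 i
  have hu : IsUnit (kry A v).det := isUnit_iff_ne_zero.2 hv
  rw [← Matrix.mul_one X, ← Matrix.mul_nonsing_inv _ hu, ← Matrix.mul_assoc, e, Matrix.zero_mul]

lemma cyclic_case (h2 : (2 : F) ≠ 0) (A : M3 F) (v : Fin 3 → F) (hv : (kry A v).det ≠ 0) :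
    R A ≤ 1 ∨ (R A ≤ Fintype.card F ^ 2 ∧ A.det * (A.trace * bb A - A.det) = 0) ∨
      (R A ≤ Fintype.card F ^ 3 ∧ A.trace = 0 ∧ A.det = 0) := by
  have hN : ∀ X, A * X + X * A = 0 → (NN A).mulVec (mvHom v X) = 0 := by
    intro X hX
    show (NN A).mulVec (X.mulVec v) = 0
    rw [Matrix.mulVec_mulVec, NN_mul h2 A X hX]; simp
  have hi : ∀ X, A * X + X * A = 0 → mvHom v X = 0 → X = 0 := fun X hX h0 =>
    cyc_inj A X v hv hX h0
  by_cases hd : (NN A).det = 0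
  · right
    by_cases hz : NN A = 0
    · right
      refine ⟨?_, ?_⟩
      · refine (R_le A (mvHom v) Finset.univ (by simp) hi).trans (by simp)
      · have e : (kry A v).mulVec ![A.det, 0, A.trace] = 0 := by
          have := congrArg (fun B => B.mulVec v) hz
          simp only [NN, Matrix.add_mulVec, Matrix.smul_mulVec, Matrix.one_mulVec,
            Matrix.zero_mulVec, ← Matrix.mulVec_mulVec] at this
          ext i
          have := congrFun this i
          simp only [Pi.add_apply, Pi.smul_apply, smul_eq_mul, Pi.zero_apply] at this
          have e' : (kry A v).mulVec ![A.det, 0, A.trace] i = v i * A.det + A.mulVec v i * 0 +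
              A.mulVec (A.mulVec v) i * A.trace := by
            rw [Matrix.mulVec, dotProduct, Fin.sum_univ_three]
            rfl
          rw [e', Pi.zero_apply]
          linear_combination this
        have := Matrix.eq_zero_of_mulVec_eq_zero hv e
        exact ⟨by simpa using congrFun this 2, by simpa using congrFun this 0⟩
    · left
      constructor
      · have : ∃ i, NN A i ≠ 0 := by
          by_contra hc; push Not at hc
          exact hz (by ext i j; simp [hc i])
        obtain ⟨i, hi'⟩ := this
        refine (R_le A (mvHom v) _ (fun X hX => ?_) hi).trans (card_perp _ hi')
        rw [Finset.mem_filter]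
        exact ⟨Finset.mem_univ _, congrFun (hN X hX) i⟩
      · rw [det_NN] at hd
        rcases mul_eq_zero.1 hd with h | h
        · simp [h]
        · simp [pow_eq_zero_iff (two_ne_zero) |>.1 h]
  · left
    refine (R_le A (mvHom v) {0} (fun X hX => ?_) hi).trans (by simp)
    simpa using Matrix.eq_zero_of_mulVec_eq_zero hd (hN X hX)

section rankone
variable (g : F) (u v : Fin 3 → F) 

lemma eqn (X : M3 F) (h : (g • (1 : M3 F) + Matrix.vecMulVec u v) * X + X * (g • (1 : M3 F) + Matrix.vecMulVec u v) = 0)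
    (i j : Fin 3) : 2 * g * X i j + u i * Matrix.vecMul v X j + X.mulVec u i * v j = 0 := by
  have := congrFun (congrFun h i) j
  rw [Matrix.add_mul, Matrix.mul_add, Matrix.vecMulVec_mul, Matrix.mul_vecMulVec] at this
  simp [Matrix.vecMulVec] at this
  linear_combination this

lemma eqn1 (X : M3 F) (h : (g • (1 : M3 F) + Matrix.vecMulVec u v) * X + X * (g • (1 : M3 F) + Matrix.vecMulVec u v) = 0)
    (j : Fin 3) : (2 * g + v ⬝ᵥ u) * Matrix.vecMul v X j + (v ⬝ᵥ X.mulVec u) * v j = 0 := by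
  have e := fun i => eqn g u v X h i j
  have e0 := e 0
  have e1 := e 1
  have e2 := e 2
  simp only [Matrix.vecMul, Matrix.mulVec, dotProduct, Fin.sum_univ_three] at *
  linear_combination v 0 * e0 + v 1 * e1 + v 2 * e2

lemma eqn2 (X : M3 F) (h : (g • (1 : M3 F) + Matrix.vecMulVec u v) * X + X * (g • (1 : M3 F) + Matrix.vecMulVec u v) = 0)
    (i : Fin 3) : (2 * g + v ⬝ᵥ u) * X.mulVec u i + (v ⬝ᵥ X.mulVec u) * u i = 0 := by
  have e := fun j => eqn g u v X h i j
  have e0 := e 0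
  have e1 := e 1
  have e2 := e 2
  simp only [Matrix.vecMul, Matrix.mulVec, dotProduct, Fin.sum_univ_three] at *
  linear_combination u 0 * e0 + u 1 * e1 + u 2 * e2

lemma rank_generic (h2 : (2 : F) ≠ 0) (hg : g ≠ 0) (ht : 2 * g + v ⬝ᵥ u ≠ 0) :
    R (g • (1 : M3 F) + Matrix.vecMulVec u v) ≤ Fintype.card F ^ 3 := by
  let f : M3 F →+ F :=
    { toFun := fun X => v ⬝ᵥ X.mulVec u
      map_zero' := by simp
      map_add' := by intro X Y; simp [Matrix.add_mulVec, dotProduct_add] }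
  refine (R_le _ f Finset.univ (by simp) ?_).trans ?_
  · intro X hX h0
    have h0 : v ⬝ᵥ X.mulVec u = 0 := h0
    have e1 := eqn1 g u v X hX
    have e2 := eqn2 g u v X hX
    have e := eqn g u v X hX
    simp only [h0, zero_mul, add_zero, mul_eq_zero, ht, false_or] at e1 e2
    ext i j
    simpa [e1, e2, h2, hg] using e i j
  · rw [Finset.card_univ]
    exact Nat.le_self_pow (by norm_num) _

lemma rank_special (h2 : (2 : F) ≠ 0) (hg : g ≠ 0) (ht : 2 * g + v ⬝ᵥ u = 0) :
    R (g • (1 : M3 F) + Matrix.vecMulVec u v) ≤ Fintype.card F ^ 4 := by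
  have hv : v ≠ 0 := by
    rintro rfl
    simp [h2, hg] at ht
  have hu : u ≠ 0 := by
    rintro rfl
    simp [h2, hg] at ht
  let f : M3 F →+ (Fin 3 → F) × (Fin 3 → F) :=
    { toFun := fun X => (Matrix.vecMul v X, X.mulVec u)
      map_zero' := by simp
      map_add' := by intro X Y; simp [Matrix.add_mulVec, Matrix.vecMul_add] }
  refine (R_le _ f ((Finset.univ.filter fun w : Fin 3 → F => u ⬝ᵥ w = 0) ×ˢ
    (Finset.univ.filter fun w : Fin 3 → F => v ⬝ᵥ w = 0)) ?_ ?_).trans ?_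
  · intro X hX
    obtain ⟨k, hk⟩ := Function.ne_iff.1 hv
    have e1 := eqn1 g u v X hX k
    rw [ht, zero_mul, zero_add] at e1
    have hm := (mul_eq_zero.1 e1).resolve_right hk
    simp only [Finset.mem_product, Finset.mem_filter, Finset.mem_univ, true_and]
    refine ⟨?_, hm⟩
    show u ⬝ᵥ Matrix.vecMul v X = 0
    rw [dotProduct_comm, ← Matrix.dotProduct_mulVec]
    exact hm
  · intro X hX h0
    have h1 : Matrix.vecMul v X = 0 := congrArg Prod.fst h0
    have h1' : X.mulVec u = 0 := congrArg Prod.snd h0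
    have e := eqn g u v X hX
    ext i j
    simpa [h1, h1', h2, hg] using e i j
  · rw [Finset.card_product, show Fintype.card F ^ 4 = Fintype.card F ^ 2 * Fintype.card F ^ 2 by ring]
    exact Nat.mul_le_mul (card_perp u hu) (card_perp v hv)

lemma rank_one_inj (X : M3 F) (i j : Fin 3) (hi : u i ≠ 0) (hj : v j ≠ 0)
    (hu : X.mulVec u = 0) (hv : Matrix.vecMul v X = 0)
    (h1 : X (j+1) (i+1) = 0) (h2 : X (j+1) (i+2) = 0) (h3 : X (j+2) (i+1) = 0)
    (h4 : X (j+2) (i+2) = 0) : X = 0 := by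
  have r1 : X (j+1) = 0 := det_coord u _ i hi (by rw [dotProduct_comm]; exact congrFun hu _) h1 h2
  have r2 : X (j+2) = 0 := det_coord u _ i hi (by rw [dotProduct_comm]; exact congrFun hu _) h3 h4
  ext k l
  exact congrFun (det_coord v (fun k => X k l) j hj (congrFun hv l) (congrFun r1 l) (congrFun r2 l)) k

lemma rank_one (h2 : (2 : F) ≠ 0) (hu : u ≠ 0) (hv : v ≠ 0) (ht : v ⬝ᵥ u ≠ 0) :
    R (Matrix.vecMulVec u v) ≤ Fintype.card F ^ 4 := by
  obtain ⟨i, hi⟩ := Function.ne_iff.1 hu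
  obtain ⟨j, hj⟩ := Function.ne_iff.1 hv
  let f : M3 F →+ (Fin 4 → F) :=
    { toFun := fun X => ![X (j+1) (i+1), X (j+1) (i+2), X (j+2) (i+1), X (j+2) (i+2)]
      map_zero' := by ext k; fin_cases k <;> simp
      map_add' := by intro X Y; ext k; fin_cases k <;> simp }
  refine (R_le _ f Finset.univ (by simp) ?_).trans (by simp)
  intro X hX h0
  have hX' : ((0 : F) • (1 : M3 F) + Matrix.vecMulVec u v) * X +
      X * ((0 : F) • (1 : M3 F) + Matrix.vecMulVec u v) = 0 := by simpa using hX
  have e1 := eqn1 0 u v X hX'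
  have e2 := eqn2 0 u v X hX'
  have hm : v ⬝ᵥ X.mulVec u = 0 := by
    have : 2 * (v ⬝ᵥ u) * (v ⬝ᵥ X.mulVec u) = 0 := by
      have a0 := e2 0
      have a1 := e2 1
      have a2 := e2 2
      simp only [dotProduct, Fin.sum_univ_three] at *
      linear_combination v 0 * a0 + v 1 * a1 + v 2 * a2
    simpa [h2, ht] using this
  simp only [hm, mul_zero, zero_add, zero_mul, add_zero, mul_eq_zero, ht, false_or] at e1 e2
  exact rank_one_inj u v X i j hi hj (funext e2) (funext e1) (congrFun h0 0) (congrFun h0 1)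
    (congrFun h0 2) (congrFun h0 3)

lemma rank_nil (hu : u ≠ 0) (hv : v ≠ 0) :
    R (Matrix.vecMulVec u v) ≤ Fintype.card F ^ 5 := by
  obtain ⟨i, hi⟩ := Function.ne_iff.1 hu
  obtain ⟨j, hj⟩ := Function.ne_iff.1 hv
  let f : M3 F →+ (Fin 5 → F) :=
    { toFun := fun X => ![X (j+1) (i+1), X (j+1) (i+2), X (j+2) (i+1), X (j+2) (i+2),
        Matrix.vecMul v X j]
      map_zero' := by ext k; fin_cases k <;> simp
      map_add' := by intro X Y; ext k; fin_cases k <;> simp [Matrix.vecMul_add] }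
  refine (R_le _ f Finset.univ (by simp) ?_).trans (by simp)
  intro X hX h0
  have hX' : ((0 : F) • (1 : M3 F) + Matrix.vecMulVec u v) * X +
      X * ((0 : F) • (1 : M3 F) + Matrix.vecMulVec u v) = 0 := by simpa using hX
  have e := eqn 0 u v X hX'
  have h4 : Matrix.vecMul v X j = 0 := congrFun h0 4
  have hXu : X.mulVec u = 0 := by
    ext k
    have := e k j
    rw [h4] at this
    simp only [mul_zero, zero_mul, zero_add, mul_eq_zero] at this
    exact this.resolve_right hj
  have hvX : Matrix.vecMul v X = 0 := by
    ext k
    have := e i k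
    rw [hXu] at this
    simp only [mul_zero, zero_mul, zero_add, mul_eq_zero, Pi.zero_apply, add_zero] at this
    exact this.resolve_left hi
  exact rank_one_inj u v X i j hi hj hXu hvX (congrFun h0 0) (congrFun h0 1)
    (congrFun h0 2) (congrFun h0 3)
end rankone
lemma card_roots (S : Finset F) (a b c : F) (h : a ≠ 0 ∨ b ≠ 0)
    (hS : ∀ x ∈ S, a * x ^ 2 + b * x + c = 0) : S.card ≤ 2 := by
  by_contra hc
  obtain ⟨x, y, z, hx, hy, hz, hxy, hxz, hyz⟩ := Finset.two_lt_card_iff.1 (not_le.1 hc)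
  have ex := hS x hx
  have ey := hS y hy
  have ez := hS z hz
  have e1 : a * (x + y) + b = 0 := by
    have : (x - y) * (a * (x + y) + b) = 0 := by linear_combination ex - ey
    exact (mul_eq_zero.1 this).resolve_left (sub_ne_zero.2 hxy)
  have e2 : a * (x + z) + b = 0 := by
    have : (x - z) * (a * (x + z) + b) = 0 := by linear_combination ex - ez
    exact (mul_eq_zero.1 this).resolve_left (sub_ne_zero.2 hxz)
  have ha : a = 0 := by
    have : (y - z) * a = 0 := by linear_combination e1 - e2
    exact (mul_eq_zero.1 this).resolve_left (sub_ne_zero.2 hyz)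
  subst ha
  simp at e1
  simp [e1] at h

lemma card_quad (S : Finset (M3 F)) (m : ℕ) (f : M3 F → Fin m → F) (p : M3 F → F)
    (α β δ : (Fin m → F) → F)
    (hinj : ∀ A ∈ S, ∀ B ∈ S, f A = f B → p A = p B → A = B)
    (hq : ∀ A ∈ S, (α (f A) ≠ 0 ∨ β (f A) ≠ 0) ∧ α (f A) * p A ^ 2 + β (f A) * p A + δ (f A) = 0) :
    S.card ≤ 2 * Fintype.card F ^ m := by
  have : Fintype.card F ^ m = (Finset.univ : Finset (Fin m → F)).card := by simp
  rw [this]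
  refine Finset.card_le_mul_card_image_of_maps_to (f := f) (by simp) 2 ?_
  intro b _
  rcases (S.filter fun A => f A = b).eq_empty_or_nonempty with h | ⟨A, hA⟩
  · simp [h]
  · rw [Finset.mem_filter] at hA
    have hab := (hq A hA.1).1
    rw [hA.2] at hab
    rw [← Finset.card_image_of_injOn (f := p)]
    · refine card_roots _ (α b) (β b) (δ b) hab ?_
      intro x hx
      obtain ⟨B, hB, rfl⟩ := Finset.mem_image.1 hx
      rw [Finset.mem_filter] at hB
      have := (hq B hB.1).2
      rwa [hB.2] at this
    · intro X hX Y hY e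
      rw [Finset.mem_coe, Finset.mem_filter] at hX hY
      exact hinj X hX.1 Y hY.1 (hX.2.trans hY.2.symm) e

def f00 (A : M3 F) : Fin 8 → F := ![A 0 1, A 0 2, A 1 0, A 1 2, A 2 0, A 2 1, A 1 1, A 2 2]
def f11 (A : M3 F) : Fin 8 → F := ![A 0 1, A 0 2, A 1 0, A 1 2, A 2 0, A 2 1, A 0 0, A 2 2]
def f22 (A : M3 F) : Fin 8 → F := ![A 0 1, A 0 2, A 1 0, A 1 2, A 2 0, A 2 1, A 0 0, A 1 1]
def f7a (A : M3 F) : Fin 7 → F := ![A 0 1, A 0 2, A 1 0, A 1 2, A 2 0, A 2 1, A 0 0]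
def f7b (A : M3 F) : Fin 7 → F := ![A 0 1, A 0 2, A 1 0, A 1 2, A 2 0, A 2 1, A 1 1]

lemma ext9 (A B : M3 F) (h01 : A 0 1 = B 0 1) (h02 : A 0 2 = B 0 2) (h10 : A 1 0 = B 1 0)
   (h12 : A 1 2 = B 1 2) (h20 : A 2 0 = B 2 0) (h21 : A 2 1 = B 2 1)
   (h00 : A 0 0 = B 0 0) (h11 : A 1 1 = B 1 1) (h22 : A 2 2 = B 2 2) : A = B := by
  ext i j
  fin_cases i <;> fin_cases j <;> assumption

lemma inj00 (A B : M3 F) (h : f00 A = f00 B) (hp : A 0 0 = B 0 0) : A = B :=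
  ext9 A B (congrFun h 0) (congrFun h 1) (congrFun h 2) (congrFun h 3) (congrFun h 4) (congrFun h 5)
    hp (congrFun h 6) (congrFun h 7)
lemma inj11 (A B : M3 F) (h : f11 A = f11 B) (hp : A 1 1 = B 1 1) : A = B :=
  ext9 A B (congrFun h 0) (congrFun h 1) (congrFun h 2) (congrFun h 3) (congrFun h 4) (congrFun h 5)
    (congrFun h 6) hp (congrFun h 7)
lemma inj22 (A B : M3 F) (h : f22 A = f22 B) (hp : A 2 2 = B 2 2) : A = B :=
  ext9 A B (congrFun h 0) (congrFun h 1) (congrFun h 2) (congrFun h 3) (congrFun h 4) (congrFun h 5)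
    (congrFun h 6) (congrFun h 7) hp

/-- `A 2 2 = 0` -/
lemma card_a : (Finset.univ.filter fun A : M3 F => A 2 2 = 0).card ≤ 2 * Fintype.card F ^ 8 := by
  refine card_quad _ 8 f22 (fun A => A 2 2) (fun _ => 0) (fun _ => 1) (fun _ => 0)
    (fun A _ B _ h h' => inj22 A B h h') ?_
  intro A hA
  rw [Finset.mem_filter] at hA
  simp [hA.2]

lemma card_b : (Finset.univ.filter fun A : M3 F => A 2 2 ≠ 0 ∧
    A 1 1 * A 2 2 - A 1 2 * A 2 1 = 0).card ≤ 2 * Fintype.card F ^ 8 := by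
  refine card_quad _ 8 f11 (fun A => A 1 1) (fun _ => 0) (fun b => b 7) (fun b => - b 3 * b 5)
    (fun A _ B _ h h' => inj11 A B h h') ?_
  intro A hA
  rw [Finset.mem_filter] at hA
  refine ⟨Or.inr hA.2.1, ?_⟩
  show 0 * A 1 1 ^ 2 + A 2 2 * A 1 1 + - A 1 2 * A 2 1 = 0
  linear_combination hA.2.2

lemma card_c : (Finset.univ.filter fun A : M3 F => A 1 1 * A 2 2 - A 1 2 * A 2 1 ≠ 0 ∧
    A.det = 0).card ≤ 2 * Fintype.card F ^ 8 := by
  refine card_quad _ 8 f00 (fun A => A 0 0) (fun _ => 0) (fun b => b 6 * b 7 - b 3 * b 5)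
    (fun b => - b 0 * (b 2 * b 7 - b 3 * b 4) + b 1 * (b 2 * b 5 - b 6 * b 4))
    (fun A _ B _ h h' => inj00 A B h h') ?_
  intro A hA
  rw [Finset.mem_filter] at hA
  refine ⟨Or.inr hA.2.1, ?_⟩
  show 0 * A 0 0 ^ 2 + (A 1 1 * A 2 2 - A 1 2 * A 2 1) * A 0 0 +
    (- A 0 1 * (A 1 0 * A 2 2 - A 1 2 * A 2 0) + A 0 2 * (A 1 0 * A 2 1 - A 1 1 * A 2 0)) = 0
  have := hA.2.2
  rw [Matrix.det_fin_three] at this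
  linear_combination this

lemma card_d : (Finset.univ.filter fun A : M3 F => A 1 1 + A 2 2 = 0).card
    ≤ 2 * Fintype.card F ^ 8 := by
  refine card_quad _ 8 f11 (fun A => A 1 1) (fun _ => 0) (fun b => 1) (fun b => b 7)
    (fun A _ B _ h h' => inj11 A B h h') ?_
  intro A hA
  rw [Finset.mem_filter] at hA
  refine ⟨Or.inr one_ne_zero, ?_⟩
  show 0 * A 1 1 ^ 2 + 1 * A 1 1 + A 2 2 = 0
  linear_combination hA.2

lemma card_e : (Finset.univ.filter fun A : M3 F => A 1 1 + A 2 2 ≠ 0 ∧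
    A.trace * bb A - A.det = 0).card ≤ 2 * Fintype.card F ^ 8 := by
  refine card_quad _ 8 f00 (fun A => A 0 0) (fun b => b 6 + b 7)
    (fun b => (b 6 + b 7) ^ 2 - b 0 * b 2 - b 1 * b 4)
    (fun b => (b 6 + b 7) * (b 6 * b 7 - b 3 * b 5 - b 0 * b 2 - b 1 * b 4)
      + b 0 * (b 2 * b 7 - b 3 * b 4) - b 1 * (b 2 * b 5 - b 6 * b 4))
    (fun A _ B _ h h' => inj00 A B h h') ?_
  intro A hA
  rw [Finset.mem_filter] at hA
  refine ⟨Or.inl hA.2.1, ?_⟩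
  show (A 1 1 + A 2 2) * A 0 0 ^ 2 + ((A 1 1 + A 2 2) ^ 2 - A 0 1 * A 1 0 - A 0 2 * A 2 0) * A 0 0 +
    ((A 1 1 + A 2 2) * (A 1 1 * A 2 2 - A 1 2 * A 2 1 - A 0 1 * A 1 0 - A 0 2 * A 2 0)
      + A 0 1 * (A 1 0 * A 2 2 - A 1 2 * A 2 0) - A 0 2 * (A 1 0 * A 2 1 - A 1 1 * A 2 0)) = 0
  have := hA.2.2
  rw [Matrix.det_fin_three, bb, Matrix.trace_fin_three] at this
  linear_combination this

def S2 (F : Type) [Field F] [Fintype F] [DecidableEq F] : Finset (M3 F) :=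
  Finset.univ.filter fun A : M3 F => A.det * (A.trace * bb A - A.det) = 0

lemma card_S2 : (S2 F).card ≤ 10 * Fintype.card F ^ 8 := by
  have : S2 F ⊆ (Finset.univ.filter fun A : M3 F => A 2 2 = 0) ∪
    (Finset.univ.filter fun A : M3 F => A 2 2 ≠ 0 ∧ A 1 1 * A 2 2 - A 1 2 * A 2 1 = 0) ∪
    (Finset.univ.filter fun A : M3 F => A 1 1 * A 2 2 - A 1 2 * A 2 1 ≠ 0 ∧ A.det = 0) ∪
    (Finset.univ.filter fun A : M3 F => A 1 1 + A 2 2 = 0) ∪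
    (Finset.univ.filter fun A : M3 F => A 1 1 + A 2 2 ≠ 0 ∧ A.trace * bb A - A.det = 0) := by
    intro A hA
    simp only [S2, Finset.mem_filter, Finset.mem_univ, true_and, mul_eq_zero] at hA
    simp only [Finset.mem_union, Finset.mem_filter, Finset.mem_univ, true_and]
    tauto
  refine (Finset.card_le_card this).trans ?_
  refine (Finset.card_union_le _ _).trans ?_
  have h1 := card_a (F := F)
  have h2 := card_b (F := F)
  have h3 := card_c (F := F)
  have h4 := card_d (F := F)
  have h5 := card_e (F := F)
  have l1 := Finset.card_union_le ((Finset.univ.filter fun A : M3 F => A 2 2 = 0) ∪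
    (Finset.univ.filter fun A : M3 F => A 2 2 ≠ 0 ∧ A 1 1 * A 2 2 - A 1 2 * A 2 1 = 0) ∪
    (Finset.univ.filter fun A : M3 F => A 1 1 * A 2 2 - A 1 2 * A 2 1 ≠ 0 ∧ A.det = 0))
    (Finset.univ.filter fun A : M3 F => A 1 1 + A 2 2 = 0)
  have l2 := Finset.card_union_le ((Finset.univ.filter fun A : M3 F => A 2 2 = 0) ∪
    (Finset.univ.filter fun A : M3 F => A 2 2 ≠ 0 ∧ A 1 1 * A 2 2 - A 1 2 * A 2 1 = 0))
    (Finset.univ.filter fun A : M3 F => A 1 1 * A 2 2 - A 1 2 * A 2 1 ≠ 0 ∧ A.det = 0)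
  have l3 := Finset.card_union_le (Finset.univ.filter fun A : M3 F => A 2 2 = 0)
    (Finset.univ.filter fun A : M3 F => A 2 2 ≠ 0 ∧ A 1 1 * A 2 2 - A 1 2 * A 2 1 = 0)
  omega

def S3 (F : Type) [Field F] [Fintype F] [DecidableEq F] : Finset (M3 F) :=
  Finset.univ.filter fun A : M3 F => A.trace = 0 ∧ A.det = 0

lemma card_f : (Finset.univ.filter fun A : M3 F => A 1 1 = 0 ∧ A.trace = 0).card
    ≤ 2 * Fintype.card F ^ 7 := by
  refine card_quad _ 7 f7a (fun A => A 1 1) (fun _ => 0) (fun b => 1) (fun b => 0) ?_ ?_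
  · intro A hA B hB h hp
    rw [Finset.mem_filter] at hA hB
    have tA := hA.2.2
    have tB := hB.2.2
    rw [Matrix.trace_fin_three] at tA tB
    have h6 : A 0 0 = B 0 0 := congrFun h 6
    refine ext9 A B (congrFun h 0) (congrFun h 1) (congrFun h 2) (congrFun h 3) (congrFun h 4)
      (congrFun h 5) h6 hp ?_
    linear_combination tA - tB - h6 - hp
  · intro A hA
    rw [Finset.mem_filter] at hA
    simp [hA.2.1]

lemma card_g : (Finset.univ.filter fun A : M3 F => A 1 1 ≠ 0 ∧ A.trace = 0 ∧ A.det = 0).card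
    ≤ 2 * Fintype.card F ^ 7 := by
  refine card_quad _ 7 f7b (fun A => A 0 0) (fun b => - b 6)
    (fun b => - b 6 ^ 2 - b 3 * b 5 + b 0 * b 2)
    (fun b => b 0 * b 2 * b 6 + b 0 * b 3 * b 4 + b 1 * (b 2 * b 5 - b 6 * b 4)) ?_ ?_
  · intro A hA B hB h hp
    rw [Finset.mem_filter] at hA hB
    have tA := hA.2.2.1
    have tB := hB.2.2.1
    rw [Matrix.trace_fin_three] at tA tB
    have h6 : A 1 1 = B 1 1 := congrFun h 6
    refine ext9 A B (congrFun h 0) (congrFun h 1) (congrFun h 2) (congrFun h 3) (congrFun h 4)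
      (congrFun h 5) hp h6 ?_
    linear_combination tA - tB - h6 - hp
  · intro A hA
    rw [Finset.mem_filter] at hA
    refine ⟨Or.inl (neg_ne_zero.2 hA.2.1), ?_⟩
    show (- A 1 1) * A 0 0 ^ 2 + (- A 1 1 ^ 2 - A 1 2 * A 2 1 + A 0 1 * A 1 0) * A 0 0 +
      (A 0 1 * A 1 0 * A 1 1 + A 0 1 * A 1 2 * A 2 0 + A 0 2 * (A 1 0 * A 2 1 - A 1 1 * A 2 0)) = 0
    have t := hA.2.2.1
    have d := hA.2.2.2
    rw [Matrix.trace_fin_three] at t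
    rw [Matrix.det_fin_three] at d
    linear_combination d - (A 0 0 * A 1 1 - A 0 1 * A 1 0) * t

lemma card_S3 : (S3 F).card ≤ 4 * Fintype.card F ^ 7 := by
  have : S3 F ⊆ (Finset.univ.filter fun A : M3 F => A 1 1 = 0 ∧ A.trace = 0) ∪
    (Finset.univ.filter fun A : M3 F => A 1 1 ≠ 0 ∧ A.trace = 0 ∧ A.det = 0) := by
    intro A hA
    simp only [S3, Finset.mem_filter, Finset.mem_univ, true_and] at hA
    simp only [Finset.mem_union, Finset.mem_filter, Finset.mem_univ, true_and]
    tauto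
  refine (Finset.card_le_card this).trans ?_
  refine (Finset.card_union_le _ _).trans ?_
  have h1 := card_f (F := F)
  have h2 := card_g (F := F)
  omega

def S4 (F : Type) [Field F] [Fintype F] [DecidableEq F] : Finset (M3 F) :=
  Finset.univ.image fun x : F × (Fin 3 → F) × (Fin 3 → F) =>
    x.1 • (1 : M3 F) + Matrix.vecMulVec x.2.1 x.2.2

lemma card_S4 : (S4 F).card ≤ Fintype.card F ^ 7 := by
  refine Finset.card_image_le.trans (le_of_eq ?_)
  simp
  ring

def bld (k : Fin 3) (c a b : F) : Fin 3 → F := fun i => if i = k then c else if i = k + 1 then a else b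

lemma bld_eq (w : Fin 3 → F) (k : Fin 3) : bld k (w k) (w (k+1)) (w (k+2)) = w := by
  refine funext (all3 k ?_ ?_ ?_)
  · simp [bld]
  · simp [bld]
  · fin_cases k <;> rfl

def S5 (F : Type) [Field F] [Fintype F] [DecidableEq F] : Finset (M3 F) :=
  Finset.univ.image fun x : Bool × Fin 3 × F × F × (Fin 3 → F) =>
    let u := bld x.2.1 1 x.2.2.1 x.2.2.2.1
    (if x.1 then 0 else - (x.2.2.2.2 ⬝ᵥ u) / 2) • (1 : M3 F) + Matrix.vecMulVec u x.2.2.2.2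

lemma card_S5 : (S5 F).card ≤ 6 * Fintype.card F ^ 5 := by
  refine Finset.card_image_le.trans (le_of_eq ?_)
  simp
  ring

lemma norm_uv (u v : Fin 3 → F) (hu : u ≠ 0) : ∃ (k : Fin 3) (a b : F) (w : Fin 3 → F),
    Matrix.vecMulVec u v = Matrix.vecMulVec (bld k 1 a b) w ∧ v ⬝ᵥ u = w ⬝ᵥ bld k 1 a b := by
  obtain ⟨k, hk⟩ := Function.ne_iff.1 hu
  have hk : u k ≠ 0 := hk
  have e : bld k 1 (u (k+1) / u k) (u (k+2) / u k) = (u k)⁻¹ • u := by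
    rw [← bld_eq ((u k)⁻¹ • u) k]
    congr 1 <;> simp [hk, div_eq_inv_mul]
  refine ⟨k, u (k+1) / u k, u (k+2) / u k, u k • v, ?_, ?_⟩
  · rw [e]
    ext i j
    simp [Matrix.vecMulVec]
    field_simp
  · rw [e]
    simp [hk]

lemma mem_S5 (h2 : (2 : F) ≠ 0) (g : F) (u v : Fin 3 → F) (hu : u ≠ 0) (hg : g = 0 ∨ 2 * g + v ⬝ᵥ u = 0) :
    g • (1 : M3 F) + Matrix.vecMulVec u v ∈ S5 F := by
  obtain ⟨k, a, b, w, e1, e2⟩ := norm_uv u v hu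
  rw [e1]
  rw [e2] at hg
  unfold S5
  rw [Finset.mem_image]
  rcases hg with rfl | hg
  · exact ⟨(true, k, a, b, w), Finset.mem_univ _, by simp⟩
  · refine ⟨(false, k, a, b, w), Finset.mem_univ _, ?_⟩
    have : g = - (w ⬝ᵥ bld k 1 a b) / 2 := by
      field_simp
      linear_combination hg
    simp [this]

def S6 (F : Type) [Field F] [Fintype F] [DecidableEq F] : Finset (M3 F) :=
  Finset.univ.image fun x : Fin 3 × F × F × F × F =>
    Matrix.vecMulVec (bld x.1 1 x.2.1 x.2.2.1)
      (bld x.1 (-(x.2.1 * x.2.2.2.1 + x.2.2.1 * x.2.2.2.2)) x.2.2.2.1 x.2.2.2.2)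

lemma card_S6 : (S6 F).card ≤ 3 * Fintype.card F ^ 4 := by
  refine Finset.card_image_le.trans (le_of_eq ?_)
  simp
  ring

lemma mem_S6 (u v : Fin 3 → F) (hu : u ≠ 0) (h : v ⬝ᵥ u = 0) : Matrix.vecMulVec u v ∈ S6 F := by
  obtain ⟨k, a, b, w, e1, e2⟩ := norm_uv u v hu
  rw [e1]
  rw [e2] at h
  unfold S6
  rw [Finset.mem_image]
  refine ⟨(k, a, b, w (k+1), w (k+2)), Finset.mem_univ _, ?_⟩
  have hk : w k = -(a * w (k+1) + b * w (k+2)) := by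
    rw [dotProduct, sum3 _ k] at h
    have b0 : bld k 1 a b k = 1 := by simp [bld]
    have b1 : bld k 1 a b (k+1) = a := by simp [bld]
    have b2 : bld k 1 a b (k+2) = b := by fin_cases k <;> rfl
    rw [b0, b1, b2] at h
    linear_combination h
  simp only
  rw [← hk, bld_eq]

lemma classify (h2 : (2 : F) ≠ 0) (A : M3 F) (hA : A ≠ 0) :
    (R A ≤ Fintype.card F ^ 0 ∧ A ∈ (Finset.univ : Finset (M3 F))) ∨
    (R A ≤ Fintype.card F ^ 2 ∧ A ∈ S2 F) ∨
    (R A ≤ Fintype.card F ^ 3 ∧ A ∈ S3 F) ∨ (R A ≤ Fintype.card F ^ 3 ∧ A ∈ S4 F) ∨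
    (R A ≤ Fintype.card F ^ 4 ∧ A ∈ S5 F) ∨ (R A ≤ Fintype.card F ^ 5 ∧ A ∈ S6 F) := by
  by_cases hc : ∀ v, (kry A v).det = 0
  · obtain ⟨g, u, v, e⟩ := dichotomy h2 A hc
    have hv0 : ∀ u : Fin 3 → F, Matrix.vecMulVec u (0 : Fin 3 → F) = 0 := by
      intro u; ext i j; simp [Matrix.vecMulVec]
    have hu0 : ∀ v : Fin 3 → F, Matrix.vecMulVec (0 : Fin 3 → F) v = 0 := by
      intro u; ext i j; simp [Matrix.vecMulVec]
    have h4 : A ∈ S4 F := by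
      rw [e]; exact Finset.mem_image.2 ⟨(g, u, v), Finset.mem_univ _, rfl⟩
    by_cases hg : g = 0
    · subst hg
      have e' : A = Matrix.vecMulVec u v := by simpa using e
      have hu : u ≠ 0 := by rintro rfl; exact hA (by rw [e', hu0])
      have hv : v ≠ 0 := by rintro rfl; exact hA (by rw [e', hv0])
      by_cases ht : v ⬝ᵥ u = 0
      · right; right; right; right; right
        rw [e']
        exact ⟨rank_nil u v hu hv, mem_S6 u v hu ht⟩
      · right; right; right; right; left
        refine ⟨?_, ?_⟩
        · rw [e']; exact rank_one u v h2 hu hv ht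
        · rw [e]; exact mem_S5 h2 0 u v hu (Or.inl rfl)
    · by_cases ht : 2 * g + v ⬝ᵥ u = 0
      · right; right; right; right; left
        have hu : u ≠ 0 := by
          rintro rfl
          simp [h2, hg] at ht
        rw [e]
        exact ⟨rank_special g u v h2 hg ht, mem_S5 h2 g u v hu (Or.inr ht)⟩
      · right; right; right; left
        refine ⟨?_, h4⟩
        rw [e]; exact rank_generic g u v h2 hg ht
  · push Not at hc
    obtain ⟨v, hv⟩ := hc
    rcases cyclic_case h2 A v hv with h | ⟨h, h'⟩ | ⟨h, h', h''⟩
    · left; exact ⟨by simpa using h, Finset.mem_univ _⟩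
    · right; left; exact ⟨h, by simp only [S2, Finset.mem_filter, Finset.mem_univ, true_and]; exact h'⟩
    · right; right; left; exact ⟨h, by simp [S3, h', h'']⟩

lemma G_le (ψ : AddChar F ℂ) (hψ : ψ ≠ 1) (A : M3 F) (k : ℕ) (h : R A ≤ Fintype.card F ^ k) (r : ℕ) :
    ‖G ψ A‖ ^ r ≤ √(Fintype.card F : ℝ) ^ ((9 + k) * r) := by
  rw [pow_mul]
  refine pow_le_pow_left₀ (norm_nonneg _) ?_ r
  have h0 := G_sq ψ hψ A
  have hs2 : √(Fintype.card F : ℝ) ^ 2 = (Fintype.card F : ℝ) := Real.sq_sqrt (by positivity)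
  have h1 : (R A : ℝ) ≤ (Fintype.card F : ℝ) ^ k := by exact_mod_cast h
  refine (sq_le_sq₀ (norm_nonneg _) (by positivity)).1 ?_
  calc ‖G ψ A‖ ^ 2 ≤ (Fintype.card F : ℝ) ^ 9 * R A := h0
    _ ≤ (Fintype.card F : ℝ) ^ 9 * (Fintype.card F : ℝ) ^ k := by gcongr
    _ = (√(Fintype.card F : ℝ) ^ (9 + k)) ^ 2 := by
      rw [← pow_mul, mul_comm (9 + k) 2, pow_mul, hs2, pow_add]

lemma class_sum (S : Finset (M3 F)) (C m k r : ℕ) (hS : S.card ≤ C * Fintype.card F ^ m)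
    (hm : (9 + k) * r + 2 * m ≤ 14 * r + 8) :
    ∑ A : M3 F, (if A ∈ S then √(Fintype.card F : ℝ) ^ ((9 + k) * r) else 0) ≤
      C * √(Fintype.card F : ℝ) ^ (14 * r + 8) := by
  rw [Finset.sum_ite_mem, Finset.univ_inter, Finset.sum_const, nsmul_eq_mul]
  set s := √(Fintype.card F : ℝ) with hs
  have hs2 : s ^ 2 = (Fintype.card F : ℝ) := Real.sq_sqrt (by positivity)
  have hs1 : 1 ≤ s := by
    rw [hs, Real.one_le_sqrt]
    exact_mod_cast Fintype.card_pos
  have h1 : (S.card : ℝ) ≤ C * s ^ (2 * m) := by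
    rw [pow_mul, hs2]; exact_mod_cast hS
  calc (S.card : ℝ) * s ^ ((9 + k) * r) ≤ C * s ^ (2 * m) * s ^ ((9 + k) * r) := by gcongr
    _ = C * s ^ ((9 + k) * r + 2 * m) := by ring
    _ ≤ C * s ^ (14 * r + 8) := by gcongr

lemma total (h2 : (2 : F) ≠ 0) (ψ : AddChar F ℂ) (hψ : ψ ≠ 1) (r : ℕ) (hr : 3 ≤ r) :
    ∑ A ∈ Finset.univ.erase (0 : M3 F), ‖G ψ A‖ ^ r ≤ 25 * √(Fintype.card F : ℝ) ^ (14 * r + 8) := by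
  set s := √(Fintype.card F : ℝ) with hs
  have hs0 : 0 ≤ s := Real.sqrt_nonneg _
  let t (S : Finset (M3 F)) (k : ℕ) (A : M3 F) : ℝ := if A ∈ S then s ^ ((9 + k) * r) else 0
  have t0 : ∀ S k A, 0 ≤ t S k A := by
    intro S k A; simp only [t]; split_ifs <;> positivity
  have ht : ∀ S k A, R A ≤ Fintype.card F ^ k ∧ A ∈ S → ‖G ψ A‖ ^ r ≤ t S k A := by
    intro S k A h
    simp only [t, h.2, if_true]
    exact G_le ψ hψ A k h.1 r
  have hpt : ∀ A ∈ Finset.univ.erase (0 : M3 F), ‖G ψ A‖ ^ r ≤ t Finset.univ 0 A + t (S2 F) 2 A +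
      t (S3 F) 3 A + t (S4 F) 3 A + t (S5 F) 4 A + t (S6 F) 5 A := by
    intro A hA
    have b1 := t0 Finset.univ 0 A
    have b2 := t0 (S2 F) 2 A
    have b3 := t0 (S3 F) 3 A
    have b4 := t0 (S4 F) 3 A
    have b5 := t0 (S5 F) 4 A
    have b6 := t0 (S6 F) 5 A
    rcases classify h2 A (Finset.ne_of_mem_erase hA) with h | h | h | h | h | h <;>
      · have := ht _ _ A h
        linarith
  have c1 := class_sum (Finset.univ : Finset (M3 F)) 1 9 0 r
    (by rw [Finset.card_univ, card_M3, one_mul]) (by omega)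
  have c2 := class_sum (S2 F) 10 8 2 r card_S2 (by omega)
  have c3 := class_sum (S3 F) 4 7 3 r card_S3 (by omega)
  have c4 := class_sum (S4 F) 1 7 3 r (by rw [one_mul]; exact card_S4) (by omega)
  have c5 := class_sum (S5 F) 6 5 4 r card_S5 (by omega)
  have c6 := class_sum (S6 F) 3 4 5 r card_S6 (by omega)
  refine (Finset.sum_le_sum hpt).trans ?_
  refine (Finset.sum_le_sum_of_subset_of_nonneg (Finset.erase_subset _ _) ?_).trans ?_
  · intro A _ _
    have b1 := t0 Finset.univ 0 A
    have b2 := t0 (S2 F) 2 A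
    have b3 := t0 (S3 F) 3 A
    have b4 := t0 (S4 F) 3 A
    have b5 := t0 (S5 F) 4 A
    have b6 := t0 (S6 F) 5 A
    linarith
  · simp only [Finset.sum_add_distrib]
    push_cast at c1 c2 c3 c4 c5 c6
    simp only [t]
    linarith

end MS

/-- Proposition 4.2, size part: for `r ≥ 3`, `|#σ_T - q^{9(r-1)}| ≤ c q^{7r-5}`
uniformly over odd `q` and `T ∈ M_3(F_q)`. -/
theorem matSphere_card_rank_three (r : ℕ) (hr : 3 ≤ r) :
    ∃ c : ℝ, 0 < c ∧
      ∀ (F : Type) [Field F] [Fintype F] [DecidableEq F],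
        Odd (Fintype.card F) →
        ∀ T : Matrix (Fin 3) (Fin 3) F,
          |((matSphere F r T).card : ℝ) - (Fintype.card F : ℝ) ^ (9 * (r - 1))| ≤
            c * (Fintype.card F : ℝ) ^ (7 * r - 5) := by
  refine ⟨25, by norm_num, ?_⟩
  intro F _ _ _ hodd T
  obtain ⟨ψ, hψ⟩ := MS.exists_prim (F := F)
  have h2 : (2 : F) ≠ 0 := by
    refine Ring.two_ne_zero ?_
    intro hc
    have := FiniteField.even_card_of_char_two hc
    rw [Nat.odd_iff] at hodd
    omega
  have h1 := (MS.error ψ hψ r (by omega) T).trans (MS.total h2 ψ hψ r hr)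
  have hs2 : √(Fintype.card F : ℝ) ^ 2 = (Fintype.card F : ℝ) := Real.sq_sqrt (by positivity)
  have e : √(Fintype.card F : ℝ) ^ (14 * r + 8) =
      (Fintype.card F : ℝ) ^ 9 * (Fintype.card F : ℝ) ^ (7 * r - 5) := by
    rw [show 14 * r + 8 = 2 * (9 + (7 * r - 5)) by omega, pow_mul, hs2, pow_add]
  rw [e] at h1
  have hq : (0 : ℝ) < (Fintype.card F : ℝ) ^ 9 := by
    have : 0 < Fintype.card F := Fintype.card_pos
    positivity
  refine le_of_mul_le_mul_left (a := (Fintype.card F : ℝ) ^ 9) ?_ hq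
  calc _ ≤ _ := h1
    _ = _ := by ring
end
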